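/- arXiv:1901.10790 — 3 statements merged into one kernel-verified Lean document; each statement's English description precedes it below -/
import Mathlib

section
/- Let 0 < λ ≤ 1, 0 < α ≤ 1, and σ₀ ∈ ℝ. There exists a constant C = C(λ,α,σ₀) > 0 such that for every s = σ + it with σ ≥ σ₀, t ≥ 2, and L(λ,α,s) ≠ 0, if d denotes the distance from s to the nearest zero of L(λ,α,·) (the infimum of |s − ρ| over all zeros ρ), then 1/|L(λ,α,s)| < exp(C·(|log d| + 1)·log t). -/
/-- The Dirichlet series of the Lerch zeta-function, convergent for `1 < re s`. -/
noncomputable def lerchSeries (lam alp : ℝ) (s : ℂ) : ℂ :=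
  ∑' m : ℕ, Complex.exp (2 * Real.pi * Complex.I * lam * m) / ((m : ℂ) + alp) ^ s

/-- `F` is the analytic continuation of the Lerch zeta-function with parameters `lam`, `alp`:
it is complex differentiable away from `1` and agrees with the Dirichlet series on `1 < re s`. -/
def IsLerch (lam alp : ℝ) (F : ℂ → ℂ) : Prop :=
  (∀ s : ℂ, s ≠ 1 → DifferentiableAt ℂ F s) ∧
  ∀ s : ℂ, 1 < s.re → F s = lerchSeries lam alp s

open scoped Classical

/-- The multiplicity (order of vanishing) of `F` at `z` (junk value `0` if `F` is not
analytic at `z` or vanishes to infinite order). -/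
noncomputable def zeroOrder (F : ℂ → ℂ) (z : ℂ) : ℕ :=
  if h : AnalyticAt ℂ F z then (analyticOrderAt F z).toNat else 0

open Metric Set

/-- binomial-type coefficients -/
noncomputable def cc : ℕ → ℂ → ℂ
  | 0, _ => 1
  | (j+1), s => -s / (j+1) * cc j (s+1)

noncomputable def Rem (K : ℕ) (s : ℂ) (x : ℝ) (y : ℂ) : ℂ :=
  ((x:ℂ) + y)^(-s) - ∑ j ∈ Finset.range K, cc j s * y^j * (x:ℂ)^(-s-j)

lemma cc_diff (j : ℕ) : Differentiable ℂ (cc j) := by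
  induction j with
  | zero => exact differentiable_const _
  | succ j ih =>
    have : cc (j+1) = fun s => -s / (j+1) * cc j (s+1) := rfl
    rw [this]
    exact (by fun_prop : Differentiable ℂ fun s : ℂ => -s / ((j:ℂ)+1)).mul
      (ih.comp (by fun_prop))

lemma cc_bound (j : ℕ) : ∀ s : ℂ, ‖cc j s‖ ≤ (‖s‖ + j)^j := by
  induction j with
  | zero => intro s; simp [cc]
  | succ j ih =>
    intro s
    have h1 : ‖s + 1‖ ≤ ‖s‖ + 1 := (norm_add_le _ _).trans (by simp)
    have h2 : ‖-s / ((j:ℂ)+1)‖ ≤ ‖s‖ := by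
      have : ‖((j:ℂ)+1)‖ = (j:ℝ)+1 := by
        have := Complex.norm_natCast (j+1); push_cast at this; exact this
      rw [norm_div, norm_neg, this]
      exact div_le_self (norm_nonneg _) (by linarith [(Nat.cast_nonneg j : (0:ℝ) ≤ j)])
    calc ‖cc (j+1) s‖ = ‖-s / ((j:ℂ)+1)‖ * ‖cc j (s+1)‖ := by rw [cc, norm_mul]
      _ ≤ (‖s‖ + (j+1)) * (‖s+1‖ + j)^j := by
        gcongr
        · linarith [(Nat.cast_nonneg j : (0:ℝ) ≤ j)]
        · exact ih _
      _ ≤ (‖s‖ + (j+1)) * (‖s‖ + (j+1))^j := by gcongr ?_ * ?_^j; linarith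
      _ = _ := by push_cast; ring

lemma Rem_deriv (K : ℕ) (s : ℂ) (x : ℝ) (y : ℝ) (hx : 0 < x) (hy : 0 ≤ y) :
    HasDerivAt (fun y : ℝ => Rem (K+1) s x y) (-s * Rem K (s+1) x y) y := by
  have h1 : HasDerivAt (fun w : ℂ => ((x:ℂ) + w)^(-s)) (-s * ((x:ℂ)+y)^(-s-1)) (y:ℂ) := by
    have hsl : (x:ℂ) + y ∈ Complex.slitPlane := by
      left; simp; linarith
    have := ((hasDerivAt_id (y:ℂ)).const_add (x:ℂ)).cpow_const (c := -s) hsl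
    simpa using this
  have h2 : HasDerivAt (fun w : ℂ => ∑ j ∈ Finset.range (K+1), cc j s * w^j * (x:ℂ)^(-s-j))
      (∑ j ∈ Finset.range (K+1), cc j s * (j * (y:ℂ)^(j-1)) * (x:ℂ)^(-s-j)) (y:ℂ) := by
    apply HasDerivAt.fun_sum
    intro j _
    exact ((hasDerivAt_pow j (y:ℂ)).const_mul _).mul_const _
  have h3 := (h1.sub h2).comp_ofReal
  refine h3.congr_deriv ?_
  rw [Finset.sum_range_succ', Rem, mul_sub, Finset.mul_sum]
  simp only [Nat.cast_zero, zero_mul, mul_zero, add_zero]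
  congr 1
  · ring_nf
  · apply Finset.sum_congr rfl
    intro j _
    have hj : ((j:ℂ)+1) ≠ 0 := by exact_mod_cast Nat.succ_ne_zero j
    have e : -s - ((j+1:ℕ):ℂ) = -(s+1) - j := by push_cast; ring
    rw [e, cc]
    push_cast
    field_simp

lemma Rem_zero (K : ℕ) (s : ℂ) (x : ℝ) : Rem (K+1) s x 0 = 0 := by
  rw [Rem, Finset.sum_range_succ']
  simp [cc]

lemma Rem_bound (K : ℕ) : ∀ (s : ℂ) (x y : ℝ), 0 < x → 0 ≤ y → y ≤ 1 → 0 ≤ s.re + K →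
    ‖Rem K s x y‖ ≤ (‖s‖ + K)^K * x^(-(s.re + K)) := by
  induction K with
  | zero =>
    intro s x y hx hy hy1 hs
    have : Rem 0 s x y = ((x + y : ℝ) : ℂ)^(-s) := by simp [Rem]
    rw [this, Complex.norm_cpow_eq_rpow_re_of_pos (by linarith)]
    simp at hs ⊢
    exact Real.rpow_le_rpow_of_nonpos hx (by linarith) (by linarith)
  | succ K ih =>
    intro s x y hx hy hy1 hs
    push_cast at hs
    have hb : ∀ w ∈ Icc (0:ℝ) 1, ‖-s * Rem K (s+1) x w‖ ≤
        (‖s‖ + (K+1))^(K+1) * x^(-(s.re + (K+1))) := by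
      intro w hw
      have := ih (s+1) x w hx hw.1 hw.2 (by simp; linarith)
      have h1 : ‖s + 1‖ ≤ ‖s‖ + 1 := (norm_add_le _ _).trans (by simp)
      rw [norm_mul, norm_neg, pow_succ']
      calc ‖s‖ * ‖Rem K (s+1) x w‖ ≤ ‖s‖ * ((‖s+1‖ + K)^K * x^(-((s+1).re + K))) := by gcongr
        _ ≤ (‖s‖ + (K+1)) * ((‖s‖ + (K+1))^K * x^(-((s+1).re + K))) := by
          gcongr ?_ * (?_^K * _)
          · linarith [(Nat.cast_nonneg K : (0:ℝ) ≤ K)]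
          · linarith
        _ = _ := by
          rw [mul_assoc]; congr 4; simp; ring
    have := (convex_Icc (0:ℝ) 1).norm_image_sub_le_of_norm_hasDerivWithin_le
      (f := fun y : ℝ => Rem (K+1) s x y)
      (fun w hw => (Rem_deriv K s x w hx hw.1).hasDerivWithinAt) hb
      (left_mem_Icc.2 zero_le_one) ⟨hy, hy1⟩
    simp only [Complex.ofReal_zero, Rem_zero, sub_zero] at this
    push_cast
    refine this.trans ?_
    rw [Real.norm_of_nonneg hy]
    apply mul_le_of_le_one_right _ hy1
    positivity

lemma term_bound {alp B τ : ℝ} (h0 : 0 < alp) (h1 : alp ≤ 1) (hτ : 2 ≤ τ) (hB : τ ≤ B) (m : ℕ) :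
    ((m:ℝ) + alp)^(-τ) ≤ alp^(-B) * ((m:ℝ)+alp)^(-2:ℝ) := by
  have hp : 0 < (m:ℝ) + alp := by positivity
  have e : ((m:ℝ) + alp)^(-τ) = ((m:ℝ) + alp)^(-(τ-2)) * ((m:ℝ) + alp)^(-2:ℝ) := by
    rw [← Real.rpow_add hp]; ring_nf
  rw [e]
  gcongr
  calc ((m:ℝ) + alp)^(-(τ-2)) ≤ alp^(-(τ-2)) :=
        Real.rpow_le_rpow_of_nonpos h0 (by linarith [(Nat.cast_nonneg m : (0:ℝ) ≤ m)]) (by linarith)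
    _ ≤ _ := Real.rpow_le_rpow_of_exponent_ge h0 h1 (by linarith)

lemma sq_summable {alp : ℝ} (h0 : 0 < alp) : Summable fun m : ℕ => ((m:ℝ)+alp)^(-2:ℝ) := by
  have := (Real.summable_one_div_nat_add_rpow alp 2).2 (by norm_num)
  refine this.congr fun m => ?_
  have hp : 0 < (m:ℝ) + alp := by positivity
  rw [abs_of_pos hp, Real.rpow_neg hp.le, one_div]

noncomputable def ee (lam : ℝ) (m : ℕ) : ℂ := Complex.exp (2 * Real.pi * Complex.I * lam * m)

lemma ee_norm (lam : ℝ) (m : ℕ) : ‖ee lam m‖ = 1 := by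
  rw [ee, Complex.norm_exp]; simp

lemma ee_succ (lam : ℝ) (m : ℕ) : ee lam (m+1) = ee lam 1 * ee lam m := by
  rw [ee, ee, ee, ← Complex.exp_add]; push_cast; ring_nf

lemma ee_zero (lam : ℝ) : ee lam 0 = 1 := by simp [ee]

lemma lerch_hasSum {lam alp : ℝ} {F : ℂ → ℂ} (h0 : 0 < alp) (h1 : alp ≤ 1)
    (hF : IsLerch lam alp F) {s : ℂ} (hs : 2 ≤ s.re) :
    HasSum (fun m : ℕ => ee lam m * (((m:ℝ) + alp : ℝ):ℂ)^(-s)) (F s) := by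
  have hsum : Summable (fun m : ℕ => ee lam m * (((m:ℝ) + alp : ℝ):ℂ)^(-s)) := by
    refine Summable.of_norm_bounded ((sq_summable h0).mul_left (alp^(-s.re))) fun m => ?_
    rw [norm_mul, ee_norm, one_mul, Complex.norm_cpow_eq_rpow_re_of_pos (by positivity)]
    exact term_bound h0 h1 hs le_rfl m
  have : F s = ∑' m : ℕ, ee lam m * (((m:ℝ) + alp : ℝ):ℂ)^(-s) := by
    rw [hF.2 s (by linarith), lerchSeries]
    congr 1; ext m
    rw [ee, Complex.cpow_neg, div_eq_mul_inv]; push_cast; rfl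
  rw [this]; exact hsum.hasSum

noncomputable def TT (lam alp : ℝ) (K : ℕ) (s : ℂ) : ℂ :=
  ∑' m : ℕ, ee lam m * Rem K s ((m:ℝ)+alp) 1

lemma TT_term {lam alp : ℝ} (h0 : 0 < alp) (h1 : alp ≤ 1) (K : ℕ) {B : ℝ} {s : ℂ}
    (hs : 2 ≤ s.re + K) (hB : s.re + K ≤ B) (m : ℕ) :
    ‖ee lam m * Rem K s ((m:ℝ)+alp) 1‖ ≤ (‖s‖ + K)^K * alp^(-B) * ((m:ℝ)+alp)^(-2:ℝ) := by
  rw [norm_mul, ee_norm, one_mul, mul_assoc]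
  have := Rem_bound K s ((m:ℝ)+alp) 1 (by positivity) (by norm_num) le_rfl (by linarith)
  rw [Complex.ofReal_one] at this
  refine this.trans ?_
  gcongr
  exact term_bound h0 h1 hs hB m

lemma TT_bound {lam alp : ℝ} (h0 : 0 < alp) (h1 : alp ≤ 1) (K : ℕ) {B : ℝ} {s : ℂ}
    (hs : 2 ≤ s.re + K) (hB : s.re + K ≤ B) :
    ‖TT lam alp K s‖ ≤ (‖s‖ + K)^K * (alp^(-B) * ∑' m : ℕ, ((m:ℝ)+alp)^(-2:ℝ)) := by
  have := tsum_of_norm_bounded ((sq_summable h0).mul_left ((‖s‖ + K)^K * alp^(-B))).hasSum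
    (TT_term (lam := lam) h0 h1 K hs hB)
  rw [tsum_mul_left, mul_assoc] at this
  exact this

lemma Rem_diff (K : ℕ) {x : ℝ} (hx : 0 < x) : Differentiable ℂ fun s => Rem K s x 1 := by
  unfold Rem
  have a1 : (x:ℂ) + 1 ≠ 0 := by exact_mod_cast (by positivity : x + 1 ≠ 0)
  have a2 : (x:ℂ) ≠ 0 := by exact_mod_cast hx.ne'
  apply Differentiable.sub
  · intro s; exact (differentiableAt_id.neg).const_cpow (Or.inl a1)
  · apply Differentiable.fun_sum
    intro j _
    apply Differentiable.mul
    · exact (cc_diff j).mul_const _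
    · intro s; exact (differentiableAt_id.neg.sub_const _).const_cpow (Or.inl a2)

lemma TT_diff {lam alp : ℝ} (h0 : 0 < alp) (h1 : alp ≤ 1) (K : ℕ) {s : ℂ}
    (hs : 2 < s.re + K) : DifferentiableAt ℂ (TT lam alp K) s := by
  set B : ℝ := ‖s‖ + 1 with hB
  set U : Set ℂ := {w | 2 < w.re + K} ∩ ball 0 B
  have hU : IsOpen U := IsOpen.inter (isOpen_lt (by fun_prop) (by fun_prop)) isOpen_ball
  have := Complex.differentiableOn_tsum_of_summable_norm
    (F := fun (m:ℕ) (s:ℂ) => ee lam m * Rem K s ((m:ℝ)+alp) 1)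
    (U := U) ((sq_summable h0).mul_left ((B + K)^K * alp^(-(B + K))))
    (fun m => ((Rem_diff K (by positivity)).const_mul _).differentiableOn) hU
    (fun m w hw => by
      have hw2 : ‖w‖ < B := by simpa using hw.2
      refine (TT_term h0 h1 K (B := B + K) (le_of_lt hw.1) ?_ m).trans ?_
      · have := Complex.re_le_norm w; linarith
      · gcongr)
  refine (this s ⟨hs, by simp [hB]⟩).differentiableAt (hU.mem_nhds ⟨hs, by simp [hB]⟩)

lemma identity0 {lam alp : ℝ} {F : ℂ → ℂ} (h0 : 0 < alp) (h1 : alp ≤ 1)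
    (hF : IsLerch lam alp F) (K : ℕ) {s : ℂ} (hs : 2 ≤ s.re) :
    F s - (alp:ℂ)^(-s) =
      ee lam 1 * (∑ j ∈ Finset.range K, cc j s * F (s+j) + TT lam alp K s) := by
  have hS := lerch_hasSum h0 h1 hF hs
  have hS1 := (hasSum_nat_add_iff' 1).2 hS
  simp only [Finset.range_one, Finset.sum_singleton, ee_zero, Nat.cast_zero, zero_add, one_mul] at hS1
  have hj : HasSum (fun m : ℕ => ∑ j ∈ Finset.range K,
      cc j s * (ee lam m * (((m:ℝ) + alp : ℝ):ℂ)^(-(s+j)))) (∑ j ∈ Finset.range K, cc j s * F (s+j)) := by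
    apply hasSum_sum
    intro j _
    exact (lerch_hasSum h0 h1 hF (s := s + j) (by simp; linarith [(Nat.cast_nonneg j : (0:ℝ) ≤ j)])).mul_left _
  have hT : HasSum (fun m : ℕ => ee lam m * Rem K s ((m:ℝ)+alp) 1) (TT lam alp K s) := by
    have : Summable (fun m : ℕ => ee lam m * Rem K s ((m:ℝ)+alp) 1) :=
      Summable.of_norm_bounded ((sq_summable h0).mul_left _)
        (TT_term h0 h1 K (by linarith [(Nat.cast_nonneg K : (0:ℝ) ≤ K)]) le_rfl)
    exact this.hasSum
  have hR := (hj.add hT).mul_left (ee lam 1)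
  refine hS1.unique (hR.congr_fun ?_)
  intro m
  rw [ee_succ, Rem, mul_sub, Finset.mul_sum, mul_assoc]
  have e1 : ∑ j ∈ Finset.range K, cc j s * (ee lam m * (((m:ℝ) + alp : ℝ):ℂ)^(-(s+j))) =
     ∑ j ∈ Finset.range K, ee lam m * (cc j s * 1^j * (((m:ℝ) + alp : ℝ):ℂ)^(-s-j)) := by
    apply Finset.sum_congr rfl
    intro j _
    rw [one_pow, neg_add']; ring
  rw [e1]
  push_cast
  have e2 : (m:ℂ) + 1 + alp = m + alp + 1 := by ring
  rw [e2]; ring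

lemma identity1 {lam alp : ℝ} {F : ℂ → ℂ} (h0 : 0 < alp) (h1 : alp ≤ 1)
    (hF : IsLerch lam alp F) (K : ℕ) {s : ℂ} (hs : 2 < s.re + K) (him : 0 < s.im) :
    F s - (alp:ℂ)^(-s) =
      ee lam 1 * (∑ j ∈ Finset.range K, cc j s * F (s+j) + TT lam alp K s) := by
  set U : Set ℂ := {w | 2 < w.re + K} ∩ {w | 0 < w.im} with hUdef
  have hU : IsOpen U :=
    IsOpen.inter (isOpen_lt (by fun_prop) (by fun_prop)) (isOpen_lt (by fun_prop) (by fun_prop))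
  have hconv : Convex ℝ U := by
    have : {w : ℂ | 2 < w.re + K} = {w : ℂ | 2 - (K:ℝ) < w.re} := by
      ext w; simp only [mem_ofPred_eq]; constructor <;> intro h <;> linarith
    rw [hUdef, this]
    exact (convex_halfSpace_re_gt _).inter (convex_halfSpace_im_gt _)
  have hne : ∀ w : ℂ, 0 < w.im → w ≠ 1 := by rintro w hw rfl; simp at hw
  have a2 : (alp:ℂ) ≠ 0 := by exact_mod_cast h0.ne'
  have dl : DifferentiableOn ℂ (fun s => F s - (alp:ℂ)^(-s)) U := by
    intro w hw
    apply DifferentiableAt.differentiableWithinAt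
    exact (hF.1 w (hne w hw.2)).sub ((differentiableAt_id.neg).const_cpow (Or.inl a2))
  have dr : DifferentiableOn ℂ (fun s => ee lam 1 * (∑ j ∈ Finset.range K, cc j s * F (s+j) + TT lam alp K s)) U := by
    intro w hw
    apply DifferentiableAt.differentiableWithinAt
    apply DifferentiableAt.const_mul
    apply DifferentiableAt.add
    · apply DifferentiableAt.fun_sum
      intro j _
      apply (cc_diff j w).mul
      have := hF.1 (w + j) (hne _ (by simpa using hw.2))
      exact this.comp w (by fun_prop : DifferentiableAt ℂ (fun w : ℂ => w + j) w)
    · exact TT_diff h0 h1 K hw.1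
  have hz0 : (⟨3, 1⟩ : ℂ) ∈ U := ⟨by simp; linarith [(Nat.cast_nonneg K : (0:ℝ) ≤ K)], by simp⟩
  have := (dl.analyticOnNhd hU).eqOn_of_preconnected_of_eventuallyEq (dr.analyticOnNhd hU)
    hconv.isPreconnected hz0 (by
      have : {w : ℂ | 2 < w.re} ∈ nhds (⟨3,1⟩:ℂ) := (isOpen_lt (by fun_prop) (by fun_prop)).mem_nhds (by simp; norm_num)
      filter_upwards [this] with w hw
      exact identity0 h0 h1 hF K (le_of_lt hw))
  exact this ⟨hs, him⟩

def PG (G : ℂ → ℂ) (a b : ℝ) : Prop :=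
  ∃ (C : ℝ) (N : ℕ), 0 ≤ C ∧ ∀ s : ℂ, a ≤ s.re → s.re ≤ b → 1 ≤ s.im → ‖G s‖ ≤ C * s.im^N

lemma PG.add {G H : ℂ → ℂ} {a b : ℝ} (hG : PG G a b) (hH : PG H a b) :
    PG (fun s => G s + H s) a b := by
  obtain ⟨C, N, hC, h⟩ := hG
  obtain ⟨D, M, hD, h'⟩ := hH
  refine ⟨C + D, N + M, by positivity, fun s h1 h2 h3 => ?_⟩
  have e1 : s.im^N ≤ s.im^(N+M) := pow_le_pow_right₀ h3 (by omega)
  have e2 : s.im^M ≤ s.im^(N+M) := pow_le_pow_right₀ h3 (by omega)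
  calc _ ≤ ‖G s‖ + ‖H s‖ := norm_add_le _ _
    _ ≤ C * s.im^N + D * s.im^M := add_le_add (h s h1 h2 h3) (h' s h1 h2 h3)
    _ ≤ C * s.im^(N+M) + D * s.im^(N+M) := by gcongr
    _ = _ := by ring

lemma PG.mul {G H : ℂ → ℂ} {a b : ℝ} (hG : PG G a b) (hH : PG H a b) :
    PG (fun s => G s * H s) a b := by
  obtain ⟨C, N, hC, h⟩ := hG
  obtain ⟨D, M, hD, h'⟩ := hH
  refine ⟨C * D, N + M, by positivity, fun s h1 h2 h3 => ?_⟩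
  have hp : 0 ≤ s.im := by linarith
  rw [norm_mul]
  calc _ ≤ (C * s.im^N) * (D * s.im^M) :=
        mul_le_mul (h s h1 h2 h3) (h' s h1 h2 h3) (norm_nonneg _) (by positivity)
    _ = _ := by ring

lemma PG.const (c : ℂ) (a b : ℝ) : PG (fun _ => c) a b :=
  ⟨‖c‖, 0, norm_nonneg _, fun s _ _ _ => by simp⟩

lemma PG.sum {ι : Type*} (S : Finset ι) {G : ι → ℂ → ℂ} {a b : ℝ} (h : ∀ i, PG (G i) a b) :
    PG (fun s => ∑ i ∈ S, G i s) a b := by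
  classical
  induction S using Finset.induction_on with
  | empty => simpa using PG.const 0 a b
  | insert i S hi ih =>
    simp only [Finset.sum_insert hi]
    exact (h i).add ih

lemma PG.shift {G : ℂ → ℂ} {a b : ℝ} (j : ℝ) (h : PG G (a+j) (b+j)) :
    PG (fun s => G (s + j)) a b := by
  obtain ⟨C, N, hC, h⟩ := h
  refine ⟨C, N, hC, fun s h1 h2 h3 => ?_⟩
  have := h (s + j) (by simpa using h1) (by simpa using h2) (by simpa using h3)
  simpa using this

lemma PG.mono {G H : ℂ → ℂ} {a b a' b' : ℝ} (h : PG G a b) (ha : a ≤ a') (hb : b' ≤ b)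
    (hle : ∀ s : ℂ, a' ≤ s.re → s.re ≤ b' → 1 ≤ s.im → ‖H s‖ ≤ ‖G s‖) : PG H a' b' := by
  obtain ⟨C, N, hC, h⟩ := h
  exact ⟨C, N, hC, fun s h1 h2 h3 =>
    (hle s h1 h2 h3).trans (h s (ha.trans h1) (h2.trans hb) h3)⟩

/-- polynomial in the norm -/
lemma PG.poly {G : ℂ → ℂ} {a b : ℝ} (c : ℝ) (k K : ℕ) (hc : 0 ≤ c)
    (h : ∀ s : ℂ, a ≤ s.re → s.re ≤ b → 1 ≤ s.im → ‖G s‖ ≤ (‖s‖ + k)^K * c) : PG G a b := by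
  refine ⟨(|a| + |b| + 1 + k)^K * c, K, by positivity, fun s h1 h2 h3 => (h s h1 h2 h3).trans ?_⟩
  have hre : |s.re| ≤ |a| + |b| := by
    rw [abs_le]
    constructor
    · have := neg_abs_le a; have := abs_nonneg b; linarith
    · have := le_abs_self b; have := abs_nonneg a; linarith
  have hn : ‖s‖ ≤ |a| + |b| + s.im := by
    have := Complex.norm_le_abs_re_add_abs_im s
    rw [abs_of_nonneg (by linarith : 0 ≤ s.im)] at this
    linarith
  have h4 : ‖s‖ + k ≤ (|a| + |b| + 1 + k) * s.im := by
    have : 0 ≤ |a| + |b| + k := by positivity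
    nlinarith
  calc (‖s‖ + k)^K * c ≤ ((|a| + |b| + 1 + k) * s.im)^K * c := by gcongr
    _ = _ := by rw [mul_pow]; ring

lemma PG.alp {alp : ℝ} (h0 : 0 < alp) (h1 : alp ≤ 1) (a b : ℝ) :
    PG (fun s => (alp:ℂ)^(-s)) a b := by
  refine ⟨alp^(-b), 0, by positivity, fun s _ h3 _ => ?_⟩
  rw [Complex.norm_cpow_eq_rpow_re_of_pos h0, pow_zero, mul_one]
  exact Real.rpow_le_rpow_of_exponent_ge h0 h1 (by simpa using h3)

lemma PG.cc (j : ℕ) (a b : ℝ) : PG (cc j) a b :=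
  PG.poly 1 j j zero_le_one (fun s _ _ _ => by simpa using cc_bound j s)

lemma PG.TT {lam alp : ℝ} (h0 : 0 < alp) (h1 : alp ≤ 1) (K : ℕ) (a b : ℝ) (ha : 2 ≤ a + K) :
    PG (TT lam alp K) a b := by
  apply PG.poly (alp^(-(b+K)) * ∑' m : ℕ, ((m:ℝ)+alp)^(-2:ℝ)) K K
  · have : 0 ≤ ∑' m : ℕ, ((m:ℝ)+alp)^(-2:ℝ) := tsum_nonneg fun m => by positivity
    positivity
  · intro s hs1 hs2 _
    exact TT_bound h0 h1 K (by linarith) (by linarith)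

lemma growth {lam alp : ℝ} {F : ℂ → ℂ} (h0 : 0 < alp) (h1 : alp ≤ 1)
    (hF : IsLerch lam alp F) (n : ℕ) : ∀ b : ℝ, PG F (2 - n) b := by
  induction n with
  | zero =>
    intro b
    have := PG.TT (lam := lam) h0 h1 0 2 b (by norm_num)
    refine PG.mono ((PG.alp h0 h1 2 b).add ((PG.const (ee lam 1) 2 b).mul this)) (by simp) le_rfl ?_
    intro s hs _ _
    have := identity0 h0 h1 hF 0 (s := s) (by simpa using hs)
    simp only [Finset.range_zero, Finset.sum_empty, zero_add] at this
    rw [← this]; simp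
  | succ n ih =>
    intro b
    by_cases hz : ee lam 1 = 1
    · -- Hurwitz case
      have hP : PG (fun s => (alp:ℂ)^(-s) +
          (∑ j ∈ Finset.range (n+2), _root_.cc (j+2) s * F (s + ((j+2:ℕ):ℝ)) +
            _root_.TT lam alp (n+4) s)) (-n) (b-1) := by
        refine (PG.alp h0 h1 _ _).add ((PG.sum _ fun j => (PG.cc _ _ _).mul ?_).add
          (PG.TT h0 h1 _ _ _ (by push_cast; linarith)))
        apply PG.shift
        refine PG.mono (ih (b - 1 + ((j+2:ℕ):ℝ))) ?_ le_rfl (fun _ _ _ _ => le_rfl)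
        push_cast; linarith [(Nat.cast_nonneg j : (0:ℝ) ≤ j)]
      have hP2 := PG.shift (a := 1 - n) (b := b) (-1) (by convert hP using 1 <;> ring)
      refine PG.mono hP2 (by push_cast; linarith) le_rfl ?_
      intro s hs1 hs2 hs3
      push_cast at hs1
      have hid := identity1 h0 h1 hF (n+4) (s := s + ((-1:ℝ):ℂ)) (by push_cast; simp; linarith)
        (by simp; linarith)
      rw [hz, one_mul, Finset.sum_range_succ', Finset.sum_range_succ'] at hid
      set w : ℂ := s + ((-1:ℝ):ℂ) with hw
      have hF1 : F (w + ((0+1:ℕ):ℂ)) = F s := by congr 1; rw [hw]; push_cast; ring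
      have hc1 : _root_.cc (0+1) w = -w := by simp [_root_.cc]
      have hc0 : _root_.cc 0 w = 1 := rfl
      rw [hF1, hc1, hc0] at hid
      have hw1 : 1 ≤ ‖w‖ := by
        have := Complex.im_le_norm w
        have e : w.im = s.im := by rw [hw]; simp
        linarith
      have : w * F s = (alp:ℂ)^(-w) + (∑ j ∈ Finset.range (n+2), _root_.cc (j+2) w * F (w + ((j+2:ℕ):ℝ)) +
            _root_.TT lam alp (n+4) w) := by
        simp only [Nat.cast_zero, add_zero, one_mul] at hid
        push_cast at hid ⊢
        simp only [add_assoc] at hid ⊢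
        norm_num at hid ⊢
        linear_combination hid
      rw [← this, norm_mul]
      nlinarith [norm_nonneg (F s)]
    · have hz' : 1 - ee lam 1 ≠ 0 := sub_ne_zero.2 (Ne.symm hz)
      have hP : PG (fun s => (1 - ee lam 1)⁻¹ * ((alp:ℂ)^(-s) + ee lam 1 *
          (∑ j ∈ Finset.range (n+2), _root_.cc (j+1) s * F (s + ((j+1:ℕ):ℝ)) +
            _root_.TT lam alp (n+3) s))) (1-n) b := by
        refine (PG.const _ _ _).mul ((PG.alp h0 h1 _ _).add ((PG.const _ _ _).mul
          ((PG.sum _ fun j => (PG.cc _ _ _).mul ?_).add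
          (PG.TT h0 h1 _ _ _ (by push_cast; linarith)))))
        apply PG.shift
        refine PG.mono (ih (b + ((j+1:ℕ):ℝ))) ?_ le_rfl (fun _ _ _ _ => le_rfl)
        push_cast; linarith [(Nat.cast_nonneg j : (0:ℝ) ≤ j)]
      refine PG.mono hP (by push_cast; linarith) le_rfl ?_
      intro s hs1 hs2 hs3
      push_cast at hs1
      have hid := identity1 h0 h1 hF (n+3) (s := s) (by push_cast; linarith) (by linarith)
      rw [Finset.sum_range_succ'] at hid
      have hc0 : _root_.cc 0 s = 1 := rfl
      rw [hc0] at hid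
      apply le_of_eq
      congr 1
      rw [eq_inv_mul_iff_mul_eq₀ hz']
      simp only [Nat.cast_zero, add_zero, one_mul] at hid
      push_cast at hid ⊢
      linear_combination hid


lemma LB_base (f : ℂ → ℂ) (L : ℝ) (hL : 0 < L)
    (hf : DifferentiableOn ℂ f (ball 0 1)) (hf1 : ∀ z ∈ ball (0:ℂ) 1, ‖f z‖ ≤ 1)
    (h0 : Real.exp (-L) ≤ ‖f 0‖) (hz : ∀ z : ℂ, ‖z‖ ≤ 1/2 → f z ≠ 0) (s : ℂ) (hs : ‖s‖ ≤ 1/4) :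
    Real.exp (-(3*L)) ≤ ‖f s‖ := by
  have hsub : ball (0:ℂ) (1/2) ⊆ ball 0 1 := ball_subset_ball (by norm_num)
  have hne : ∀ z ∈ ball (0:ℂ) (1/2), f z ≠ 0 := fun z h => hz z (by
    rw [mem_ball_zero_iff] at h; exact h.le)
  have hfd : DifferentiableOn ℂ f (ball 0 (1/2)) := hf.mono hsub
  have hd : DifferentiableOn ℂ (fun z => deriv f z / f z) (ball 0 (1/2)) :=
    (hfd.deriv isOpen_ball).div hfd hne
  obtain ⟨G, hG0, hG⟩ := hd.isExactOn_ball.with_val_at 0 0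
  have h0m : (0:ℂ) ∈ ball (0:ℂ) (1/2) := by simp
  have hGd : DifferentiableOn ℂ G (ball 0 (1/2)) := fun z h => (hG z h).differentiableAt.differentiableWithinAt
  have key : ∀ z ∈ ball (0:ℂ) (1/2), f z * Complex.exp (-(G z)) = f 0 := by
    intro z hzz
    have hder : ∀ w ∈ ball (0:ℂ) (1/2), HasDerivAt (fun w => f w * Complex.exp (-(G w))) 0 w := by
      intro w hw
      have h1 : HasDerivAt f (deriv f w) w :=
        ((hfd w hw).differentiableAt (isOpen_ball.mem_nhds hw)).hasDerivAt
      have h2 := h1.mul (hG w hw).neg.cexp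
      refine h2.congr_deriv ?_
      have h3 : deriv f w / f w * f w = deriv f w := div_mul_cancel₀ _ (hne w hw)
      linear_combination (-Complex.exp (-G w)) * h3
    have := (convex_ball (0:ℂ) (1/2)).is_const_of_fderivWithin_eq_zero (𝕜 := ℂ)
      (f := fun w => f w * Complex.exp (-(G w)))
      (fun w hw => (hder w hw).differentiableAt.differentiableWithinAt)
      (fun w hw => by
        have := (hder w hw).hasFDerivAt.hasFDerivWithinAt.fderivWithin
          (isOpen_ball.uniqueDiffWithinAt hw)
        rw [this]; ext; simp) hzz h0m
    simpa [hG0] using this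
  have key2 : ∀ z ∈ ball (0:ℂ) (1/2), ‖f z‖ = ‖f 0‖ * Real.exp (G z).re := by
    intro z hzz
    rw [← key z hzz, norm_mul, Complex.norm_exp, mul_assoc, ← Real.exp_add]
    simp
  have hre : MapsTo G (ball 0 (1/2)) {z | z.re ≤ L} := by
    intro z hzz
    have h1 := hf1 z (hsub hzz)
    rw [key2 z hzz] at h1
    show (G z).re ≤ L
    have h2 : Real.exp (-L) * Real.exp (G z).re ≤ 1 :=
      (mul_le_mul_of_nonneg_right h0 (Real.exp_pos _).le).trans h1
    rw [← Real.exp_add, Real.exp_le_one_iff] at h2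
    linarith
  have hsm : s ∈ ball (0:ℂ) (1/2) := by rw [mem_ball_zero_iff]; linarith
  have hb := Complex.borelCaratheodory_zero hL hGd hre (by norm_num) hsm hG0
  have hb2 : ‖G s‖ ≤ 2 * L := by
    refine hb.trans ?_
    rw [div_le_iff₀ (by linarith)]
    nlinarith
  rw [key2 s hsm]
  have : -(2*L) ≤ (G s).re := by
    have := Complex.abs_re_le_norm (G s)
    have := neg_le_abs (G s).re
    linarith
  calc Real.exp (-(3*L)) = Real.exp (-L) * Real.exp (-(2*L)) := by rw [← Real.exp_add]; ring_nf
    _ ≤ _ := by gcongr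

lemma LB_ind (L : ℝ) (hL : 0 < L) (s : ℂ) (hs : ‖s‖ ≤ 1/4) (δ : ℝ) (hδ0 : 0 < δ) (hδ1 : δ ≤ 1) (n : ℕ) :
    ∀ f : ℂ → ℂ, DifferentiableOn ℂ f (ball 0 1) → ContinuousOn f (closedBall 0 1) →
    (∀ z ∈ sphere (0:ℂ) 1, ‖f z‖ ≤ 1) → Real.exp (-L) ≤ ‖f 0‖ → (1/2:ℝ)^n < ‖f 0‖ →
    (∀ ρ : ℂ, ‖ρ‖ ≤ 1/2 → f ρ = 0 → δ ≤ ‖s - ρ‖) →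
    Real.exp (-(3*L)) * (δ/2)^n ≤ ‖f s‖ := by
  have hmax : ∀ f : ℂ → ℂ, DifferentiableOn ℂ f (ball 0 1) → ContinuousOn f (closedBall 0 1) →
    (∀ z ∈ sphere (0:ℂ) 1, ‖f z‖ ≤ 1) → ∀ z ∈ closedBall (0:ℂ) 1, ‖f z‖ ≤ 1 := by
    intro f hf hc h z hz
    refine Complex.norm_le_of_forall_mem_frontier_norm_le (U := ball (0:ℂ) 1) isBounded_ball
      ⟨hf, by rwa [closure_ball _ one_ne_zero]⟩ ?_ (by rwa [closure_ball _ one_ne_zero])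
    rwa [frontier_ball _ one_ne_zero]
  induction n with
  | zero =>
    intro f hf hc h1 h0 h0' hz
    have := hmax f hf hc h1 0 (by simp)
    simp at h0'; linarith
  | succ n ih =>
    intro f hf hc h1 h0 h0' hz
    have hm := hmax f hf hc h1
    by_cases hzero : ∀ z : ℂ, ‖z‖ ≤ 1/2 → f z ≠ 0
    · have := LB_base f L hL hf (fun z h => hm z (ball_subset_closedBall h)) h0 hzero s hs
      refine le_trans ?_ this
      have : (δ/2)^(n+1) ≤ 1 := pow_le_one₀ (by positivity) (by linarith)
      have := Real.exp_pos (-(3*L))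
      nlinarith
    · push Not at hzero
      obtain ⟨ρ, hρ, hfρ⟩ := hzero
      have hρ1 : ρ ∈ ball (0:ℂ) 1 := by rw [mem_ball_zero_iff]; linarith
      have hnb : ball (0:ℂ) 1 ∈ nhds ρ := isOpen_ball.mem_nhds hρ1
      have hnb' : closedBall (0:ℂ) 1 ∈ nhds ρ := Filter.mem_of_superset hnb ball_subset_closedBall
      have h00 : f 0 ≠ 0 := by
        intro h; rw [h, norm_zero] at h0'; have : (0:ℝ) < (1/2)^(n+1) := by positivity
        linarith
      have hρ0 : ρ ≠ 0 := by rintro rfl; exact h00 hfρ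
      have hfac : ∀ z, f z = (z - ρ) * dslope f ρ z := by
        intro z
        have := sub_smul_dslope f ρ z
        rw [hfρ, sub_zero, smul_eq_mul] at this
        exact this.symm
      set f1 : ℂ → ℂ := fun z => dslope f ρ z * (1 - (starRingEnd ℂ) ρ * z) with hf1
      have hd1 : DifferentiableOn ℂ f1 (ball 0 1) :=
        ((Complex.differentiableOn_dslope hnb).2 hf).mul (by fun_prop)
      have hc1 : ContinuousOn f1 (closedBall 0 1) :=
        ((continuousOn_dslope hnb').2 ⟨hc, (hf ρ hρ1).differentiableAt hnb⟩).mul (by fun_prop)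
      have hs1 : ∀ z ∈ sphere (0:ℂ) 1, ‖f1 z‖ ≤ 1 := by
        intro z hz
        have hz1 : ‖z‖ = 1 := by simpa using hz
        have : ‖1 - (starRingEnd ℂ) ρ * z‖ = ‖z - ρ‖ := by
          have e1 : (starRingEnd ℂ) z * z = 1 := by
            rw [mul_comm, Complex.mul_conj, Complex.normSq_eq_norm_sq, hz1]; simp
          calc ‖1 - (starRingEnd ℂ) ρ * z‖ = ‖(starRingEnd ℂ) (z - ρ) * z‖ := by
                rw [map_sub, sub_mul, e1]
            _ = ‖z - ρ‖ := by rw [norm_mul, hz1, RCLike.norm_conj, mul_one]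
        rw [hf1]; simp only []
        rw [norm_mul, this, mul_comm, ← norm_mul, ← hfac]
        exact h1 z hz
      have hval : ‖f 0‖ ≤ 1/2 * ‖f1 0‖ := by
        rw [hfac 0, norm_mul]; simp only [hf1, mul_zero, sub_zero, mul_one, zero_sub, norm_neg]
        gcongr
      have h10 : Real.exp (-L) ≤ ‖f1 0‖ := by
        have := norm_nonneg (f1 0); linarith
      have h10' : (1/2:ℝ)^n < ‖f1 0‖ := by
        rw [pow_succ] at h0'; linarith
      have hI := ih f1 hd1 hc1 hs1 h10 h10' (by
        intro q hq hq0
        apply hz q hq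
        rw [hfac]
        have : (1 - (starRingEnd ℂ) ρ * q) ≠ 0 := by
          intro h
          have h2 : ‖(starRingEnd ℂ) ρ * q‖ = 1 := by rw [← sub_eq_zero.1 h]; simp
          rw [norm_mul, RCLike.norm_conj] at h2
          have := norm_nonneg q
          nlinarith
        rcases mul_eq_zero.1 hq0 with h | h
        · rw [h, mul_zero]
        · exact absurd h this)
      have hd := hz ρ hρ hfρ
      have hden : ‖1 - (starRingEnd ℂ) ρ * s‖ ≤ 2 := by
        calc _ ≤ ‖(1:ℂ)‖ + ‖(starRingEnd ℂ) ρ * s‖ := norm_sub_le _ _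
          _ ≤ 1 + 1/2 * (1/4) := by
            rw [norm_mul, RCLike.norm_conj, norm_one]; gcongr
          _ ≤ 2 := by norm_num
      have hI2 : ‖f1 s‖ ≤ ‖dslope f ρ s‖ * 2 := by
        simp only [hf1]; rw [norm_mul]; gcongr
      rw [hfac s, norm_mul]
      calc Real.exp (-(3*L)) * (δ/2)^(n+1) = (Real.exp (-(3*L)) * (δ/2)^n) * (δ/2) := by ring
        _ ≤ (‖dslope f ρ s‖ * 2) * (δ/2) := mul_le_mul_of_nonneg_right (hI.trans hI2) (by positivity)
        _ = δ * ‖dslope f ρ s‖ := by ring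
        _ ≤ _ := by gcongr

lemma far_right {lam alp : ℝ} {F : ℂ → ℂ} (h0 : 0 < alp) (h1 : alp ≤ 1)
    (hF : IsLerch lam alp F) : ∃ σ1 : ℝ, 2 ≤ σ1 ∧ ∀ s : ℂ, σ1 ≤ s.re → 1/2 ≤ ‖F s‖ := by
  set S : ℝ := ∑' m : ℕ, ((m:ℝ)+alp)^(-2:ℝ) with hS
  have hS0 : 0 ≤ S := tsum_nonneg fun m => by positivity
  have htend : Filter.Tendsto (fun σ : ℝ => (1+alp)^(-(σ-2)) * S) Filter.atTop (nhds (0 * S)) := by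
    apply Filter.Tendsto.mul_const
    have h := tendsto_rpow_atBot_of_base_gt_one (1+alp) (by linarith)
    refine h.comp ?_
    exact Filter.tendsto_neg_atTop_atBot.comp (Filter.tendsto_atTop_add_const_right _ _ Filter.tendsto_id)
  rw [zero_mul] at htend
  obtain ⟨σ1, hσ1⟩ := ((htend.eventually (gt_mem_nhds (by norm_num : (0:ℝ) < 1/2))).and
    (Filter.eventually_ge_atTop 2)).exists_forall_of_atTop
  refine ⟨σ1, (hσ1 σ1 le_rfl).2, fun s hs => ?_⟩
  obtain ⟨hsm, hs2⟩ := hσ1 s.re hs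
  have hS1 := (hasSum_nat_add_iff' 1).2 (lerch_hasSum h0 h1 hF hs2)
  simp only [Finset.range_one, Finset.sum_singleton, ee_zero, Nat.cast_zero, zero_add, one_mul] at hS1
  have hb : ∀ m : ℕ, ‖ee lam (m+1) * ((((m+1:ℕ):ℝ) + alp : ℝ):ℂ)^(-s)‖ ≤
      (1+alp)^(-(s.re-2)) * ((m:ℝ)+alp)^(-2:ℝ) := by
    intro m
    have hp : 0 < ((m+1:ℕ):ℝ) + alp := by positivity
    have hm : (0:ℝ) ≤ m := Nat.cast_nonneg m
    rw [norm_mul, ee_norm, one_mul, Complex.norm_cpow_eq_rpow_re_of_pos hp]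
    have e : (((m+1:ℕ):ℝ) + alp)^((-s).re) =
        (((m+1:ℕ):ℝ) + alp)^(-(s.re-2)) * (((m+1:ℕ):ℝ) + alp)^(-2:ℝ) := by
      rw [← Real.rpow_add hp]; congr 1; simp; ring
    rw [e]
    apply mul_le_mul
    · exact Real.rpow_le_rpow_of_nonpos (by linarith) (by push_cast; linarith) (by linarith)
    · exact Real.rpow_le_rpow_of_nonpos (by positivity) (by push_cast; linarith) (by norm_num)
    · positivity
    · positivity
  have hn := tsum_of_norm_bounded ((sq_summable h0).mul_left ((1+alp)^(-(s.re-2)))).hasSum hb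
  rw [hS1.tsum_eq, tsum_mul_left] at hn
  have ha : 1 ≤ ‖(alp:ℂ)^(-s)‖ := by
    rw [Complex.norm_cpow_eq_rpow_re_of_pos h0]
    exact Real.one_le_rpow_of_pos_of_le_one_of_nonpos h0 h1 (by simp; linarith)
  have := norm_sub_norm_le ((alp:ℂ)^(-s)) (F s)
  rw [norm_sub_rev] at this
  linarith

/-- `δ` is an admissible lower bound for the distance of `s` to the zeros of `F`. -/
def Adm (F : ℂ → ℂ) (s : ℂ) (δ : ℝ) : Prop :=
  0 < δ ∧ δ ≤ 1 ∧ ∀ ρ : ℂ, F ρ = 0 → δ ≤ ‖s - ρ‖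

lemma compact_part {lam alp : ℝ} {F : ℂ → ℂ} (h0 : 0 < alp) (h1 : alp ≤ 1)
    (hF : IsLerch lam alp F) (K : Set ℂ) (hK : IsCompact K) (hK0 : ∀ s ∈ K, 0 < s.im) :
    ∃ (c : ℝ) (N : ℕ), 0 < c ∧ ∀ s ∈ K, ∀ δ, Adm F s δ → c * δ^N ≤ ‖F s‖ := by
  have hne : ∀ w : ℂ, 0 < w.im → w ≠ 1 := by rintro w hw rfl; simp at hw
  have hU : IsOpen {w : ℂ | 0 < w.im} := isOpen_lt (by fun_prop) (by fun_prop)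
  have hd : DifferentiableOn ℂ F {w : ℂ | 0 < w.im} := fun w hw =>
    (hF.1 w (hne w hw)).differentiableWithinAt
  have han := hd.analyticOnNhd hU
  refine hK.induction_on (p := fun K => ∃ (c : ℝ) (N : ℕ), 0 < c ∧ ∀ s ∈ K, ∀ δ, Adm F s δ → c * δ^N ≤ ‖F s‖)
    ⟨1, 0, one_pos, by simp⟩ ?_ ?_ ?_
  · rintro S T hST ⟨c, N, hc, h⟩
    exact ⟨c, N, hc, fun s hs => h s (hST hs)⟩
  · rintro S T ⟨c, N, hc, h⟩ ⟨c', N', hc', h'⟩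
    refine ⟨min c c', N + N', lt_min hc hc', ?_⟩
    intro s hs δ hδ
    have hδ0 := hδ.1
    have hδ1 := hδ.2.1
    rcases hs with hs | hs
    · refine le_trans ?_ (h s hs δ hδ)
      have : δ^(N+N') ≤ δ^N := pow_le_pow_of_le_one hδ0.le hδ1 (by omega)
      gcongr
      exact min_le_left _ _
    · refine le_trans ?_ (h' s hs δ hδ)
      have : δ^(N+N') ≤ δ^N' := pow_le_pow_of_le_one hδ0.le hδ1 (by omega)
      gcongr
      exact min_le_right _ _
  · intro p hp
    have hp0 := hK0 p hp
    have hap := han p hp0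
    have hnz : ¬ ∀ᶠ z in nhds p, F z = 0 := by
      intro hev
      have heq := han.eqOn_zero_of_preconnected_of_eventuallyEq_zero
        (convex_halfSpace_im_gt 0).isPreconnected hp0 hev
      obtain ⟨σ1, _, h⟩ := far_right h0 h1 hF
      have h2 := h ⟨σ1, 1⟩ le_rfl
      rw [heq (show (⟨σ1, 1⟩:ℂ) ∈ {w : ℂ | 0 < w.im} by simp)] at h2
      simp at h2
      norm_num at h2
    obtain ⟨n, g, hg, hgp, hev⟩ := hap.exists_eventuallyEq_pow_smul_nonzero_iff.2 hnz
    have hgc : ∀ᶠ z in nhds p, ‖g p‖ / 2 < ‖g z‖ :=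
      hg.continuousAt.norm.eventually (lt_mem_nhds (by
        have := norm_pos_iff.2 hgp; linarith))
    refine ⟨_, mem_nhdsWithin_of_mem_nhds (hev.and hgc), ‖g p‖ / 2, n,
      by have := norm_pos_iff.2 hgp; linarith, ?_⟩
    rintro s ⟨hs1, hs2⟩ δ hδ
    rw [hs1, smul_eq_mul, norm_mul, norm_pow, mul_comm]
    apply mul_le_mul _ hs2.le (by positivity) (by positivity)
    rcases Nat.eq_zero_or_pos n with rfl | hn
    · simp
    · have : F p = 0 := by rw [hev.self_of_nhds]; simp [hn.ne']
      exact pow_le_pow_left₀ hδ.1.le (hδ.2.2 p this) n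

set_option maxHeartbeats 1600000 in
lemma far_part {lam alp : ℝ} {F : ℂ → ℂ} (h0 : 0 < alp) (h1 : alp ≤ 1)
    (hF : IsLerch lam alp F) (σ0 σ1 : ℝ) (hσ : σ0 ≤ σ1) (h : ∀ s : ℂ, σ1 ≤ s.re → 1/2 ≤ ‖F s‖) :
    ∃ C T : ℝ, 0 < C ∧ ∀ s : ℂ, σ0 ≤ s.re → s.re ≤ σ1 → T ≤ s.im → 2 ≤ s.im → ∀ δ, Adm F s δ →
      Real.exp (-(C * (1 - Real.log δ) * Real.log s.im)) < ‖F s‖ := by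
  have hne : ∀ w : ℂ, 0 < w.im → w ≠ 1 := by rintro w hw rfl; simp at hw
  set R : ℝ := 4 * (σ1 - σ0 + 1) with hR
  have hR4 : 4 ≤ R := by rw [hR]; linarith
  have hR0 : 0 < R := by linarith
  obtain ⟨n, hn⟩ := exists_nat_ge (2 - (σ1 - R))
  obtain ⟨C0, N, hC0, hG⟩ := growth h0 h1 hF n (σ1 + R)
  set D : ℝ := 2 * ((C0 + 1) * 2^N) with hD
  have hD2 : 2 ≤ D := by
    have : (1:ℝ) ≤ 2^N := one_le_pow₀ (by norm_num)
    rw [hD]; nlinarith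
  have hl2 : 0 < Real.log 2 := Real.log_pos (by norm_num)
  set A : ℝ := Real.log D / Real.log 2 + N with hA
  have hlD : 0 ≤ Real.log D := Real.log_nonneg (by linarith)
  have hA0 : 0 ≤ A := by positivity
  set A' : ℝ := (A + 1) / Real.log 2 with hA'
  have hA'0 : 0 ≤ A' := by positivity
  have hlR : 0 ≤ Real.log (2*R) := Real.log_nonneg (by linarith)
  refine ⟨3 * A + A' * (Real.log (2*R) + 1) + 1, R + 2, by positivity, ?_⟩
  intro s hs0 hs1 hT ht2 δ hδ
  obtain ⟨hδ0, hδ1, hδz⟩ := hδ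
  set t := s.im with ht
  have ht0 : 0 < t := by linarith
  set M : ℝ := (C0 + 1) * 2^N * t^N with hM
  have hM1 : 1 ≤ M := by
    have a1 : (1:ℝ) ≤ 2^N := one_le_pow₀ (by norm_num)
    have a2 : (1:ℝ) ≤ t^N := one_le_pow₀ (by linarith)
    rw [hM]
    have : 1 ≤ (C0+1) * 2^N := by nlinarith
    nlinarith
  have hM0 : 0 < M := by linarith
  set L : ℝ := Real.log (2 * M) with hL
  have hL0 : 0 < L := Real.log_pos (by linarith)
  have hLe : Real.exp (-L) = 1 / 2 / M := by
    rw [Real.exp_neg, hL, Real.exp_log (by linarith)]; field_simp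
  have hlt : Real.log 2 ≤ Real.log t := Real.log_le_log (by norm_num) ht2
  have hLA : L ≤ A * Real.log t := by
    have : 2 * M = D * t^N := by rw [hM, hD]; ring
    rw [hL, this, Real.log_mul (by linarith) (by positivity), Real.log_pow, hA, add_mul]
    gcongr
    rw [div_mul_eq_mul_div, le_div_iff₀ hl2]
    gcongr
  set c : ℂ := ⟨σ1, t⟩ with hc
  set f : ℂ → ℂ := fun w => F (c + R * w) / M with hf
  have hreg : ∀ w : ℂ, ‖w‖ ≤ 1 → σ1 - R ≤ (c + R * w).re ∧ (c + R * w).re ≤ σ1 + R ∧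
      t - R ≤ (c + R * w).im ∧ (c + R * w).im ≤ t + R := by
    intro w hw
    have a1 := abs_le.1 ((Complex.abs_re_le_norm w).trans hw)
    have a2 := abs_le.1 ((Complex.abs_im_le_norm w).trans hw)
    simp [hc]
    refine ⟨?_, ?_, ?_, ?_⟩ <;> nlinarith
  have hfd : ∀ w : ℂ, ‖w‖ ≤ 1 → DifferentiableAt ℂ f w := by
    intro w hw
    have := hF.1 (c + R * w) (hne _ (by have := hreg w hw; linarith))
    exact (this.comp w (by fun_prop : DifferentiableAt ℂ (fun w : ℂ => c + R * w) w)).div_const _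
  have hMn : ‖(M:ℂ)‖ = M := by rw [Complex.norm_real, Real.norm_of_nonneg hM0.le]
  have hfb : ∀ w ∈ sphere (0:ℂ) 1, ‖f w‖ ≤ 1 := by
    intro w hw
    obtain ⟨b1, b2, b3, b4⟩ := hreg w (by simpa using le_of_eq (by simpa using hw))
    have := hG (c + R * w) (by linarith) b2 (by linarith)
    simp only [hf]
    rw [norm_div, hMn, div_le_one hM0]
    refine this.trans ?_
    have hh : (c + R * w).im ^ N ≤ (2 * t)^N := pow_le_pow_left₀ (by linarith) (by linarith) N
    calc C0 * (c + R * w).im ^ N ≤ (C0 + 1) * (2*t)^N :=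
          mul_le_mul (by linarith) hh (pow_nonneg (by linarith) _) (by linarith)
      _ = M := by rw [hM, mul_pow]; ring
  have hf0 : Real.exp (-L) ≤ ‖f 0‖ := by
    simp only [hf]
    rw [hLe, norm_div, hMn]
    gcongr
    apply h
    simp [hc]
  set n0 : ℕ := ⌊L / Real.log 2⌋₊ + 1 with hn0
  have hn0a : L / Real.log 2 < n0 := by rw [hn0]; push_cast; exact Nat.lt_floor_add_one _
  have hn0b : (n0:ℝ) ≤ L / Real.log 2 + 1 := by
    rw [hn0]; push_cast
    have := Nat.floor_le (show 0 ≤ L / Real.log 2 by positivity)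
    linarith
  have hf0' : (1/2:ℝ)^n0 < ‖f 0‖ := by
    refine lt_of_lt_of_le ?_ hf0
    have : (1/2:ℝ) = Real.exp (-Real.log 2) := by
      rw [Real.exp_neg, Real.exp_log (by norm_num)]; norm_num
    rw [this, ← Real.exp_nat_mul]
    apply Real.exp_lt_exp.2
    rw [div_lt_iff₀ hl2] at hn0a
    linarith
  set w : ℂ := (((s.re - σ1) / R : ℝ) : ℂ) with hw
  have hcw : c + R * w = s := by
    apply Complex.ext
    · rw [Complex.add_re, hw, ← Complex.ofReal_mul, Complex.ofReal_re]
      show σ1 + R * ((s.re - σ1) / R) = s.re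
      rw [mul_div_cancel₀ _ hR0.ne']; ring
    · rw [Complex.add_im, hw, ← Complex.ofReal_mul, Complex.ofReal_im, add_zero]
  have hwn : ‖w‖ ≤ 1/4 := by
    rw [hw, Complex.norm_real, Real.norm_eq_abs, abs_div, abs_of_pos hR0, div_le_iff₀ hR0,
      abs_of_nonpos (by linarith)]
    rw [hR]; linarith
  have hfin := LB_ind L hL0 w hwn (δ / R) (by positivity)
    (by rw [div_le_one hR0]; linarith) n0 f
    (fun z hz => (hfd z (by rw [mem_ball_zero_iff] at hz; exact hz.le)).differentiableWithinAt)
    (fun z hz => (hfd z (by simpa using hz)).continuousAt.continuousWithinAt)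
    hfb hf0 hf0' (by
      intro ρ hρ hρ0
      have hz : F (c + R * ρ) = 0 := by
        rcases div_eq_zero_iff.1 hρ0 with hh | hh
        · exact hh
        · exfalso; rw [hh] at hMn; simp at hMn; linarith
      have := hδz _ hz
      rw [← hcw] at this
      have e : c + R * w - (c + R * ρ) = R * (w - ρ) := by ring
      rw [e, norm_mul, Complex.norm_real, Real.norm_of_nonneg hR0.le] at this
      rw [div_le_iff₀ hR0]; linarith)
  have hFs : ‖f w‖ ≤ ‖F s‖ := by
    simp only [hf]
    rw [hcw, norm_div, hMn]
    exact div_le_self (norm_nonneg _) hM1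
  refine lt_of_lt_of_le ?_ (hfin.trans hFs)
  have e1 : δ / R / 2 = Real.exp (-(Real.log (2*R) - Real.log δ)) := by
    rw [neg_sub, Real.exp_sub, Real.exp_log hδ0, Real.exp_log (by linarith)]
    field_simp
  rw [e1, ← Real.exp_nat_mul, ← Real.exp_add]
  apply Real.exp_lt_exp.2
  set x : ℝ := - Real.log δ with hx
  have hx0 : 0 ≤ x := by have := Real.log_nonpos hδ0.le hδ1; linarith
  have e2 : Real.log δ = -x := by rw [hx]; ring
  rw [e2]
  set lt := Real.log t with hltdef
  have hlt0 : 0 < lt := by linarith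
  have hn1 : (n0:ℝ) ≤ A' * lt := by
    refine hn0b.trans ?_
    rw [hA', div_mul_eq_mul_div, le_div_iff₀ hl2, add_mul, div_mul_cancel₀ _ hl2.ne', one_mul, add_mul, one_mul]
    linarith
  have s1 : 3 * L ≤ 3 * A * lt * (1 + x) := by
    have : 0 ≤ A * lt * x := by positivity
    nlinarith
  have s2 : (n0:ℝ) * (Real.log (2*R) + x) ≤ (A' * lt) * ((Real.log (2*R) + 1) * (1 + x)) := by
    apply mul_le_mul hn1 _ (by positivity) (by positivity)
    have : 0 ≤ Real.log (2*R) * x := by positivity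
    nlinarith
  have s3 : 0 < lt * (1 + x) := by positivity
  nlinarith [s1, s2, s3]

theorem lerch_main {lam alp : ℝ} {F : ℂ → ℂ} (h0 : 0 < alp) (h1 : alp ≤ 1)
    (hF : IsLerch lam alp F) (σ0 : ℝ) :
    ∃ C : ℝ, 0 < C ∧ ∀ s : ℂ, σ0 ≤ s.re → 2 ≤ s.im → ∀ δ, Adm F s δ →
      Real.exp (-(C * (1 - Real.log δ) * Real.log s.im)) < ‖F s‖ := by
  obtain ⟨σ', _, hσ'⟩ := far_right h0 h1 hF
  set σ1 := max σ' σ0 with hσ1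
  have hright : ∀ s : ℂ, σ1 ≤ s.re → 1/2 ≤ ‖F s‖ := fun s hs => hσ' s ((le_max_left _ _).trans hs)
  obtain ⟨C1, T, hC1, hfar⟩ := far_part h0 h1 hF σ0 σ1 (le_max_right _ _) hright
  obtain ⟨c, N, hc, hcomp⟩ := compact_part h0 h1 hF (Icc σ0 σ1 ×ℂ Icc 2 T)
    (isCompact_Icc.reProdIm isCompact_Icc) (by
      intro s hs; have h2 : (2:ℝ) ≤ s.im := hs.2.1
      linarith)
  have hl2 : 0 < Real.log 2 := Real.log_pos (by norm_num)
  set C2 : ℝ := (|Real.log c| + N + 1) / Real.log 2 with hC2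
  have hC20 : 0 < C2 := by positivity
  refine ⟨C1 + C2 + 2, by positivity, ?_⟩
  intro s hs ht δ hδ
  have hx0 : 0 ≤ - Real.log δ := by have := Real.log_nonpos hδ.1.le hδ.2.1; linarith
  have hlt : Real.log 2 ≤ Real.log s.im := Real.log_le_log (by norm_num) ht
  have mono : ∀ C', C' ≤ C1 + C2 + 2 → Real.exp (-(C' * (1 - Real.log δ) * Real.log s.im)) < ‖F s‖ →
      Real.exp (-((C1 + C2 + 2) * (1 - Real.log δ) * Real.log s.im)) < ‖F s‖ := by
    intro C' hC' hh
    refine lt_of_le_of_lt (Real.exp_le_exp.2 (neg_le_neg ?_)) hh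
    have a : 0 ≤ 1 - Real.log δ := by linarith
    have b : 0 ≤ Real.log s.im := by linarith
    gcongr
  by_cases hr : σ1 ≤ s.re
  · refine mono 2 (by linarith) (lt_of_lt_of_le ?_ (hright s hr))
    have : Real.exp (-(2 * Real.log 2)) = 1/4 := by
      rw [Real.exp_neg, mul_comm, Real.exp_mul, Real.exp_log (by norm_num)]; norm_num
    refine lt_of_le_of_lt (Real.exp_le_exp.2 ?_) (this.trans_lt (by norm_num))
    nlinarith
  push Not at hr
  by_cases hT : T ≤ s.im
  · exact mono C1 (by linarith) (hfar s hs hr.le hT ht δ hδ)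
  push Not at hT
  refine mono C2 (by linarith) (lt_of_lt_of_le ?_ (hcomp s ⟨⟨hs, hr.le⟩, ⟨ht, hT.le⟩⟩ δ hδ))
  have e : c * δ^N = Real.exp (Real.log c + N * Real.log δ) := by
    rw [Real.exp_add, Real.exp_log hc, Real.exp_nat_mul, Real.exp_log hδ.1]
  rw [e]
  apply Real.exp_lt_exp.2
  have q1 : |Real.log c| + N + 1 ≤ C2 * Real.log s.im := by
    rw [hC2, div_mul_eq_mul_div, le_div_iff₀ hl2]; gcongr
  have q2 := neg_abs_le (Real.log c)
  set x := - Real.log δ with hx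
  have e2 : Real.log δ = -x := by rw [hx]; ring
  rw [e2]
  have q3 : (|Real.log c| + N + 1) * (1 + x) ≤ C2 * Real.log s.im * (1 + x) := by gcongr
  have q4 : 0 ≤ |Real.log c| * x := by positivity
  have q5 : (0:ℝ) ≤ N := Nat.cast_nonneg N
  nlinarith

lemma exists_adm {lam alp : ℝ} {F : ℂ → ℂ} (hF : IsLerch lam alp F) (s : ℂ) (hs : 2 ≤ s.im)
    (hs0 : F s ≠ 0) :
    ∃ δ, Adm F s δ ∧ - Real.log δ ≤ |Real.log (Metric.infDist s {ρ : ℂ | F ρ = 0})| := by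
  by_cases hZ : ({ρ : ℂ | F ρ = 0}).Nonempty
  · have hne : s ≠ 1 := by rintro rfl; simp at hs; linarith
    have hcl : s ∉ closure {ρ : ℂ | F ρ = 0} := by
      rw [mem_closure_iff_frequently]
      intro hfr
      exact hfr ((hF.1 s hne).continuousAt.eventually_ne hs0)
    have hd : 0 < Metric.infDist s {ρ : ℂ | F ρ = 0} := (infDist_pos_iff_notMem_closure hZ).1 hcl
    refine ⟨min 1 (Metric.infDist s {ρ : ℂ | F ρ = 0}), ⟨lt_min one_pos hd, min_le_left _ _, ?_⟩, ?_⟩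
    · intro ρ hρ
      rw [← dist_eq_norm]
      exact (min_le_right _ _).trans (Metric.infDist_le_dist_of_mem hρ)
    · rcases le_total 1 (Metric.infDist s {ρ : ℂ | F ρ = 0}) with hh | hh
      · rw [min_eq_left hh]; simp
      · rw [min_eq_right hh]; exact neg_le_abs _
  · rw [Set.not_nonempty_iff_eq_empty] at hZ
    refine ⟨1, ⟨one_pos, le_rfl, ?_⟩, by simp⟩
    intro ρ hρ
    exact absurd (show ρ ∈ {ρ : ℂ | F ρ = 0} from hρ) (by rw [hZ]; simp)

/-- lower bound for the Lerch zeta-function in terms of the distance to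
the nearest zero. -/
theorem lerch_lower_bound_near_zeros (lam alp sigma0 : ℝ) (hlam0 : 0 < lam) (hlam1 : lam ≤ 1)
    (halp0 : 0 < alp) (halp1 : alp ≤ 1) (F : ℂ → ℂ) (hF : IsLerch lam alp F) :
    ∃ C : ℝ, 0 < C ∧ ∀ s : ℂ, sigma0 ≤ s.re → 2 ≤ s.im → F s ≠ 0 →
      1 / ‖F s‖ <
        Real.exp (C * (|Real.log (Metric.infDist s {ρ : ℂ | F ρ = 0})| + 1) * Real.log s.im) := by
  obtain ⟨C, hC, hmain⟩ := lerch_main halp0 halp1 hF sigma0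
  refine ⟨C, hC, fun s hs ht hs0 => ?_⟩
  obtain ⟨δ, hδ, hlog⟩ := exists_adm hF s ht hs0
  have h := hmain s hs ht δ hδ
  have hlt : 0 ≤ Real.log s.im := Real.log_nonneg (by linarith)
  have hle : C * (1 - Real.log δ) * Real.log s.im ≤
      C * (|Real.log (Metric.infDist s {ρ : ℂ | F ρ = 0})| + 1) * Real.log s.im := by
    apply mul_le_mul_of_nonneg_right _ hlt
    apply mul_le_mul_of_nonneg_left _ hC.le
    linarith
  refine lt_of_lt_of_le ?_ (Real.exp_le_exp.2 hle)
  rw [Real.exp_neg] at h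
  rw [one_div]
  exact inv_lt_of_inv_lt₀ (Real.exp_pos _) h
end

section
/- Let 0 < λ ≤ 1. There exist constants A > 0 and γ₀ > 0 such that for every nontrivial zero ρ = β + iγ of L(λ,λ,·) with γ ≥ γ₀, there is a radius r with exp(−Aγ/log γ) ≤ r ≤ exp(−Aγ/log γ)·(log γ)² such that the open discs {s : |s − ρ| < r} and {s : |s − (1 − conj(ρ))| < r} contain the same number of zeros of L(λ,λ,·), counted with multiplicity. -/
open scoped Classical

namespace LerchAux
open Complex Filter Topology Metric

lemma finite_zeros {f : ℂ → ℂ} {U K : Set ℂ} (hU : IsOpen U) (hf : DifferentiableOn ℂ f U)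
    (hK : IsCompact K) (hKU : K ⊆ U) (hord : ∀ z ∈ K, analyticOrderAt f z ≠ ⊤) :
    {z | z ∈ K ∧ f z = 0}.Finite := by
  by_contra hinf
  obtain ⟨x, hxK, hx⟩ := Set.Infinite.exists_accPt_of_subset_isCompact hinf hK (fun z hz => hz.1)
  rw [accPt_iff_frequently] at hx
  apply hord x hxK
  rw [analyticOrderAt_eq_top]
  have han : AnalyticAt ℂ f x := hf.analyticAt (hU.mem_nhds (hKU hxK))
  rw [← han.frequently_zero_iff_eventually_zero, frequently_nhdsWithin_iff]
  exact hx.mono fun y hy => ⟨hy.2.2, hy.1⟩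

lemma exists_factor {f : ℂ → ℂ} {U K : Set ℂ} (hU : IsOpen U) (hf : DifferentiableOn ℂ f U)
    (hK : IsCompact K) (hKU : K ⊆ U) (hord : ∀ z ∈ K, analyticOrderAt f z ≠ ⊤) :
    ∃ S : Finset ℂ, (∀ z, z ∈ S ↔ z ∈ K ∧ f z = 0) ∧ ∃ h : ℂ → ℂ, DifferentiableOn ℂ h U ∧
      (∀ z ∈ K, h z ≠ 0) ∧
      ∀ z ∈ U, f z = (∏ w ∈ S, (z - w) ^ (analyticOrderAt f w).toNat) * h z := by
  have hfin := finite_zeros hU hf hK hKU hord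
  set S := hfin.toFinset with hS
  have hmem : ∀ z, z ∈ S ↔ z ∈ K ∧ f z = 0 := fun z => by simp [hS]
  have hloc : ∀ a ∈ S, ∃ g : ℂ → ℂ, AnalyticAt ℂ g a ∧ g a ≠ 0 ∧
      ∀ᶠ z in 𝓝 a, f z = (z - a) ^ (analyticOrderAt f a).toNat * g z := by
    intro a ha
    have ha' := (hmem a).1 ha
    have han : AnalyticAt ℂ f a := hf.analyticAt (hU.mem_nhds (hKU ha'.1))
    obtain ⟨g, h1, h2, h3⟩ := han.analyticOrderAt_ne_top.1 (hord a ha'.1)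
    exact ⟨g, h1, h2, h3⟩
  choose! g hg1 hg2 hg3 using hloc
  set n : ℂ → ℕ := fun w => (analyticOrderAt f w).toNat with hn
  set h : ℂ → ℂ := fun z => if z ∈ S then g z z / ∏ w ∈ S.erase z, (z - w) ^ n w
    else f z / ∏ w ∈ S, (z - w) ^ n w with hh
  have hprod : ∀ z, z ∉ S → ∏ w ∈ S, (z - w) ^ n w ≠ 0 := by
    intro z hz
    refine Finset.prod_ne_zero_iff.2 fun w hw => pow_ne_zero _ (sub_ne_zero.2 ?_)
    rintro rfl; exact hz hw
  have hprod' : ∀ z, ∏ w ∈ S.erase z, (z - w) ^ n w ≠ 0 := by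
    intro z
    refine Finset.prod_ne_zero_iff.2 fun w hw => pow_ne_zero _ (sub_ne_zero.2 ?_)
    rintro rfl; exact Finset.notMem_erase _ _ hw
  refine ⟨S, hmem, h, ?_, ?_, ?_⟩
  · intro z hz
    apply DifferentiableAt.differentiableWithinAt
    by_cases hzS : z ∈ S
    · have hev : h =ᶠ[𝓝 z] fun x => g z x / ∏ w ∈ S.erase z, (x - w) ^ n w := by
        have hne : ∀ᶠ x in 𝓝 z, x ∉ S.erase z := by
          have : IsOpen ((↑(S.erase z) : Set ℂ)ᶜ) := (Finset.finite_toSet _).isClosed.isOpen_compl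
          exact this.mem_nhds (by simp)
        filter_upwards [hg3 z hzS, hne] with x hx hxne
        by_cases hxz : x = z
        · subst hxz; simp [hh, hzS]
        · have hxS : x ∉ S := fun h' => hxne (Finset.mem_erase.2 ⟨hxz, h'⟩)
          simp only [hh, hxS, if_false]
          rw [hx, ← Finset.mul_prod_erase S _ hzS]
          have := pow_ne_zero (n z) (sub_ne_zero.2 hxz)
          rw [mul_div_mul_left _ _ this]
      refine DifferentiableAt.congr_of_eventuallyEq ?_ hev
      exact (hg1 z hzS).differentiableAt.div (by fun_prop) (hprod' z)
    · have hev : h =ᶠ[𝓝 z] fun x => f x / ∏ w ∈ S, (x - w) ^ n w := by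
        have : IsOpen ((↑S : Set ℂ)ᶜ) := (Finset.finite_toSet _).isClosed.isOpen_compl
        filter_upwards [this.mem_nhds (by simpa using hzS)] with x hx
        have hx' : x ∉ S := by simpa using hx
        simp [hh, hx']
      refine DifferentiableAt.congr_of_eventuallyEq ?_ hev
      exact (hf.differentiableAt (hU.mem_nhds hz)).div (by fun_prop) (hprod z hzS)
  · intro z hz
    by_cases hzS : z ∈ S
    · simp only [hh, hzS, if_true]
      exact div_ne_zero (hg2 z hzS) (hprod' z)
    · simp only [hh, hzS, if_false]
      refine div_ne_zero ?_ (hprod z hzS)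
      intro h0; exact hzS ((hmem z).2 ⟨hz, h0⟩)
  · intro z hz
    by_cases hzS : z ∈ S
    · have h0 : f z = 0 := ((hmem z).1 hzS).2
      have hpos : n z ≠ 0 := by
        have han : AnalyticAt ℂ f z := hf.analyticAt (hU.mem_nhds hz)
        have h1 : analyticOrderAt f z ≠ 0 := by
          rw [Ne, han.analyticOrderAt_eq_zero]; simpa using h0
        simp only [hn]
        intro h2
        rcases ENat.toNat_eq_zero.1 h2 with h3 | h3
        · exact h1 h3
        · exact hord z ((hmem z).1 hzS).1 h3
      rw [h0, Finset.prod_eq_zero hzS (by rw [sub_self]; exact zero_pow hpos), zero_mul]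
    · simp only [hh, hzS, if_false]
      exact (mul_div_cancel₀ _ (hprod z hzS)).symm

lemma circle_sum {f : ℂ → ℂ} {U : Set ℂ} {c : ℂ} {R : ℝ} (hR : 0 < R) (hU : IsOpen U)
    (hf : DifferentiableOn ℂ f U) (hKU : closedBall c R ⊆ U)
    (hord : ∀ z ∈ closedBall c R, analyticOrderAt f z ≠ ⊤) (hs : ∀ z ∈ sphere c R, f z ≠ 0) :
    (2 * Real.pi * I) * ((∑ᶠ z ∈ {z : ℂ | f z = 0 ∧ dist z c < R}, zeroOrder f z : ℕ) : ℂ) =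
      ∮ z in C(c, R), logDeriv f z := by
  obtain ⟨S, hS, h, hh, hh0, hfac⟩ := exists_factor hU hf (isCompact_closedBall c R) hKU hord
  have hset : {z : ℂ | f z = 0 ∧ dist z c < R} = ↑S := by
    ext z
    simp only [Set.mem_ofPred_eq, SetLike.mem_coe, hS, mem_closedBall]
    constructor
    · rintro ⟨h1, h2⟩; exact ⟨h2.le, h1⟩
    · rintro ⟨h1, h2⟩
      exact ⟨h2, lt_of_le_of_ne h1 fun h3 => hs z h3 h2⟩
  rw [hset, finsum_mem_coe_finset]
  have hSball : ∀ w ∈ S, w ∈ ball c R := by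
    intro w hw
    have : w ∈ (↑S : Set ℂ) := hw
    rw [← hset] at this
    exact this.2
  have hzo : ∀ w ∈ S, zeroOrder f w = (analyticOrderAt f w).toNat := by
    intro w hw
    have : AnalyticAt ℂ f w := hf.analyticAt (hU.mem_nhds (hKU ((hS w).1 hw).1))
    simp [zeroOrder, this]
  rw [Finset.sum_congr rfl hzo]
  set n : ℂ → ℕ := fun w => (analyticOrderAt f w).toNat with hn
  have hlog : ∀ z ∈ sphere c R, logDeriv f z = (∑ w ∈ S, (n w : ℂ) * (z - w)⁻¹) + logDeriv h z := by
    intro z hz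
    have hzU : z ∈ U := hKU (sphere_subset_closedBall hz)
    have hev : f =ᶠ[𝓝 z] fun x => (∏ w ∈ S, (x - w) ^ n w) * h x := by
      filter_upwards [hU.mem_nhds hzU] with x hx using hfac x hx
    have hne : ∀ w ∈ S, z - w ≠ 0 := by
      intro w hw h0
      have : z = w := sub_eq_zero.1 h0
      have h1 := hSball w hw
      rw [← this] at h1
      rw [mem_ball] at h1; rw [mem_sphere] at hz; linarith
    rw [logDeriv_apply, hev.deriv_eq, hev.eq_of_nhds, ← logDeriv_apply (fun x => (∏ w ∈ S, (x - w) ^ n w) * h x),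
      logDeriv_mul, logDeriv_prod]
    · congr 1
      refine Finset.sum_congr rfl fun w hw => ?_
      rw [logDeriv_fun_pow (by fun_prop), logDeriv_apply]
      simp
    · intro w hw; exact pow_ne_zero _ (hne w hw)
    · intro w hw; fun_prop
    · exact Finset.prod_ne_zero_iff.2 fun w hw => pow_ne_zero _ (hne w hw)
    · exact hh0 z (sphere_subset_closedBall hz)
    · fun_prop
    · exact hh.differentiableAt (hU.mem_nhds hzU)
  have hdh : DifferentiableOn ℂ (logDeriv h) (closedBall c R) := by
    intro z hz
    have h1 : AnalyticAt ℂ h z := hh.analyticAt (hU.mem_nhds (hKU hz))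
    exact (h1.deriv.differentiableAt.div h1.differentiableAt (hh0 z hz)).differentiableWithinAt
  have hIntg : CircleIntegrable (logDeriv h) c R :=
    (hdh.continuousOn.mono sphere_subset_closedBall).circleIntegrable hR.le
  have hzero : ∮ z in C(c, R), logDeriv h z = 0 := by
    refine Complex.circleIntegral_eq_zero_of_differentiable_on_off_countable hR.le
      Set.countable_empty hdh.continuousOn fun z hz => ?_
    exact hdh.differentiableAt (closedBall_mem_nhds_of_mem hz.1)
  have hci : ∀ w ∈ S, CircleIntegrable (fun z => (n w : ℂ) * (z - w)⁻¹) c R := by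
    intro w hw
    apply ContinuousOn.circleIntegrable hR.le
    refine ContinuousOn.mul continuousOn_const (ContinuousOn.inv₀ (by fun_prop) ?_)
    intro z hz h0
    have h1 := hSball w hw
    rw [← sub_eq_zero.1 h0] at h1
    rw [mem_ball] at h1; rw [mem_sphere] at hz; linarith
  rw [circleIntegral.integral_congr hR.le hlog, circleIntegral.integral_add ?_ hIntg, hzero, add_zero]
  · have : ∮ z in C(c, R), ∑ w ∈ S, (n w : ℂ) * (z - w)⁻¹
        = ∑ w ∈ S, ∮ z in C(c, R), (n w : ℂ) * (z - w)⁻¹ := by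
      exact circleIntegral.integral_fun_sum hci
    rw [this]
    push_cast
    rw [Finset.mul_sum]
    refine Finset.sum_congr rfl fun w hw => ?_
    rw [circleIntegral.integral_const_mul, circleIntegral.integral_sub_inv_of_mem_ball (hSball w hw)]
    ring
  · exact CircleIntegrable.fun_sum S hci

/-- Rouche. -/
lemma rouche {f g : ℂ → ℂ} {U : Set ℂ} {c : ℂ} {R : ℝ} (hR : 0 < R) (hU : IsOpen U)
    (hf : DifferentiableOn ℂ f U) (hg : DifferentiableOn ℂ g U) (hKU : closedBall c R ⊆ U)
    (hordf : ∀ z ∈ closedBall c R, analyticOrderAt f z ≠ ⊤)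
    (hordg : ∀ z ∈ closedBall c R, analyticOrderAt g z ≠ ⊤)
    (hs : ∀ z ∈ sphere c R, ‖f z - g z‖ < ‖g z‖) :
    ∑ᶠ z ∈ {z : ℂ | f z = 0 ∧ dist z c < R}, zeroOrder f z =
      ∑ᶠ z ∈ {z : ℂ | g z = 0 ∧ dist z c < R}, zeroOrder g z := by
  have hg0 : ∀ z ∈ sphere c R, g z ≠ 0 := by
    intro z hz h0
    have := hs z hz
    rw [h0, norm_zero] at this
    exact absurd this (not_lt.2 (norm_nonneg _))
  have hf0 : ∀ z ∈ sphere c R, f z ≠ 0 := by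
    intro z hz h0
    have := hs z hz
    rw [h0, zero_sub, norm_neg] at this
    exact lt_irrefl _ this
  have h1 := circle_sum hR hU hf hKU hordf hf0
  have h2 := circle_sum hR hU hg hKU hordg hg0
  have hanf : ∀ z ∈ sphere c R, AnalyticAt ℂ f z := fun z hz =>
    hf.analyticAt (hU.mem_nhds (hKU (sphere_subset_closedBall hz)))
  have hang : ∀ z ∈ sphere c R, AnalyticAt ℂ g z := fun z hz =>
    hg.analyticAt (hU.mem_nhds (hKU (sphere_subset_closedBall hz)))
  have hif : CircleIntegrable (logDeriv f) c R := by
    apply ContinuousOn.circleIntegrable hR.le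
    intro z hz
    exact ((hanf z hz).deriv.continuousAt.div (hanf z hz).continuousAt (hf0 z hz)).continuousWithinAt
  have hig : CircleIntegrable (logDeriv g) c R := by
    apply ContinuousOn.circleIntegrable hR.le
    intro z hz
    exact ((hang z hz).deriv.continuousAt.div (hang z hz).continuousAt (hg0 z hz)).continuousWithinAt
  have h3 : ∮ z in C(c, R), (logDeriv f z - logDeriv g z) = 0 := by
    refine circleIntegral.integral_eq_zero_of_hasDerivWithinAt (f := fun z => Complex.log (f z / g z))
      hR.le fun z hz => ?_
    apply HasDerivAt.hasDerivWithinAt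
    have hslit : f z / g z ∈ slitPlane := by
      have : ‖f z / g z - 1‖ < 1 := by
        rw [div_sub_one (hg0 z hz), norm_div, div_lt_one (norm_pos_iff.2 (hg0 z hz))]
        exact hs z hz
      have h4 := mem_slitPlane_of_norm_lt_one this
      simpa using h4
    have := (((hanf z hz).differentiableAt.hasDerivAt).div ((hang z hz).differentiableAt.hasDerivAt) (hg0 z hz)).clog hslit
    have h6 : logDeriv f z - logDeriv g z =
        (deriv f z * g z - f z * deriv g z) / g z ^ 2 / (f / g) z := by
      simp only [logDeriv_apply, Pi.div_apply]
      have := hf0 z hz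
      have := hg0 z hz
      field_simp
    rw [h6]
    exact this
  rw [circleIntegral.integral_sub hif hig, ← h1, ← h2, sub_eq_zero] at h3
  have h5 := mul_left_cancel₀ two_pi_I_ne_zero h3
  exact_mod_cast h5

end LerchAux

namespace LerchAux
open Complex Filter Topology Metric

lemma exists_log {h : ℂ → ℂ} {c : ℂ} {R : ℝ} (hR : 0 < R) (hh : DifferentiableOn ℂ h (ball c R))
    (h0 : ∀ z ∈ ball c R, h z ≠ 0) :
    ∃ l : ℂ → ℂ, DifferentiableOn ℂ l (ball c R) ∧ l c = 0 ∧
      ∀ z ∈ ball c R, h z = h c * exp (l z) := by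
  have hd : DifferentiableOn ℂ (logDeriv h) (ball c R) := by
    intro z hz
    have h1 : AnalyticAt ℂ h z := hh.analyticAt (isOpen_ball.mem_nhds hz)
    exact (h1.deriv.differentiableAt.div h1.differentiableAt (h0 z hz)).differentiableWithinAt
  obtain ⟨g, hg⟩ := hd.isExactOn_ball
  have hconst : ∀ z ∈ ball c R, h z * exp (-(g z)) = h c * exp (-(g c)) := by
    intro z hz
    have hder : ∀ x ∈ ball c R, HasDerivAt (fun z => h z * exp (-(g z))) 0 x := by
      intro x hx
      have h1 := (hh.differentiableAt (isOpen_ball.mem_nhds hx)).hasDerivAt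
      have h2 := h1.mul ((hg x hx).neg.cexp)
      have h3 : deriv h x * exp (-g x) + h x * (exp (-g x) * -logDeriv h x) = 0 := by
        rw [logDeriv_apply]
        have := h0 x hx
        field_simp
        ring
      rw [← h3]
      exact h2
    refine (convex_ball c R).is_const_of_fderivWithin_eq_zero (𝕜 := ℂ)
      (f := fun z => h z * exp (-(g z))) ?_ ?_ hz (mem_ball_self hR)
    · exact fun x hx => (hder x hx).differentiableAt.differentiableWithinAt
    · intro x hx
      rw [fderivWithin_of_isOpen isOpen_ball hx]
      ext
      simp [(hder x hx).deriv]
  refine ⟨fun z => g z - g c, ?_, by simp, ?_⟩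
  · exact fun x hx => ((hg x hx).differentiableAt.sub_const _).differentiableWithinAt
  · intro z hz
    have h1 := hconst z hz
    rw [exp_sub]
    rw [exp_neg, exp_neg] at h1
    have := exp_ne_zero (g z)
    have := exp_ne_zero (g c)
    field_simp at h1 ⊢
    rw [h1]

lemma min_modulus {f : ℂ → ℂ} {U : Set ℂ} {c : ℂ} {R M b : ℝ} (hR : 0 < R) (hU : IsOpen U)
    (hf : DifferentiableOn ℂ f U) (hKU : closedBall c (3 * R) ⊆ U)
    (hM : ∀ z ∈ closedBall c (3 * R), ‖f z‖ ≤ M) (hb : 0 < b) (hbc : b ≤ ‖f c‖) (hbM : b < M)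
    (hord : ∀ z ∈ closedBall c R, analyticOrderAt f z ≠ ⊤) :
    ∃ (S : Finset ℂ) (n : ℂ → ℕ), (2 : ℝ) ^ (∑ w ∈ S, n w) ≤ M / b ∧ S.card ≤ ∑ w ∈ S, n w ∧
      ∀ z ∈ closedBall c (R / 2),
        (∏ w ∈ S, ‖z - w‖ ^ n w) * (b / R ^ (∑ w ∈ S, n w) * (b / M) ^ 2) ≤ ‖f z‖ := by
  have hsub : closedBall c R ⊆ closedBall c (3 * R) := closedBall_subset_closedBall (by linarith)
  obtain ⟨S, hS, h, hh, hh0, hfac⟩ := exists_factor hU hf (isCompact_closedBall c R)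
    (hsub.trans hKU) hord
  set n : ℂ → ℕ := fun w => (analyticOrderAt f w).toNat with hn
  have hMpos : 0 < M := hb.trans hbM
  set N := ∑ w ∈ S, n w with hN
  have hnorm : ∀ z ∈ U, ‖f z‖ = (∏ w ∈ S, ‖z - w‖ ^ n w) * ‖h z‖ := by
    intro z hz
    rw [hfac z hz, norm_mul, norm_prod]
    simp [norm_pow]
    left; rfl
  have hSd : ∀ w ∈ S, dist w c ≤ R := fun w hw => ((hS w).1 hw).1
  have hcU : c ∈ U := hKU (mem_closedBall_self (by linarith))
  -- bound of h on the big sphere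
  have hsph : ∀ z ∈ sphere c (3 * R), ‖h z‖ ≤ M / (2 * R) ^ N := by
    intro z hz
    rw [le_div_iff₀ (by positivity)]
    refine le_trans ?_ (hM z (sphere_subset_closedBall hz))
    rw [hnorm z (hKU (sphere_subset_closedBall hz)), mul_comm]
    refine mul_le_mul_of_nonneg_right ?_ (norm_nonneg _)
    rw [hN, ← Finset.prod_pow_eq_pow_sum]
    refine Finset.prod_le_prod (fun w _ => by positivity) fun w hw => ?_
    refine pow_le_pow_left₀ (by positivity) ?_ _
    have h1 := hSd w hw
    have h2 : dist z c = 3 * R := hz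
    have h3 := dist_triangle z w c
    rw [← dist_eq_norm]
    linarith
  have hball : ∀ z ∈ closedBall c (3 * R), ‖h z‖ ≤ M / (2 * R) ^ N := by
    intro z hz
    refine Complex.norm_le_of_forall_mem_frontier_norm_le (isBounded_ball (x := c) (r := 3 * R))
      ?_ ?_ (z := z) ?_
    · refine DifferentiableOn.diffContOnCl ?_
      rw [closure_ball c (by positivity)]
      exact hh.mono hKU
    · intro z hz
      rw [frontier_ball c (by positivity)] at hz
      exact hsph z hz
    · rw [closure_ball c (by positivity)]
      exact hz
  have hc : b / R ^ N ≤ ‖h c‖ := by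
    rw [div_le_iff₀ (by positivity)]
    refine hbc.trans ?_
    rw [hnorm c hcU, mul_comm]
    refine mul_le_mul_of_nonneg_left ?_ (norm_nonneg _)
    rw [hN, ← Finset.prod_pow_eq_pow_sum]
    refine Finset.prod_le_prod (fun w _ => by positivity) fun w hw => ?_
    refine pow_le_pow_left₀ (by positivity) ?_ _
    rw [← dist_eq_norm, dist_comm]
    exact hSd w hw
  have h2N : (2 : ℝ) ^ N ≤ M / b := by
    have := hc.trans (hball c (mem_closedBall_self (by linarith)))
    rw [mul_pow, div_le_div_iff₀ (by positivity) (by positivity)] at this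
    rw [le_div_iff₀ hb]
    have hRN : 0 < R ^ N := by positivity
    nlinarith
  refine ⟨S, n, h2N, ?_, ?_⟩
  · rw [Finset.card_eq_sum_ones]
    refine Finset.sum_le_sum fun w hw => ?_
    have hw' := (hS w).1 hw
    have han : AnalyticAt ℂ f w := hf.analyticAt (hU.mem_nhds (hKU (hsub hw'.1)))
    have h1 : analyticOrderAt f w ≠ 0 := by
      rw [Ne, han.analyticOrderAt_eq_zero]; simpa using hw'.2
    rw [Nat.one_le_iff_ne_zero]
    intro h2
    rcases ENat.toNat_eq_zero.1 h2 with h3 | h3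
    · exact h1 h3
    · exact hord w hw'.1 h3
  · intro z hz
    have hzR : z ∈ ball c R := closedBall_subset_ball (by linarith) hz
    rw [hnorm z (hKU (hsub (ball_subset_closedBall hzR)))]
    refine mul_le_mul_of_nonneg_left ?_ (Finset.prod_nonneg fun w _ => by positivity)
    obtain ⟨l, hl, hl0, hlh⟩ := exists_log hR
      (hh.mono (ball_subset_closedBall.trans (hsub.trans hKU)))
      (fun z hz => hh0 z (ball_subset_closedBall hz))
    set T := Real.log (M / b) with hT
    have hTpos : 0 < T := Real.log_pos (by rwa [one_lt_div hb])
    have hcpos : 0 < ‖h c‖ := lt_of_lt_of_le (by positivity) hc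
    have hre : ∀ x ∈ ball c R, (l x).re ≤ T := by
      intro x hx
      have h1 := hball x (hsub (ball_subset_closedBall hx))
      rw [hlh x hx, norm_mul, norm_exp] at h1
      rw [hT, Real.le_log_iff_exp_le (by positivity)]
      have h2 : b / R ^ N * Real.exp (l x).re ≤ M / (2 * R) ^ N :=
        le_trans (mul_le_mul_of_nonneg_right hc (Real.exp_pos _).le) h1
      have h3 : M / (2 * R) ^ N ≤ M / R ^ N := by
        refine div_le_div_of_nonneg_left hMpos.le (by positivity) ?_
        exact pow_le_pow_left₀ hR.le (by linarith) _
      have h4 := h2.trans h3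
      rw [div_mul_eq_mul_div, div_le_div_iff_of_pos_right (by positivity)] at h4
      rw [le_div_iff₀ hb]
      linarith
    have hBC := Complex.borelCaratheodory_zero (f := fun x => l (x + c)) (M := T) (R := R)
      (z := z - c) hTpos ?_ ?_ hR ?_ (by simpa using hl0)
    · simp only [sub_add_cancel] at hBC
      have hzc : ‖z - c‖ ≤ R / 2 := by rwa [← dist_eq_norm]
      have h5 : ‖l z‖ ≤ 2 * T := by
        refine hBC.trans ?_
        rw [div_le_iff₀ (by linarith)]
        nlinarith
      rw [hlh z hzR, norm_mul, norm_exp]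
      refine mul_le_mul hc ?_ (by positivity) hcpos.le
      have h6 : -(2 * T) ≤ (l z).re := by
        have := (abs_le.1 (Complex.abs_re_le_norm (l z))).1
        linarith
      refine le_trans (le_of_eq ?_) (Real.exp_le_exp.2 h6)
      have h7 : -(2 * T) = 2 * Real.log (b / M) := by
        rw [hT, Real.log_div hMpos.ne' hb.ne', Real.log_div hb.ne' hMpos.ne']; ring
      rw [h7, two_mul, Real.exp_add, Real.exp_log (by positivity)]; ring
    · intro x hx
      have hx' : x + c ∈ ball c R := by
        rw [mem_ball, dist_eq_norm]; simpa using hx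
      have h8 : DifferentiableAt ℂ l (x + c) := hl.differentiableAt (isOpen_ball.mem_nhds hx')
      exact (DifferentiableAt.fun_comp' x h8 (by fun_prop)).differentiableWithinAt
    · intro x hx
      have hx' : x + c ∈ ball c R := by
        rw [mem_ball, dist_eq_norm]; simpa using hx
      exact hre _ hx'
    · rw [mem_ball, dist_eq_norm]; simpa [← dist_eq_norm] using hzR

end LerchAux

namespace LerchAux
open Complex Filter Topology Metric

/-- Iterated forward difference of `x ↦ x ^ (-s)`. -/
noncomputable def Dl : ℕ → ℂ → ℝ → ℂ
  | 0, s, x => (x : ℂ) ^ (-s)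
  | K + 1, s, x => Dl K s (x + 1) - Dl K s x

lemma Dl_differentiable (K : ℕ) {x : ℝ} (hx : 0 < x) : Differentiable ℂ (fun s => Dl K s x) := by
  induction K generalizing x with
  | zero =>
    intro s
    simp only [Dl]
    exact (differentiableAt_id.neg).const_cpow (Or.inl (by exact_mod_cast hx.ne'))
  | succ K ih =>
    simp only [Dl]
    exact (ih (by linarith)).sub (ih hx)

lemma Dl_hasDerivAt (K : ℕ) (s : ℂ) {x : ℝ} (hx : 0 < x) :
    HasDerivAt (fun y : ℝ => Dl K s y) (-s * Dl K (s + 1) x) x := by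
  induction K generalizing x with
  | zero =>
    simp only [Dl]
    have h1 : HasDerivAt (fun z : ℂ => z ^ (-s)) (-s * (x : ℂ) ^ (-s - 1)) (x : ℂ) := by
      have := (hasDerivAt_id (x : ℂ)).cpow_const (c := -s) (Or.inl (by simpa using hx))
      simpa using this
    have h2 := h1.comp_ofReal
    rw [neg_add']
    exact h2
  | succ K ih =>
    simp only [Dl]
    have h1 := (ih (x := x + 1) (by linarith)).comp_add_const x 1
    have := h1.sub (ih hx)
    rw [mul_sub]
    exact this

lemma Dl_bound (K : ℕ) (s : ℂ) (hs : 0 ≤ s.re + K) {x : ℝ} (hx : 0 < x) :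
    ‖Dl K s x‖ ≤ (∏ j ∈ Finset.range K, ‖s + j‖) * x ^ (-(s.re + K)) := by
  induction K generalizing s x with
  | zero =>
    simp only [Dl]
    rw [norm_cpow_eq_rpow_re_of_pos hx]
    simp
  | succ K ih =>
    simp only [Dl]
    have hb : ∀ y ∈ Set.Icc x (x + 1), ‖-s * Dl K (s + 1) y‖ ≤
        (∏ j ∈ Finset.range (K + 1), ‖s + j‖) * x ^ (-(s.re + (K + 1 : ℕ))) := by
      intro y hy
      have hy0 : 0 < y := lt_of_lt_of_le hx hy.1
      have h1 := ih (s + 1) (by push_cast at hs; simp; linarith) hy0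
      rw [norm_mul, norm_neg, Finset.prod_range_succ']
      have h2 : (∏ j ∈ Finset.range K, ‖s + 1 + (j : ℂ)‖) =
          ∏ j ∈ Finset.range K, ‖s + ((j + 1 : ℕ) : ℂ)‖ := by
        refine Finset.prod_congr rfl fun j _ => ?_
        push_cast; ring_nf
      rw [h2] at h1
      have h3 : y ^ (-((s + 1).re + K)) ≤ x ^ (-(s.re + (K + 1 : ℕ))) := by
        have : -((s + 1).re + (K : ℝ)) = -(s.re + (K + 1 : ℕ)) := by simp; ring
        rw [this]
        exact Real.rpow_le_rpow_of_nonpos hx hy.1 (by linarith)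
      have h4 : (0 : ℝ) ≤ ∏ j ∈ Finset.range K, ‖s + ((j + 1 : ℕ) : ℂ)‖ :=
        Finset.prod_nonneg fun _ _ => norm_nonneg _
      calc ‖s‖ * ‖Dl K (s + 1) y‖ ≤ ‖s‖ * ((∏ j ∈ Finset.range K, ‖s + ((j + 1 : ℕ) : ℂ)‖) *
            x ^ (-(s.re + (K + 1 : ℕ)))) := by
            refine mul_le_mul_of_nonneg_left (h1.trans ?_) (norm_nonneg _)
            exact mul_le_mul_of_nonneg_left h3 h4
        _ = _ := by simp; ring
    have := (convex_Icc x (x + 1)).norm_image_sub_le_of_norm_hasDerivWithin_le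
      (f := fun y : ℝ => Dl K s y) (f' := fun y => -s * Dl K (s + 1) y) (x := x) (y := x + 1)
      (fun y hy => (Dl_hasDerivAt K s (lt_of_lt_of_le hx hy.1)).hasDerivWithinAt) hb
      ⟨le_refl _, by linarith⟩ ⟨by linarith, le_refl _⟩
    simpa using this

lemma Dl_bdd (K : ℕ) {x : ℝ} (hx : 0 < x) (B : ℝ) :
    ∃ C, 0 ≤ C ∧ ∀ s : ℂ, |s.re| ≤ B → ‖Dl K s x‖ ≤ C := by
  induction K generalizing x with
  | zero =>
    refine ⟨Real.exp (|Real.log x| * B), (Real.exp_pos _).le, fun s hs => ?_⟩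
    simp only [Dl]
    rw [norm_cpow_eq_rpow_re_of_pos hx, Real.rpow_def_of_pos hx]
    apply Real.exp_le_exp.2
    refine (le_abs_self _).trans ?_
    rw [abs_mul, neg_re, abs_neg]
    exact mul_le_mul_of_nonneg_left hs (abs_nonneg _)
  | succ K ih =>
    obtain ⟨C1, h1, h1'⟩ := ih (x := x + 1) (by linarith)
    obtain ⟨C2, h2, h2'⟩ := ih hx
    refine ⟨C1 + C2, by linarith, fun s hs => ?_⟩
    simp only [Dl]
    exact (norm_sub_le _ _).trans (add_le_add (h1' s hs) (h2' s hs))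

lemma summable_base {a : ℝ} (ha : 0 < a) : Summable (fun m : ℕ => (((m : ℝ) + a) / a) ^ (-2 : ℝ)) := by
  have h1 : Summable (fun m : ℕ => 1 / |(m : ℝ) + a| ^ (2 : ℝ)) :=
    (Real.summable_one_div_nat_add_rpow a 2).2 (by norm_num)
  refine (h1.mul_left (a ^ (2 : ℝ))).congr fun m => ?_
  have : 0 < (m : ℝ) + a := by positivity
  rw [abs_of_pos this, Real.rpow_neg (by positivity), Real.div_rpow this.le ha.le]
  have h3 : ((m : ℝ) + a) ^ (2 : ℝ) ≠ 0 := by positivity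
  have h4 : a ^ (2 : ℝ) ≠ 0 := by positivity
  field_simp

lemma Dl_bound' (K : ℕ) {a : ℝ} (ha : 0 < a) {B : ℝ} (s : ℂ) (hs : 2 ≤ s.re + K)
    (hB : s.re + K ≤ B) (m : ℕ) :
    ‖Dl K s (m + a)‖ ≤ (∏ j ∈ Finset.range K, ‖s + j‖) * Real.exp (|Real.log a| * B) *
      (((m : ℝ) + a) / a) ^ (-2 : ℝ) := by
  have hma : 0 < (m : ℝ) + a := by positivity
  refine (Dl_bound K s (by linarith) hma).trans ?_
  rw [mul_assoc]
  refine mul_le_mul_of_nonneg_left ?_ (Finset.prod_nonneg fun _ _ => norm_nonneg _)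
  have h1 : ((m : ℝ) + a) = a * (((m : ℝ) + a) / a) := by field_simp
  have h2 : 1 ≤ ((m : ℝ) + a) / a := by
    rw [one_le_div ha]; have : (0 : ℝ) ≤ m := by positivity
    linarith
  conv_lhs => rw [h1]
  rw [Real.mul_rpow ha.le (by positivity)]
  refine mul_le_mul ?_ ?_ (by positivity) (by positivity)
  · rw [Real.rpow_def_of_pos ha]
    apply Real.exp_le_exp.2
    refine (le_abs_self _).trans ?_
    rw [abs_mul, abs_neg]
    refine mul_le_mul_of_nonneg_left ?_ (abs_nonneg _)
    rw [abs_of_nonneg (by linarith)]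
    exact hB
  · exact Real.rpow_le_rpow_of_exponent_le h2 (by linarith)

noncomputable def Tl (e : ℂ) (a : ℝ) (K : ℕ) (s : ℂ) : ℂ := ∑' m : ℕ, e ^ m * Dl K s (m + a)

lemma Tl_summable {e : ℂ} (he : ‖e‖ = 1) {a : ℝ} (ha : 0 < a) (K : ℕ) (s : ℂ) (hs : 2 ≤ s.re + K) :
    Summable (fun m : ℕ => e ^ m * Dl K s (m + a)) := by
  refine Summable.of_norm_bounded ((summable_base ha).mul_left
    ((∏ j ∈ Finset.range K, ‖s + j‖) * Real.exp (|Real.log a| * (s.re + K)))) fun m => ?_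
  rw [norm_mul, norm_pow, he, one_pow, one_mul]
  exact Dl_bound' K ha s hs le_rfl m

lemma Tl_rec {e : ℂ} (he : ‖e‖ = 1) {a : ℝ} (ha : 0 < a) (K : ℕ) (s : ℂ) (hs : 2 ≤ s.re + K) :
    (1 - e) * Tl e a K s = Dl K s a + e * Tl e a (K + 1) s := by
  have h1 := Tl_summable he ha K s hs
  have h2 : Tl e a K s = Dl K s a + ∑' m : ℕ, e ^ (m + 1) * Dl K s ((m : ℝ) + a + 1) := by
    rw [Tl, h1.tsum_eq_zero_add]
    congr 1
    · simp
    · refine tsum_congr fun m => ?_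
      push_cast; ring_nf
  have h1' : Summable (fun m : ℕ => e ^ (m + 1) * Dl K s ((m : ℝ) + a + 1)) := by
    have := (summable_nat_add_iff 1).2 h1
    refine this.congr fun m => ?_
    push_cast; ring_nf
  have h3 : e * Tl e a (K + 1) s = (∑' m : ℕ, e ^ (m + 1) * Dl K s ((m : ℝ) + a + 1)) - e * Tl e a K s := by
    rw [Tl, Tl, ← tsum_mul_left, ← tsum_mul_left, ← h1'.tsum_sub (h1.mul_left e)]
    refine tsum_congr fun m => ?_
    simp only [Dl]; ring
  rw [h3, sub_mul, one_mul]
  nth_rw 1 [h2]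
  ring

noncomputable def Pl (e : ℂ) (a : ℝ) : ℕ → ℂ → ℂ
  | 0, _ => 0
  | K + 1, s => (1 - e) * Pl e a K s + e ^ K * Dl K s a

lemma Pl_differentiable (e : ℂ) {a : ℝ} (ha : 0 < a) (K : ℕ) : Differentiable ℂ (Pl e a K) := by
  induction K with
  | zero => exact differentiable_const _
  | succ K ih =>
    have := Dl_differentiable K ha
    have h : Pl e a (K+1) = fun s => (1 - e) * Pl e a K s + e ^ K * Dl K s a := by
      funext s; rfl
    rw [h]
    exact (ih.const_mul _).add (this.const_mul _)

lemma Pl_bdd (e : ℂ) {a : ℝ} (ha : 0 < a) (K : ℕ) (B : ℝ) :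
    ∃ C, 0 ≤ C ∧ ∀ s : ℂ, |s.re| ≤ B → ‖Pl e a K s‖ ≤ C := by
  induction K with
  | zero => exact ⟨0, le_rfl, fun s _ => by simp [Pl]⟩
  | succ K ih =>
    obtain ⟨C1, h1, h1'⟩ := ih
    obtain ⟨C2, h2, h2'⟩ := Dl_bdd K ha B
    refine ⟨‖1 - e‖ * C1 + ‖e ^ K‖ * C2, by positivity, fun s hs => ?_⟩
    simp only [Pl]
    refine (norm_add_le _ _).trans ?_
    rw [norm_mul, norm_mul]
    gcongr
    · exact h1' s hs
    · exact h2' s hs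

lemma Pl_id {e : ℂ} (he : ‖e‖ = 1) {a : ℝ} (ha : 0 < a) (K : ℕ) (s : ℂ) (hs : 2 ≤ s.re) :
    (1 - e) ^ K * Tl e a 0 s = Pl e a K s + e ^ K * Tl e a K s := by
  induction K with
  | zero => simp [Pl]
  | succ K ih =>
    have h := Tl_rec he ha K s (by have : (0 : ℝ) ≤ K := by positivity
                                   linarith)
    simp only [Pl]
    rw [pow_succ', mul_assoc, ih, mul_add, mul_left_comm, h]
    ring

lemma Tl_bound {e : ℂ} (he : ‖e‖ = 1) {a : ℝ} (ha : 0 < a) (K : ℕ) (B : ℝ) :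
    ∃ C, 0 ≤ C ∧ ∀ s : ℂ, 2 ≤ s.re + K → s.re + K ≤ B →
      ‖Tl e a K s‖ ≤ C * (‖s‖ + K) ^ K := by
  refine ⟨Real.exp (|Real.log a| * B) * ∑' m : ℕ, (((m : ℝ) + a) / a) ^ (-2 : ℝ), ?_, fun s h1 h2 => ?_⟩
  · refine mul_nonneg (Real.exp_pos _).le (tsum_nonneg fun m => by positivity)
  · have hs := (summable_base ha).mul_left
      ((∏ j ∈ Finset.range K, ‖s + j‖) * Real.exp (|Real.log a| * B))
    have h3 : ‖Tl e a K s‖ ≤ (∏ j ∈ Finset.range K, ‖s + j‖) * Real.exp (|Real.log a| * B) *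
        ∑' m : ℕ, (((m : ℝ) + a) / a) ^ (-2 : ℝ) := by
      rw [Tl, ← tsum_mul_left]
      refine tsum_of_norm_bounded hs.hasSum fun m => ?_
      rw [norm_mul, norm_pow, he, one_pow, one_mul]
      exact Dl_bound' K ha s h1 h2 m
    refine h3.trans ?_
    have h4 : (∏ j ∈ Finset.range K, ‖s + j‖) ≤ (‖s‖ + K) ^ K := by
      calc (∏ j ∈ Finset.range K, ‖s + j‖) ≤ ∏ j ∈ Finset.range K, (‖s‖ + K) := by
            refine Finset.prod_le_prod (fun _ _ => norm_nonneg _) fun j hj => ?_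
            refine (norm_add_le _ _).trans ?_
            have : (j : ℝ) ≤ K := by exact_mod_cast (Finset.mem_range.1 hj).le
            simpa using this
        _ = _ := by simp
    have h5 : (0 : ℝ) ≤ ∑' m : ℕ, (((m : ℝ) + a) / a) ^ (-2 : ℝ) := tsum_nonneg fun m => by positivity
    rw [mul_assoc, mul_comm]
    exact mul_le_mul_of_nonneg_left h4 (mul_nonneg (Real.exp_pos _).le h5)

lemma Tl_differentiableOn {e : ℂ} (he : ‖e‖ = 1) {a : ℝ} (ha : 0 < a) (K : ℕ) :
    DifferentiableOn ℂ (Tl e a K) {s : ℂ | 2 < s.re + K} := by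
  intro s hs
  set B := ‖s‖ + 1 with hB
  have hV : IsOpen ({z : ℂ | 2 < z.re + K} ∩ ball 0 B) :=
    (isOpen_lt continuous_const (by fun_prop)).inter isOpen_ball
  have hsV : s ∈ {z : ℂ | 2 < z.re + K} ∩ ball 0 B := ⟨hs, by simp [hB]⟩
  have hd : DifferentiableOn ℂ (Tl e a K) ({z : ℂ | 2 < z.re + K} ∩ ball 0 B) := by
    refine differentiableOn_tsum_of_summable_norm (u := fun m : ℕ => (((B + K) ^ K) *
      Real.exp (|Real.log a| * (B + K))) * (((m : ℝ) + a) / a) ^ (-2 : ℝ)) ((summable_base ha).mul_left _)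
      (fun m => ?_) hV ?_
    · exact ((Dl_differentiable K (by positivity)).const_mul _).differentiableOn
    · intro m w hw
      have hwB : ‖w‖ < B := by simpa using hw.2
      have hre : w.re ≤ B := ((le_abs_self _).trans (Complex.abs_re_le_norm w)).trans hwB.le
      rw [norm_mul, norm_pow, he, one_pow, one_mul]
      refine (Dl_bound' K ha w (B := B + K) (le_of_lt hw.1) (by linarith) m).trans ?_
      refine mul_le_mul_of_nonneg_right ?_ (by positivity)
      refine mul_le_mul_of_nonneg_right ?_ (by positivity)
      calc (∏ j ∈ Finset.range K, ‖w + j‖) ≤ ∏ j ∈ Finset.range K, (B + K) := by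
            refine Finset.prod_le_prod (fun _ _ => norm_nonneg _) fun j hj => ?_
            refine (norm_add_le _ _).trans ?_
            have : (j : ℝ) ≤ K := by exact_mod_cast (Finset.mem_range.1 hj).le
            have h2 : ‖(j : ℂ)‖ = j := by simp
            rw [h2]; linarith
        _ = _ := by simp
  exact (hd.differentiableAt (hV.mem_nhds hsV)).differentiableWithinAt

lemma poly_bound {e : ℂ} (he : ‖e‖ = 1) (he1 : e ≠ 1) {a : ℝ} (ha : 0 < a) {f : ℂ → ℂ}
    (hf : DifferentiableOn ℂ f {s : ℂ | 0 < s.im})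
    (hser : ∀ s : ℂ, 1 < s.re → 0 < s.im → f s = ∑' m : ℕ, e ^ m / ((m : ℂ) + a) ^ s) (B : ℝ) :
    ∃ (C : ℝ) (k : ℕ), 0 < C ∧ ∀ s : ℂ, |s.re| ≤ B → 1 ≤ s.im → ‖f s‖ ≤ C * s.im ^ k := by
  obtain ⟨K, hK⟩ := exists_nat_gt (|B| + 2)
  have hBabs := le_abs_self B
  have hBn := abs_nonneg B
  have he1' : (1 - e) ^ K ≠ 0 := pow_ne_zero _ (sub_ne_zero.2 (Ne.symm he1))
  set V : Set ℂ := {s : ℂ | 2 < s.re + K} ∩ {s : ℂ | 0 < s.im} with hVdef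
  have hVo : IsOpen V := (isOpen_lt continuous_const (by fun_prop)).inter
    (isOpen_lt continuous_const Complex.continuous_im)
  have hVc : Convex ℝ V := by
    refine Convex.inter ?_ (convex_halfSpace_im_gt 0)
    have : {s : ℂ | 2 < s.re + K} = {s : ℂ | 2 - K < s.re} := by
      ext s; simp only [Set.mem_ofPred_eq]; constructor <;> intro h <;> linarith
    rw [this]; exact convex_halfSpace_re_gt _
  have hid : Set.EqOn f (fun s => (Pl e a K s + e ^ K * Tl e a K s) / (1 - e) ^ K) V := by
    have hfa : AnalyticOnNhd ℂ f V := (hf.mono Set.inter_subset_right).analyticOnNhd hVo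
    have hga : AnalyticOnNhd ℂ (fun s => (Pl e a K s + e ^ K * Tl e a K s) / (1 - e) ^ K) V := by
      refine DifferentiableOn.analyticOnNhd ?_ hVo
      refine DifferentiableOn.div_const (DifferentiableOn.add
        (Pl_differentiable e ha K).differentiableOn (DifferentiableOn.const_mul ?_ _)) _
      exact (Tl_differentiableOn he ha K).mono Set.inter_subset_left
    have h3V : (3 + I : ℂ) ∈ V := by
      refine ⟨?_, by simp⟩
      simp only [Set.mem_ofPred_eq, add_re, I_re]
      norm_num; linarith
    refine hfa.eqOn_of_preconnected_of_eventuallyEq hga hVc.isPreconnected h3V ?_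
    have hW : IsOpen ({s : ℂ | 2 < s.re} ∩ {s : ℂ | 0 < s.im}) :=
      (isOpen_lt continuous_const Complex.continuous_re).inter
        (isOpen_lt continuous_const Complex.continuous_im)
    filter_upwards [hW.mem_nhds (x := 3 + I) ⟨by simp; norm_num, by simp⟩] with s hs
    have hs1 : 2 < s.re := hs.1
    rw [eq_div_iff he1', ← Pl_id he ha K s hs1.le, hser s (by linarith) hs.2, mul_comm]
    congr 1
    rw [Tl]
    refine tsum_congr fun m => ?_
    simp only [Dl]
    rw [cpow_neg, div_eq_mul_inv]
    push_cast; rfl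
  obtain ⟨C1, hC1, h1⟩ := Pl_bdd e ha K |B|
  obtain ⟨C2, hC2, h2⟩ := Tl_bound he ha K (|B| + K)
  set D := ‖(1 - e) ^ K‖ with hD
  have hDpos : 0 < D := norm_pos_iff.2 he1'
  refine ⟨(C1 + C2 * (|B| + 1 + K) ^ K) / D + 1, K, by positivity, fun s hs hs1 => ?_⟩
  have hs' : |s.re| ≤ |B| := hs.trans hBabs
  have habs := abs_le.1 hs'
  have hsV : s ∈ V := ⟨by simp only [Set.mem_ofPred_eq]; linarith, by simp only [Set.mem_ofPred_eq]; linarith⟩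
  rw [hid hsV, norm_div, ← hD]
  have him : (1 : ℝ) ≤ s.im ^ K := one_le_pow₀ hs1
  have hT := h2 s (by linarith) (by linarith)
  have hnorm : ‖s‖ + K ≤ (|B| + 1 + K) * s.im := by
    have h3 := Complex.norm_le_abs_re_add_abs_im s
    rw [abs_of_pos (by linarith : 0 < s.im)] at h3
    have : (0 : ℝ) ≤ K := by positivity
    nlinarith
  have hT' : ‖Tl e a K s‖ ≤ C2 * (|B| + 1 + K) ^ K * s.im ^ K := by
    refine hT.trans ?_
    rw [mul_assoc, ← mul_pow]
    gcongr
  calc ‖Pl e a K s + e ^ K * Tl e a K s‖ / D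
      ≤ (C1 * s.im ^ K + C2 * (|B| + 1 + K) ^ K * s.im ^ K) / D := by
        gcongr
        refine (norm_add_le _ _).trans (add_le_add ?_ ?_)
        · have := h1 s hs'
          nlinarith
        · rw [norm_mul, norm_pow, he, one_pow, one_mul]; exact hT'
    _ = (C1 + C2 * (|B| + 1 + K) ^ K) / D * s.im ^ K := by ring
    _ ≤ _ := by rw [add_mul]; linarith

end LerchAux

namespace LerchAux
open Complex Filter Topology Metric Asymptotics

/-- even kernel -/
noncomputable def kE (l μ : ℝ) (x : ℝ) : ℂ :=
  cexp (-Real.pi * l ^ 2 * x) * jacobiTheta₂ (μ + l * I * x) (I * x)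

/-- odd kernel -/
noncomputable def kO (l μ : ℝ) (x : ℝ) : ℂ :=
  cexp (-Real.pi * l ^ 2 * x) * (jacobiTheta₂' (μ + l * I * x) (I * x) / (2 * Real.pi * I)
    + l * jacobiTheta₂ (μ + l * I * x) (I * x))

lemma kE_hasSum (l μ : ℝ) {x : ℝ} (hx : 0 < x) :
    HasSum (fun n : ℤ => cexp (2 * Real.pi * I * μ * n) * Real.exp (-Real.pi * (n + l) ^ 2 * x))
      (kE l μ x) := by
  have h1 := hasSum_jacobiTheta₂_term (μ + l * I * x) (τ := I * x) (by rwa [I_mul_im, ofReal_re])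
  refine (h1.mul_left (cexp (-Real.pi * l ^ 2 * x))).congr_fun (fun n => ?_)
  rw [jacobiTheta₂_term, ofReal_exp, ← Complex.exp_add, ← Complex.exp_add]
  congr 1
  push_cast
  ring_nf
  simp only [I_sq]
  ring

lemma kO_hasSum (l μ : ℝ) {x : ℝ} (hx : 0 < x) :
    HasSum (fun n : ℤ => cexp (2 * Real.pi * I * μ * n) * ((n + l : ℝ) : ℂ) *
        Real.exp (-Real.pi * (n + l) ^ 2 * x))
      (kO l μ x) := by
  have h1 := hasSum_jacobiTheta₂_term (μ + l * I * x) (τ := I * x) (by rwa [I_mul_im, ofReal_re])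
  have h2 := hasSum_jacobiTheta₂'_term (μ + l * I * x) (τ := I * x) (by rwa [I_mul_im, ofReal_re])
  refine (((h2.div_const (2 * Real.pi * I)).add (h1.mul_left ↑l)).mul_left
    (cexp (-Real.pi * l ^ 2 * x))).congr_fun (fun n => ?_)
  rw [jacobiTheta₂'_term, mul_assoc (2 * Real.pi * I : ℂ) (n : ℂ) (jacobiTheta₂_term n _ _), mul_div_cancel_left₀ _ two_pi_I_ne_zero, ← add_mul,
    jacobiTheta₂_term]
  have : cexp (2 * Real.pi * I * μ * n) * Real.exp (-Real.pi * (n + l) ^ 2 * x) =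
     cexp (-Real.pi * l ^ 2 * x) * cexp (2 * ↑Real.pi * I * ↑n * (↑μ + ↑l * I * ↑x) + ↑Real.pi * I * ↑n ^ 2 * (I * ↑x)) := by
    rw [ofReal_exp, ← Complex.exp_add, ← Complex.exp_add]
    congr 1
    push_cast
    ring_nf
    simp only [I_sq]
    ring
  rw [mul_right_comm, this]
  push_cast
  ring

lemma kE_cont (l μ : ℝ) : ContinuousOn (kE l μ) (Set.Ioi 0) := by
  unfold kE
  refine fun x hx => ((Continuous.continuousAt ?_).mul ?_).continuousWithinAt
  · fun_prop
  · have hf : Continuous fun u : ℝ ↦ ((μ : ℂ) + l * I * u, I * (u:ℂ)) := by fun_prop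
    exact (continuousAt_jacobiTheta₂ (μ + l * I * x)
        (by rwa [I_mul_im, ofReal_re])).comp (f := fun u : ℝ ↦ ((μ : ℂ) + l * I * u, I * (u:ℂ))) hf.continuousAt

lemma kO_cont (l μ : ℝ) : ContinuousOn (kO l μ) (Set.Ioi 0) := by
  unfold kO
  refine fun x hx => ((Continuous.continuousAt ?_).mul ?_).continuousWithinAt
  · fun_prop
  · have hf : Continuous fun u : ℝ ↦ ((μ : ℂ) + l * I * u, I * (u:ℂ)) := by fun_prop
    apply ContinuousAt.add
    · exact ((continuousAt_jacobiTheta₂' (μ + l * I * x) (by rwa [I_mul_im, ofReal_re])).comp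
        (f := fun u : ℝ ↦ ((μ : ℂ) + l * I * u, I * (u:ℂ))) hf.continuousAt).div_const _
    · exact continuousAt_const.mul ((continuousAt_jacobiTheta₂ (μ + l * I * x)
        (by rwa [I_mul_im, ofReal_re])).comp (f := fun u : ℝ ↦ ((μ : ℂ) + l * I * u, I * (u:ℂ))) hf.continuousAt)

lemma norm_unit (μ : ℝ) (n : ℤ) : ‖cexp (2 * Real.pi * I * μ * n)‖ = 1 := by
  rw [show (2 * Real.pi * I * μ * n : ℂ) = ((2 * Real.pi * μ * n : ℝ) : ℂ) * I by push_cast; ring]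
  exact norm_exp_ofReal_mul_I _

lemma kE_top {l : ℝ} (hl0 : 0 < l) (hl1 : l < 1) (μ r : ℝ) :
    (fun x => kE l μ x - 0) =O[atTop] (fun x : ℝ => x ^ r) := by
  have hne : (l : UnitAddCircle) ≠ 0 := by
    rw [Ne, AddCircle.coe_eq_zero_iff_of_mem_Ico ⟨hl0.le, by simpa using hl1⟩]
    exact hl0.ne'
  obtain ⟨p, hp, hp'⟩ := HurwitzKernelBounds.isBigO_atTop_F_int_zero_sub (l : UnitAddCircle)
  rw [if_neg hne] at hp'
  refine IsBigO.trans ?_ (hp'.trans (isLittleO_exp_neg_mul_rpow_atTop hp r).isBigO)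
  refine Eventually.isBigO ?_
  filter_upwards [eventually_gt_atTop 0] with t ht
  rw [sub_zero, sub_zero, ← (kE_hasSum l μ ht).tsum_eq]
  refine (norm_tsum_le_tsum_norm (kE_hasSum l μ ht).summable.norm).trans (le_of_eq ?_)
  simp only [HurwitzKernelBounds.F_int, Function.Periodic.lift_coe]
  refine tsum_congr fun n => ?_
  rw [norm_mul, norm_unit, HurwitzKernelBounds.f_int, norm_real, Real.norm_of_nonneg (Real.exp_pos _).le]
  simp

lemma kO_top (l : ℝ) (μ r : ℝ) :
    (fun x => kO l μ x - 0) =O[atTop] (fun x : ℝ => x ^ r) := by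
  obtain ⟨p, hp, hp'⟩ := HurwitzKernelBounds.isBigO_atTop_F_int_one (l : UnitAddCircle)
  refine IsBigO.trans ?_ (hp'.trans (isLittleO_exp_neg_mul_rpow_atTop hp r).isBigO)
  refine Eventually.isBigO ?_
  filter_upwards [eventually_gt_atTop 0] with t ht
  rw [sub_zero, ← (kO_hasSum l μ ht).tsum_eq]
  refine (norm_tsum_le_tsum_norm (kO_hasSum l μ ht).summable.norm).trans (le_of_eq ?_)
  simp only [HurwitzKernelBounds.F_int, Function.Periodic.lift_coe]
  refine tsum_congr fun n => ?_
  rw [norm_mul, norm_mul, norm_unit, HurwitzKernelBounds.f_int, norm_real, norm_real, Real.norm_of_nonneg (Real.exp_pos _).le]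
  simp

lemma pref {x : ℝ} (hx : 0 < x) : 1 / (-I * (I * ((1 / x : ℝ) : ℂ))) ^ (1 / 2 : ℂ) = ((x ^ (1/2 : ℝ) : ℝ) : ℂ) := by
  have h2 : (-I * (I * ((1 / x : ℝ) : ℂ))) = ((1 / x : ℝ) : ℂ) := by
    rw [← mul_assoc, neg_mul, I_mul_I, neg_neg, one_mul]
  rw [h2, show (1/2 : ℂ) = ((1/2 : ℝ) : ℂ) by push_cast; rfl, ← ofReal_cpow (by positivity)]
  rw [one_div x, Real.inv_rpow hx.le]
  push_cast
  simp

lemma kE_feq (l : ℝ) {x : ℝ} (hx : 0 < x) :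
    kE l l (1 / x) = cexp (-2 * Real.pi * I * l ^ 2) * ((x ^ (1/2 : ℝ) : ℝ) : ℂ) * kE l (-l) x := by
  have hx' : (x : ℂ) ≠ 0 := by exact_mod_cast hx.ne'
  rw [kE, jacobiTheta₂_functional_equation, pref hx, kE]
  have h1 : -1 / (I * ((1 / x : ℝ) : ℂ)) = I * x := by
    push_cast; field_simp; simp
  have h3 : (l + l * I * ((1 / x : ℝ) : ℂ)) / (I * ((1 / x : ℝ) : ℂ)) = -(((-l : ℝ) : ℂ) + l * I * x) := by
    push_cast; field_simp; ring_nf; simp only [I_sq]; ring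
  rw [h1, h3, jacobiTheta₂_neg_left]
  have h4 : cexp (-Real.pi * l ^ 2 * ((1 / x : ℝ) : ℂ)) * cexp (-Real.pi * I * (l + l * I * ((1 / x : ℝ) : ℂ)) ^ 2 / (I * ((1 / x : ℝ) : ℂ)))
      = cexp (-2 * Real.pi * I * l ^ 2) * cexp (-Real.pi * l ^ 2 * x) := by
    rw [← Complex.exp_add, ← Complex.exp_add]
    congr 1
    push_cast; field_simp; ring_nf; simp only [I_sq]; ring
  linear_combination (((x ^ (1/2 : ℝ) : ℝ) : ℂ) * jacobiTheta₂ (((-l : ℝ) : ℂ) + l * I * x) (I * x)) * h4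

lemma kO_feq (l : ℝ) {x : ℝ} (hx : 0 < x) :
    kO l l (1 / x) = (I * cexp (-2 * Real.pi * I * l ^ 2)) * ((x ^ (3/2 : ℝ) : ℝ) : ℂ) * kO l (-l) x := by
  have hx' : (x : ℂ) ≠ 0 := by exact_mod_cast hx.ne'
  rw [kO, jacobiTheta₂_functional_equation, jacobiTheta₂'_functional_equation, pref hx, kO]
  have h1 : -1 / (I * ((1 / x : ℝ) : ℂ)) = I * x := by
    push_cast; field_simp; simp
  have h3 : (l + l * I * ((1 / x : ℝ) : ℂ)) / (I * ((1 / x : ℝ) : ℂ)) = -(((-l : ℝ) : ℂ) + l * I * x) := by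
    push_cast; field_simp; ring_nf; simp only [I_sq]; ring
  rw [h1, h3, jacobiTheta₂_neg_left, jacobiTheta₂'_neg_left]
  have h4 : cexp (-Real.pi * l ^ 2 * ((1 / x : ℝ) : ℂ)) * cexp (-Real.pi * I * (l + l * I * ((1 / x : ℝ) : ℂ)) ^ 2 / (I * ((1 / x : ℝ) : ℂ)))
      = cexp (-2 * Real.pi * I * l ^ 2) * cexp (-Real.pi * l ^ 2 * x) := by
    rw [← Complex.exp_add, ← Complex.exp_add]
    congr 1
    push_cast; field_simp; ring_nf; simp only [I_sq]; ring
  have h5 : ((x ^ (3/2 : ℝ) : ℝ) : ℂ) = x * ((x ^ (1/2 : ℝ) : ℝ) : ℂ) := by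
    rw [← ofReal_mul]; congr 1
    rw [show (3/2 : ℝ) = 1 + 1/2 by norm_num, Real.rpow_add hx, Real.rpow_one]
  rw [h5]
  generalize cexp (-Real.pi * I * (l + l * I * ((1 / x : ℝ) : ℂ)) ^ 2 / (I * ((1 / x : ℝ) : ℂ))) = A at *
  generalize cexp (-Real.pi * l ^ 2 * ((1 / x : ℝ) : ℂ)) = B at *
  generalize jacobiTheta₂ (((-l : ℝ) : ℂ) + l * I * x) (I * x) = T
  generalize jacobiTheta₂' (((-l : ℝ) : ℂ) + l * I * x) (I * x) = T'
  generalize ((x ^ (1/2 : ℝ) : ℝ) : ℂ) = X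
  have hpi : (Real.pi : ℂ) ≠ 0 := by exact_mod_cast Real.pi_ne_zero
  have h6 : X * A / (I * ((1 / x : ℝ) : ℂ)) * (-T' - 2 * Real.pi * I * (l + l * I * ((1 / x : ℝ) : ℂ)) * T) / (2 * Real.pi * I) + l * (X * A * T) = A * X * x * I * (T' / (2 * Real.pi * I) + l * T) := by
    push_cast; field_simp; ring_nf; simp only [I_sq, I_pow_three]; ring
  rw [h6]
  linear_combination (X * x * I * (T' / (2 * Real.pi * I) + l * T)) * h4

noncomputable def pE (l : ℝ) (hl0 : 0 < l) (hl1 : l < 1) : WeakFEPair ℂ where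
  f := kE l l
  g := kE l (-l)
  k := 1 / 2
  ε := cexp (-2 * Real.pi * I * l ^ 2)
  f₀ := 0
  g₀ := 0
  hf_int := (kE_cont l l).locallyIntegrableOn measurableSet_Ioi
  hg_int := (kE_cont l (-l)).locallyIntegrableOn measurableSet_Ioi
  hk := by norm_num
  hε := Complex.exp_ne_zero _
  h_feq x hx := by rw [smul_eq_mul]; exact kE_feq l hx
  hf_top r := kE_top hl0 hl1 l r
  hg_top r := kE_top hl0 hl1 (-l) r

noncomputable def pO (l : ℝ) : WeakFEPair ℂ where
  f := kO l l
  g := kO l (-l)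
  k := 3 / 2
  ε := I * cexp (-2 * Real.pi * I * l ^ 2)
  f₀ := 0
  g₀ := 0
  hf_int := (kO_cont l l).locallyIntegrableOn measurableSet_Ioi
  hg_int := (kO_cont l (-l)).locallyIntegrableOn measurableSet_Ioi
  hk := by norm_num
  hε := mul_ne_zero I_ne_zero (Complex.exp_ne_zero _)
  h_feq x hx := by rw [smul_eq_mul]; exact kO_feq l hx
  hf_top r := kO_top l l r
  hg_top r := kO_top l (-l) r

lemma kE_mellin_diff {l : ℝ} (hl0 : 0 < l) (hl1 : l < 1) :
    Differentiable ℂ (mellin (kE l l)) ∧ Differentiable ℂ (mellin (kE l (-l))) := by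
  have h : IsStrongFEPair (pE l hl0 hl1) := ⟨rfl, rfl⟩
  exact ⟨h.Λ_eq ▸ h.differentiable_Λ, h.symm.Λ_eq ▸ h.symm.differentiable_Λ⟩

lemma kO_mellin_diff (l : ℝ) :
    Differentiable ℂ (mellin (kO l l)) ∧ Differentiable ℂ (mellin (kO l (-l))) := by
  have h : IsStrongFEPair (pO l) := ⟨rfl, rfl⟩
  exact ⟨h.Λ_eq ▸ h.differentiable_Λ, h.symm.Λ_eq ▸ h.symm.differentiable_Λ⟩

lemma kE_mellin_feq {l : ℝ} (hl0 : 0 < l) (hl1 : l < 1) (s : ℂ) :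
    mellin (kE l l) ((1 - s) / 2) = cexp (-2 * Real.pi * I * l ^ 2) * mellin (kE l (-l)) (s / 2) := by
  have h : IsStrongFEPair (pE l hl0 hl1) := ⟨rfl, rfl⟩
  have := (pE l hl0 hl1).functional_equation (s / 2)
  rw [h.Λ_eq, h.symm.Λ_eq] at this
  have h2 : ((pE l hl0 hl1).k : ℂ) - s / 2 = (1 - s) / 2 := by
    simp only [pE]; push_cast; ring
  rw [h2] at this
  exact this

lemma kO_mellin_feq (l : ℝ) (s : ℂ) :
    mellin (kO l l) ((1 - s + 1) / 2) = I * cexp (-2 * Real.pi * I * l ^ 2) * mellin (kO l (-l)) ((s + 1) / 2) := by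
  have h : IsStrongFEPair (pO l) := ⟨rfl, rfl⟩
  have := (pO l).functional_equation ((s + 1) / 2)
  rw [h.Λ_eq, h.symm.Λ_eq] at this
  have h2 : ((pO l).k : ℂ) - (s + 1) / 2 = (1 - s + 1) / 2 := by
    simp only [pO]; push_cast; ring
  rw [h2] at this
  exact this
end LerchAux

namespace LerchAux
open Complex Filter Topology Metric Asymptotics

noncomputable def LE (l μ : ℝ) (s : ℂ) : ℂ := mellin (kE l μ) (s / 2) * (Gammaℝ s)⁻¹
noncomputable def LO (l μ : ℝ) (s : ℂ) : ℂ := mellin (kO l μ) ((s + 1) / 2) * (Gammaℝ (s + 1))⁻¹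

lemma LE_diff {l μ : ℝ} (h : Differentiable ℂ (mellin (kE l μ))) : Differentiable ℂ (LE l μ) := by
  unfold LE
  exact (h.comp (differentiable_id.div_const 2)).mul differentiable_Gammaℝ_inv

lemma LO_diff {l μ : ℝ} (h : Differentiable ℂ (mellin (kO l μ))) : Differentiable ℂ (LO l μ) := by
  unfold LO
  have h1 : Differentiable ℂ (fun s : ℂ => (s + 1) / 2) := by fun_prop
  have h2 : Differentiable ℂ (fun s : ℂ => s + 1) := by fun_prop
  exact (h.comp h1).mul (differentiable_Gammaℝ_inv.comp h2)

lemma summ (l μ : ℝ) {s : ℂ} (hs : 1 < s.re) :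
    Summable fun n : ℤ => ‖cexp (2 * Real.pi * I * μ * n)‖ / |(n:ℝ) + l| ^ s.re := by
  simp_rw [norm_unit]
  exact (Real.summable_one_div_int_add_rpow l s.re).mpr hs

lemma ne_l {l : ℝ} (hl0 : 0 < l) (hl1 : l < 1) (n : ℤ) : (n:ℝ) + l ≠ 0 := by
  intro h
  have h1 : (n:ℝ) < 0 := by linarith
  have h2 : (-1:ℝ) < n := by linarith
  have h1' : n < 0 := by exact_mod_cast h1
  have h2' : -1 < n := by exact_mod_cast h2
  omega

lemma LE_hasSum {l : ℝ} (hl0 : 0 < l) (hl1 : l < 1) (μ : ℝ) {s : ℂ} (hs : 1 < s.re) :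
    HasSum (fun n : ℤ => cexp (2 * Real.pi * I * μ * n) / (|(n:ℝ) + l| : ℝ) ^ s) (LE l μ s) := by
  have h := hasSum_mellin_pi_mul_sq (a := fun n : ℤ => cexp (2 * Real.pi * I * μ * n))
    (r := fun n : ℤ => (n:ℝ) + l) (F := kE l μ) (s := s) (by linarith)
    (fun t ht => by
      simp only [ne_l hl0 hl1, if_false]
      exact kE_hasSum l μ ht) (summ l μ hs)
  refine (h.mul_right (Gammaℝ s)⁻¹).congr_fun fun n => ?_
  have : Gammaℝ s ≠ 0 := Gammaℝ_ne_zero_of_re_pos (by linarith)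
  field_simp

lemma LO_hasSum (l μ : ℝ) {s : ℂ} (hs : 1 < s.re) :
    HasSum (fun n : ℤ => cexp (2 * Real.pi * I * μ * n) * (SignType.sign ((n:ℝ) + l) : ℂ) / (|(n:ℝ) + l| : ℝ) ^ s) (LO l μ s) := by
  have h := hasSum_mellin_pi_mul_sq' (a := fun n : ℤ => cexp (2 * Real.pi * I * μ * n))
    (r := fun n : ℤ => (n:ℝ) + l) (F := kO l μ) (s := s) (by linarith)
    (fun t ht => kO_hasSum l μ ht) (summ l μ hs)
  refine (h.mul_right (Gammaℝ (s + 1))⁻¹).congr_fun fun n => ?_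
  have : Gammaℝ (s + 1) ≠ 0 := Gammaℝ_ne_zero_of_re_pos (by rw [add_re, one_re]; linarith)
  field_simp

noncomputable def LP (l μ : ℝ) (s : ℂ) : ℂ := (LE l μ s + LO l μ s) / 2
noncomputable def LM (l μ : ℝ) (s : ℂ) : ℂ := (LE l μ s - LO l μ s) / 2

lemma LP_hasSum {l : ℝ} (hl0 : 0 < l) (hl1 : l < 1) (μ : ℝ) {s : ℂ} (hs : 1 < s.re) :
    HasSum (fun m : ℕ => cexp (2 * Real.pi * I * μ * m) / ((m:ℂ) + l) ^ s) (LP l μ s) := by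
  have h := ((LE_hasSum hl0 hl1 μ hs).add (LO_hasSum l μ hs)).div_const 2
  have hinj : Function.Injective (fun m : ℕ => (m : ℤ)) := fun a b h => by simpa using h
  have h2 := (hinj.hasSum_iff (fun n hn => ?_)).mpr h
  · refine h2.congr_fun fun m => ?_
    have hpos : 0 < (m:ℝ) + l := by positivity
    simp only [Function.comp, Int.cast_natCast]
    rw [sign_pos hpos, abs_of_pos hpos]
    push_cast
    simp
  · have hneg : n < 0 := by
      by_contra hc
      exact hn ⟨n.toNat, by simp; omega⟩
    have hneg' : (n:ℝ) ≤ -1 := by exact_mod_cast (by omega : n ≤ -1)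
    rw [sign_neg (by linarith)]
    simp only [SignType.coe_neg_one]
    ring

lemma LM_hasSum {l : ℝ} (hl0 : 0 < l) (hl1 : l < 1) (μ : ℝ) {s : ℂ} (hs : 1 < s.re) :
    HasSum (fun m : ℕ => cexp (-2 * Real.pi * I * μ * (m + 1)) / ((m:ℂ) + (1 - l : ℝ)) ^ s) (LM l μ s) := by
  have h := ((LE_hasSum hl0 hl1 μ hs).sub (LO_hasSum l μ hs)).div_const 2
  have hinj : Function.Injective (fun m : ℕ => Int.negSucc m) := fun a b h => by simpa using h
  have h2 := (hinj.hasSum_iff (fun n hn => ?_)).mpr h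
  · refine h2.congr_fun fun m => ?_
    have hneg : (Int.negSucc m : ℝ) + l < 0 := by
      push_cast; have : (0:ℝ) ≤ m := by positivity
      linarith
    simp only [Function.comp]
    rw [sign_neg hneg, abs_of_neg hneg]
    rw [show -((Int.negSucc m : ℝ) + l) = (m:ℝ) + (1 - l) by push_cast; ring]
    push_cast
    rw [show (2 * Real.pi * I * μ * (-(m+1)) : ℂ) = -2 * Real.pi * I * μ * (m + 1) by ring, SignType.coe_one]
    ring
  · have hpos : 0 ≤ n := by
      by_contra hc
      exact hn ⟨(-n-1).toNat, by simp only [Int.negSucc_eq]; omega⟩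
    have hpos' : (0:ℝ) ≤ n := by exact_mod_cast hpos
    rw [sign_pos (by linarith)]
    simp

lemma LP_feq {l : ℝ} (hl0 : 0 < l) (hl1 : l < 1) {s : ℂ} (hs : s.im ≠ 0) :
    LP l l (1 - s) = cexp (-2 * Real.pi * I * l ^ 2) * (Gammaℂ s / 2) * (cexp (Real.pi * I * s / 2) * LP l (-l) s
      + cexp (-(Real.pi * I * s / 2)) * LM l (-l) s) := by
  have hn : ∀ n : ℕ, s ≠ -n := fun n h => hs (by rw [h]; simp)
  have h1 : LE l l (1 - s) = cexp (-2 * Real.pi * I * l ^ 2) * (Gammaℂ s * cos (Real.pi * s / 2)) * LE l (-l) s := by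
    rw [LE, LE, kE_mellin_feq hl0 hl1, inv_Gammaℝ_one_sub hn]; ring
  have h2 : LO l l (1 - s) = I * cexp (-2 * Real.pi * I * l ^ 2) * (Gammaℂ s * sin (Real.pi * s / 2)) * LO l (-l) s := by
    rw [LO, LO, kO_mellin_feq, show 1 - s + 1 = 2 - s by ring, inv_Gammaℝ_two_sub hn]; ring
  have e1 : cexp (Real.pi * I * s / 2) = cos (Real.pi * s / 2) + sin (Real.pi * s / 2) * I := by
    rw [← Complex.exp_mul_I]; congr 1; ring
  have e2 : cexp (-(Real.pi * I * s / 2)) = cos (Real.pi * s / 2) - sin (Real.pi * s / 2) * I := by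
    rw [show -(Real.pi * I * s / 2) = (-(Real.pi * s / 2)) * I by ring, Complex.exp_mul_I, Complex.cos_neg, Complex.sin_neg]
    ring
  rw [LP, h1, h2, e1, e2, LP, LM]
  ring
end LerchAux

namespace LerchAux
open Complex Filter Topology Metric Asymptotics
open scoped ComplexConjugate

def UH : Set ℂ := {s : ℂ | 0 < s.im}

lemma UH_open : IsOpen UH := isOpen_lt continuous_const Complex.continuous_im

lemma UH_preconn : IsPreconnected UH := (convex_halfSpace_im_gt 0).isPreconnected

lemma UH_eq {f g : ℂ → ℂ} (hf : DifferentiableOn ℂ f UH) (hg : DifferentiableOn ℂ g UH)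
    (h : ∀ s : ℂ, 1 < s.re → f s = g s) : ∀ s ∈ UH, f s = g s := by
  have hz : (2 + I : ℂ) ∈ UH := by simp [UH]
  refine (hf.analyticOnNhd UH_open).eqOn_of_preconnected_of_eventuallyEq
    (hg.analyticOnNhd UH_open) UH_preconn hz ?_
  filter_upwards [(isOpen_lt continuous_const Complex.continuous_re).mem_nhds (show (1:ℝ) < (2 + I : ℂ).re by simp)] with s hs
  exact h s hs

lemma entire_eq {f g : ℂ → ℂ} (hf : Differentiable ℂ f) (hg : Differentiable ℂ g)
    (h : ∀ s : ℂ, 1 < s.re → f s = g s) : f = g := by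
  refine AnalyticOnNhd.eq_of_eventuallyEq (𝕜 := ℂ) (z₀ := 2) (fun z _ => hf.analyticAt z) (fun z _ => hg.analyticAt z) ?_
  filter_upwards [(isOpen_lt continuous_const Complex.continuous_re).mem_nhds (show (1:ℝ) < (2 : ℂ).re by simp)] with s hs
  exact h s hs

/-- reflection of an analytic function -/
noncomputable def refl (F : ℂ → ℂ) (z : ℂ) : ℂ := conj (F (1 - conj z))

lemma refl_diff {F : ℂ → ℂ} {z : ℂ} (h : DifferentiableAt ℂ F (1 - conj z)) :
    DifferentiableAt ℂ (refl F) z := by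
  have h1 : DifferentiableAt ℂ (fun v => F (1 - v)) (conj z) :=
    DifferentiableAt.comp (conj z) h ((differentiableAt_const _).sub differentiableAt_id)
  have h2 := h1.conj_conj
  rw [Complex.conj_conj] at h2
  exact h2

lemma refl_analytic {F : ℂ → ℂ} {z : ℂ} (h : AnalyticAt ℂ F (1 - conj z)) :
    AnalyticAt ℂ (refl F) z := by
  rw [analyticAt_iff_eventually_differentiableAt] at h ⊢
  have hc : Tendsto (fun u : ℂ => 1 - conj u) (𝓝 z) (𝓝 (1 - conj z)) :=
    (continuous_const.sub continuous_conj).tendsto z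
  filter_upwards [hc.eventually h] with u hu
  exact refl_diff hu

lemma refl_refl (F : ℂ → ℂ) : refl (refl F) = F := by
  funext z; simp [refl]

lemma refl_order {F : ℂ → ℂ} {z : ℂ} (h : AnalyticAt ℂ F (1 - conj z)) :
    analyticOrderAt (refl F) z = analyticOrderAt F (1 - conj z) := by
  have hc : Tendsto (fun u : ℂ => 1 - conj u) (𝓝 z) (𝓝 (1 - conj z)) :=
    (continuous_const.sub continuous_conj).tendsto z
  by_cases ht : analyticOrderAt F (1 - conj z) = ⊤
  · rw [ht]
    rw [analyticOrderAt_eq_top] at ht ⊢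
    filter_upwards [hc.eventually ht] with u hu
    simp [refl, hu]
  · obtain ⟨n, hn⟩ := ENat.ne_top_iff_exists.mp ht
    rw [← hn]
    obtain ⟨g, hg, hg0, hgf⟩ := (h.analyticOrderAt_eq_natCast).mp hn.symm
    rw [(refl_analytic h).analyticOrderAt_eq_natCast]
    refine ⟨fun u => (-1) ^ n * refl g u, analyticAt_const.mul (refl_analytic hg), ?_, ?_⟩
    · simp [refl, hg0]
    · filter_upwards [hc.eventually hgf] with u hu
      simp only [refl, hu, smul_eq_mul]
      rw [map_mul, map_pow]
      rw [← mul_assoc, ← mul_pow]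
      congr 2
      simp

lemma refl_zeroOrder {F : ℂ → ℂ} {z : ℂ} (h : AnalyticAt ℂ F (1 - conj z)) :
    zeroOrder (refl F) z = zeroOrder F (1 - conj z) := by
  rw [zeroOrder, zeroOrder, dif_pos h, dif_pos (refl_analytic h), refl_order h]

lemma dist_refl (z w : ℂ) : dist (1 - conj z) (1 - conj w) = dist z w := by
  rw [dist_sub_left, Complex.dist_conj_conj]

lemma UH_an {F : ℂ → ℂ} (hF : DifferentiableOn ℂ F UH) {z : ℂ} (hz : 0 < z.im) : AnalyticAt ℂ F z :=
  hF.analyticAt (UH_open.mem_nhds hz)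

lemma im_pos_of_dist {z ρ : ℂ} {r : ℝ} (hr : r ≤ ρ.im) (h : dist z ρ < r) : 0 < z.im := by
  have := (Complex.abs_im_le_norm (z - ρ))
  rw [← dist_eq_norm, Complex.sub_im] at this
  have := abs_le.mp this
  linarith

lemma reflect_sum {F : ℂ → ℂ} (hF : DifferentiableOn ℂ F UH) {ρ : ℂ} {r : ℝ} (hr : r ≤ ρ.im) :
    ∑ᶠ z ∈ {z : ℂ | refl F z = 0 ∧ dist z ρ < r}, zeroOrder (refl F) z =
    ∑ᶠ z ∈ {z : ℂ | F z = 0 ∧ dist z (1 - conj ρ) < r}, zeroOrder F z := by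
  refine finsum_mem_eq_of_bijOn (fun z => 1 - conj z) ⟨?_, ?_, ?_⟩ ?_
  · rintro z ⟨h1, h2⟩
    refine ⟨by simpa [refl] using h1, ?_⟩
    rw [dist_refl]; exact h2
  · intro a _ b _ h
    exact (starRingEnd ℂ).injective (by simpa using h)
  · rintro w ⟨h1, h2⟩
    refine ⟨1 - conj w, ⟨by simp [refl, h1], ?_⟩, by simp⟩
    rw [← dist_refl]; simpa using h2
  · rintro z ⟨h1, h2⟩
    refine refl_zeroOrder (UH_an hF ?_)
    simpa using im_pos_of_dist hr h2

lemma transfer_sum {F M K : ℂ → ℂ} (hM : DifferentiableOn ℂ M UH)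
    (hK : DifferentiableOn ℂ K UH) (hM0 : ∀ z ∈ UH, M z ≠ 0) (hFM : ∀ z ∈ UH, F z = M z * K z)
    {ρ : ℂ} {r : ℝ} (hr : r ≤ ρ.im) :
    ∑ᶠ z ∈ {z : ℂ | F z = 0 ∧ dist z ρ < r}, zeroOrder F z =
    ∑ᶠ z ∈ {z : ℂ | K z = 0 ∧ dist z ρ < r}, zeroOrder K z := by
  have hset : {z : ℂ | F z = 0 ∧ dist z ρ < r} = {z : ℂ | K z = 0 ∧ dist z ρ < r} := by
    ext z
    simp only [Set.mem_ofPred_eq]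
    refine and_congr_left fun h => ?_
    have hz : z ∈ UH := im_pos_of_dist hr h
    rw [hFM z hz]
    simp [hM0 z hz]
  rw [hset]
  refine finsum_mem_congr rfl fun z hz => ?_
  have hz' : z ∈ UH := im_pos_of_dist hr hz.2
  have hMa := UH_an hM hz'
  have hKa := UH_an hK hz'
  have hev : F =ᶠ[𝓝 z] M * K := by
    filter_upwards [UH_open.mem_nhds hz'] with u hu
    exact hFM u hu
  have hFa : AnalyticAt ℂ F z := (hMa.mul hKa).congr hev.symm
  rw [zeroOrder, zeroOrder, dif_pos hFa, dif_pos hKa, analyticOrderAt_congr hev, analyticOrderAt_mul hMa hKa,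
    hMa.analyticOrderAt_eq_zero.mpr (hM0 z hz'), zero_add]

lemma lerch_diffOn {l : ℝ} {F : ℂ → ℂ} (hF : IsLerch l l F) : DifferentiableOn ℂ F UH := by
  intro z hz
  refine (hF.1 z ?_).differentiableWithinAt
  rintro rfl
  simp [UH] at hz

lemma Gammaℂ_diff {s : ℂ} (hs : s.im ≠ 0) : DifferentiableAt ℂ Gammaℂ s := by
  have hn : ∀ n : ℕ, s ≠ -n := fun n h => hs (by rw [h]; simp)
  have h1 : DifferentiableAt ℂ (fun s : ℂ => 2 * (2 * Real.pi : ℂ) ^ (-s)) s := by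
    refine (DifferentiableAt.const_cpow differentiableAt_id.neg (Or.inl ?_)).const_mul 2
    simp [Real.pi_ne_zero]
  exact h1.mul (differentiableAt_Gamma s hn)

lemma Gammaℂ_ne {s : ℂ} (hs : s.im ≠ 0) : Gammaℂ s ≠ 0 := by
  have hn : ∀ n : ℕ, s ≠ -n := fun n h => hs (by rw [h]; simp)
  rw [Gammaℂ_def]
  refine mul_ne_zero (mul_ne_zero two_ne_zero ?_) (Gamma_ne_zero hn)
  rw [Ne, cpow_eq_zero_iff]
  simp [Real.pi_ne_zero]

lemma Gammaℂ_one_sub_diff {z : ℂ} (hz : z ∈ UH) : DifferentiableAt ℂ (fun z => Gammaℂ (1 - z)) z := by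
  have h : (1 - z).im ≠ 0 := by simp [ne_of_gt (show 0 < z.im from hz)]
  exact DifferentiableAt.comp z (Gammaℂ_diff h) ((differentiableAt_const _).sub differentiableAt_id)

lemma Gammaℂ_one_sub_ne {z : ℂ} (hz : z ∈ UH) : Gammaℂ (1 - z) ≠ 0 :=
  Gammaℂ_ne (by simp [ne_of_gt (show 0 < z.im from hz)])

/-- The case of the Riemann zeta function. -/
lemma zeta_case {F : ℂ → ℂ} (hF : IsLerch 1 1 F) :
    ∃ M : ℂ → ℂ, DifferentiableOn ℂ M UH ∧ (∀ z ∈ UH, M z ≠ 0) ∧ ∀ z ∈ UH, F z = M z * refl F z := by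
  have hz : DifferentiableOn ℂ riemannZeta UH := by
    intro z hz
    refine (differentiableAt_riemannZeta ?_).differentiableWithinAt
    rintro rfl
    simp [UH] at hz
  have hFz : ∀ s ∈ UH, F s = riemannZeta s := by
    refine UH_eq (lerch_diffOn hF) hz fun s hs => ?_
    rw [hF.2 s hs, zeta_eq_tsum_one_div_nat_add_one_cpow hs, lerchSeries]
    refine tsum_congr fun m => ?_
    have : cexp (2 * Real.pi * I * (1:ℝ) * m) = 1 := by
      rw [Complex.exp_eq_one_iff]
      exact ⟨m, by push_cast; ring⟩
    rw [this]; push_cast; rfl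
  refine ⟨fun z => Gammaℂ (1 - z) * cos (Real.pi * (1 - z) / 2), ?_, ?_, ?_⟩
  · intro z hz
    refine ((Gammaℂ_one_sub_diff hz).mul ?_).differentiableWithinAt
    fun_prop
  · intro z hz
    refine mul_ne_zero (Gammaℂ_one_sub_ne hz) ?_
    rw [Ne, Complex.cos_eq_zero_iff]
    rintro ⟨k, hk⟩
    have hpi : (Real.pi : ℂ) ≠ 0 := by exact_mod_cast Real.pi_ne_zero
    have h1 : z = ((-2 * k : ℝ) : ℂ) := by
      push_cast
      field_simp at hk
      linear_combination -hk
    have : z.im = 0 := by rw [h1, ofReal_im]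
    exact absurd this (ne_of_gt hz)
  · intro z hz
    have him : z.im ≠ 0 := ne_of_gt hz
    have hr : (1 - conj z) ∈ UH := by simpa [UH] using hz
    rw [hFz z hz, refl, hFz _ hr, ← riemannZeta_conj]
    have := riemannZeta_one_sub (s := 1 - z) (fun n h => him ?_) (fun h => him ?_)
    · rw [sub_sub_cancel] at this
      rw [this]
      simp [Gammaℂ_def]
    · have := congrArg Complex.im h
      simpa using this
    · have := congrArg Complex.im h
      simpa using this

lemma conj_term (l : ℝ) (hl : 0 < l) (m : ℕ) (s : ℂ) (k : ℂ) (hk : conj k = -k) :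
    conj (cexp k / ((m:ℂ) + (l:ℂ)) ^ (conj s)) = cexp (-k) / ((m:ℂ) + l) ^ s := by
  have hb : ((m:ℂ) + l) = ((m + l : ℝ) : ℂ) := by push_cast; rfl
  have hpos : 0 < (m:ℝ) + l := by positivity
  rw [map_div₀, ← Complex.exp_conj, hk, hb, Complex.cpow_conj, Complex.conj_conj, Complex.conj_ofReal]
  rw [Complex.arg_ofReal_of_nonneg hpos.le]
  exact Real.pi_ne_zero.symm

lemma conj_conj_diff {f : ℂ → ℂ} (hf : Differentiable ℂ f) : Differentiable ℂ (fun s => conj (f (conj s))) := by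
  intro s
  have := (hf (conj s)).conj_conj
  rw [Complex.conj_conj] at this
  exact this

lemma LP_diff {l μ : ℝ} (h1 : Differentiable ℂ (mellin (kE l μ))) (h2 : Differentiable ℂ (mellin (kO l μ))) :
    Differentiable ℂ (LP l μ) := ((LE_diff h1).add (LO_diff h2)).div_const 2

lemma LM_diff {l μ : ℝ} (h1 : Differentiable ℂ (mellin (kE l μ))) (h2 : Differentiable ℂ (mellin (kO l μ))) :
    Differentiable ℂ (LM l μ) := ((LE_diff h1).sub (LO_diff h2)).div_const 2

lemma LP_conj {l : ℝ} (hl0 : 0 < l) (hl1 : l < 1) (s : ℂ) : LP l (-l) s = conj (LP l l (conj s)) := by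
  have hE := kE_mellin_diff hl0 hl1
  have hO := kO_mellin_diff l
  refine congrFun (entire_eq (LP_diff hE.2 hO.2) (conj_conj_diff (LP_diff hE.1 hO.1)) fun s hs => ?_) s
  have h1 := (LP_hasSum hl0 hl1 l (s := conj s) (by simpa using hs))
  have h1' := h1.map (starRingEnd ℂ) Complex.continuous_conj
  refine (LP_hasSum hl0 hl1 (-l) hs).unique (h1'.congr_fun fun m => ?_)
  simp only [Function.comp]
  rw [conj_term l hl0 m s _ (by simp [map_ofNat])]
  congr 2
  push_cast; ring

lemma LM_conj {l : ℝ} (hl0 : 0 < l) (hl1 : l < 1) (s : ℂ) : LM l (-l) s = conj (LM l l (conj s)) := by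
  have hE := kE_mellin_diff hl0 hl1
  have hO := kO_mellin_diff l
  refine congrFun (entire_eq (LM_diff hE.2 hO.2) (conj_conj_diff (LM_diff hE.1 hO.1)) fun s hs => ?_) s
  have h1 := (LM_hasSum hl0 hl1 l (s := conj s) (by simpa using hs))
  have h1' := h1.map (starRingEnd ℂ) Complex.continuous_conj
  refine (LM_hasSum hl0 hl1 (-l) hs).unique (h1'.congr_fun fun m => ?_)
  simp only [Function.comp]
  rw [conj_term (1 - l) (by linarith) m s _ (by simp [map_ofNat])]
  congr 2
  push_cast; ring

lemma exp_l_ne {l : ℝ} (hl0 : 0 < l) (hl1 : l < 1) : cexp (2 * Real.pi * I * l) ≠ 1 := by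
  rw [Ne, Complex.exp_eq_one_iff]
  rintro ⟨n, hn⟩
  have h1 : (l : ℂ) = n := by
    have : (2 * Real.pi * I : ℂ) ≠ 0 := two_pi_I_ne_zero
    apply mul_left_cancel₀ this
    linear_combination hn
  have h2 : l = n := by exact_mod_cast h1
  rw [h2] at hl0 hl1
  have : 0 < n := by exact_mod_cast hl0
  have : n < 1 := by exact_mod_cast hl1
  omega

lemma exp_l_norm (l : ℝ) : ‖cexp (2 * Real.pi * I * l)‖ = 1 := by
  simpa using norm_unit l 1

lemma F_bound {l : ℝ} (hl0 : 0 < l) (hl1 : l < 1) {F : ℂ → ℂ} (hF : IsLerch l l F) (B : ℝ) :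
    ∃ (C : ℝ) (k : ℕ), 0 < C ∧ ∀ s : ℂ, |s.re| ≤ B → 1 ≤ s.im → ‖F s‖ ≤ C * s.im ^ k := by
  refine poly_bound (exp_l_norm l) (exp_l_ne hl0 hl1) hl0 (lerch_diffOn hF) (fun s hs _ => ?_) B
  rw [hF.2 s hs, lerchSeries]
  refine tsum_congr fun m => ?_
  rw [← Complex.exp_nat_mul]
  congr 2
  ring

lemma LM_bound {l : ℝ} (hl0 : 0 < l) (hl1 : l < 1) (B : ℝ) :
    ∃ (C : ℝ) (k : ℕ), 0 < C ∧ ∀ s : ℂ, |s.re| ≤ B → 1 ≤ s.im → ‖LM l l s‖ ≤ C * s.im ^ k := by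
  have hE := kE_mellin_diff hl0 hl1
  have hO := kO_mellin_diff l
  have hd := LM_diff hE.1 hO.1
  have hn : ‖(cexp (2 * Real.pi * I * l))⁻¹‖ = 1 := by rw [norm_inv, exp_l_norm]; simp
  have hne : (cexp (2 * Real.pi * I * l))⁻¹ ≠ 1 := by
    intro h; exact exp_l_ne hl0 hl1 (inv_eq_one.mp h)
  have hser : ∀ s : ℂ, 1 < s.re → cexp (2 * Real.pi * I * l) * LM l l s =
      ∑' m : ℕ, (cexp (2 * Real.pi * I * l))⁻¹ ^ m / ((m : ℂ) + (1 - l : ℝ)) ^ s := by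
    intro s hs
    refine ((LM_hasSum hl0 hl1 l hs).mul_left (cexp (2 * Real.pi * I * l))).tsum_eq.symm.trans ?_
    refine tsum_congr fun m => ?_
    rw [← Complex.exp_neg, ← Complex.exp_nat_mul, ← mul_div_assoc, ← Complex.exp_add]
    congr 2
    ring
  obtain ⟨C, k, hC, h⟩ := poly_bound hn hne (a := 1 - l) (by linarith)
    (f := fun s => cexp (2 * Real.pi * I * l) * LM l l s) ((hd.const_mul _).differentiableOn) (fun s hs _ => hser s hs) B
  · refine ⟨C, k, hC, fun s h1 h2 => ?_⟩
    have := h s h1 h2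
    rwa [norm_mul, exp_l_norm, one_mul] at this

lemma lerch_package {l : ℝ} (hl0 : 0 < l) (hl1 : l < 1) {F : ℂ → ℂ} (hF : IsLerch l l F) (B : ℝ) :
    ∃ (M E : ℂ → ℂ) (C : ℝ) (k : ℕ), DifferentiableOn ℂ M UH ∧ (∀ z ∈ UH, M z ≠ 0) ∧
      DifferentiableOn ℂ E UH ∧ (∀ z ∈ UH, F z = M z * (refl F z + E z)) ∧ 0 < C ∧
      ∀ z : ℂ, |z.re| ≤ B → 1 ≤ z.im → ‖E z‖ ≤ Real.exp (-Real.pi * z.im) * (C * z.im ^ k) := by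
  have hE := kE_mellin_diff hl0 hl1
  have hO := kO_mellin_diff l
  have hFL : ∀ s ∈ UH, F s = LP l l s := by
    refine UH_eq (lerch_diffOn hF) (LP_diff hE.1 hO.1).differentiableOn fun s hs => ?_
    rw [hF.2 s hs, lerchSeries, (LP_hasSum hl0 hl1 l hs).tsum_eq]
  obtain ⟨C, k, hC, hCk⟩ := LM_bound hl0 hl1 (B + 1)
  refine ⟨fun z => cexp (-2 * Real.pi * I * l ^ 2) * (Gammaℂ (1 - z) / 2) * cexp (Real.pi * I * (1 - z) / 2),
    fun z => cexp (-(Real.pi * I * (1 - z))) * LM l (-l) (1 - z), C, k, ?_, ?_, ?_, ?_, hC, ?_⟩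
  · intro z hz
    refine ((((Gammaℂ_one_sub_diff hz).div_const 2).const_mul _).mul ?_).differentiableWithinAt
    fun_prop
  · intro z hz
    exact mul_ne_zero (mul_ne_zero (Complex.exp_ne_zero _) (div_ne_zero (Gammaℂ_one_sub_ne hz) two_ne_zero)) (Complex.exp_ne_zero _)
  · have h := LM_diff hE.2 hO.2
    have h' : Differentiable ℂ (fun z : ℂ => LM l (-l) (1 - z)) :=
      h.comp ((differentiable_const _).sub differentiable_id)
    have h'' : Differentiable ℂ (fun z : ℂ => cexp (-(Real.pi * I * (1 - z)))) := by fun_prop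
    exact (h''.mul h').differentiableOn
  · intro z hz
    have him : (1 - z).im ≠ 0 := by simp [ne_of_gt (show 0 < z.im from hz)]
    have hr : (1 - conj z) ∈ UH := by simpa [UH] using hz
    have h1 := LP_feq hl0 hl1 him
    rw [sub_sub_cancel, ← hFL z hz, LP_conj hl0 hl1 (1 - z)] at h1
    rw [refl, hFL _ hr, h1]
    have h2 : conj (1 - z) = 1 - conj z := by simp
    have h3 : cexp (-(Real.pi * I * (1 - z) / 2)) = cexp (Real.pi * I * (1 - z) / 2) * cexp (-(Real.pi * I * (1 - z))) := by
      rw [← Complex.exp_add]; congr 1; ring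
    rw [h2, h3]
    ring
  · intro z hz1 hz2
    rw [norm_mul, LM_conj hl0 hl1, Complex.norm_conj, Complex.norm_exp]
    have h1 : (-(Real.pi * I * (1 - z))).re = -Real.pi * z.im := by simp
    rw [h1]
    have h2 := hCk (conj (1 - z)) (by
      simp only [Complex.conj_re, Complex.sub_re, Complex.one_re]
      rw [abs_le] at hz1 ⊢
      constructor <;> linarith) (by simpa using hz2)
    have h3 : (conj (1 - z)).im = z.im := by simp
    rw [h3] at h2
    gcongr
end LerchAux

namespace LerchAux
open Complex Filter Topology Metric Asymptotics
open scoped ComplexConjugate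

lemma choose_radius (S : Finset ℂ) (d : ℂ → ℝ) {x : ℝ} (hx : 0 < x) :
    ∃ j : ℕ, j ≤ S.card ∧ ∀ w ∈ S, x ≤ |x * (1 + 2 * j) - d w| := by
  by_contra hc
  push Not at hc
  choose! f hf1 hf2 using hc
  obtain ⟨i, hi, j, hj, hij, he⟩ := Finset.exists_ne_map_eq_of_card_lt_of_maps_to
    (s := Finset.range (S.card + 1)) (t := S) (f := f) (by simp) (fun j hj => hf1 j (by simpa [Nat.lt_succ_iff] using hj))
  have h1 := hf2 i (by simpa [Nat.lt_succ_iff] using hi)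
  have h2 := hf2 j (by simpa [Nat.lt_succ_iff] using hj)
  rw [he] at h1
  rw [abs_lt] at h1 h2
  rcases lt_or_gt_of_ne hij with h | h
  · have : (i:ℝ) + 1 ≤ j := by exact_mod_cast h
    nlinarith
  · have : (j:ℝ) + 1 ≤ i := by exact_mod_cast h
    nlinarith

lemma lower_bound {l : ℝ} (hl0 : 0 < l) (hl1 : l < 1) {F : ℂ → ℂ} (hF : IsLerch l l F) :
    ∃ n : ℕ, ∀ s : ℂ, s.re = ((n + 2 : ℕ) : ℝ) → 1 / 2 ≤ ‖F s‖ := by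
  have hsum : Summable fun m : ℕ => 1 / ((m:ℝ) + 1) ^ 2 := by
    have := (summable_nat_add_iff 1).mpr (Real.summable_one_div_nat_pow.mpr (one_lt_two : 1 < 2))
    simpa using this
  set T := ∑' m : ℕ, 1 / ((m:ℝ) + 1) ^ 2 with hT
  have hlim : Tendsto (fun n : ℕ => (1 / (1 + l)) ^ n * T) atTop (𝓝 (0 * T)) :=
    (tendsto_pow_atTop_nhds_zero_of_lt_one (by positivity) (by rw [div_lt_one (by positivity)]; linarith)).mul_const T
  rw [zero_mul] at hlim
  obtain ⟨n, hn⟩ := (hlim.eventually_lt_const (show (0:ℝ) < 1/2 by norm_num)).exists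
  refine ⟨n, fun s hs => ?_⟩
  have hs1 : 1 < s.re := by rw [hs]; push_cast; have : (0:ℝ) ≤ n := by positivity
                            linarith
  have hnorm : ∀ m : ℕ, ‖cexp (2 * Real.pi * I * l * m) / ((m : ℂ) + l) ^ s‖ = 1 / ((m:ℝ) + l) ^ (n + 2) := by
    intro m
    have h1 := norm_unit l m
    rw [Int.cast_natCast] at h1
    have hpos : 0 < (m:ℝ) + l := by positivity
    rw [norm_div, h1, show ((m:ℂ) + l) = ((m + l : ℝ) : ℂ) by push_cast; rfl,
      Complex.norm_cpow_eq_rpow_re_of_pos hpos, hs, Real.rpow_natCast]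
  have hb : ∀ m : ℕ, ‖cexp (2 * Real.pi * I * l * (m + 1 : ℕ)) / (((m + 1 : ℕ) : ℂ) + l) ^ s‖ ≤ (1 / (1 + l)) ^ n * (1 / ((m:ℝ) + 1) ^ 2) := by
    intro m
    rw [hnorm, pow_add, one_div_pow, ← one_div_mul_one_div]
    push_cast
    have hm0 : (0:ℝ) ≤ m := by positivity
    exact mul_le_mul
      (one_div_le_one_div_of_le (by positivity) (pow_le_pow_left₀ (by positivity) (by linarith) n))
      (one_div_le_one_div_of_le (by positivity) (pow_le_pow_left₀ (by positivity) (by linarith) 2))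
      (by positivity) (by positivity)
  have hsm : Summable fun m : ℕ => cexp (2 * Real.pi * I * l * m) / ((m : ℂ) + l) ^ s := by
    rw [← summable_nat_add_iff 1]
    exact Summable.of_norm_bounded (hsum.mul_left _) hb
  rw [hF.2 s hs1, lerchSeries, hsm.tsum_eq_zero_add]
  have h2 := tsum_of_norm_bounded (hsum.hasSum.mul_left _) hb
  have h3 := hnorm 0
  have h4 : (1:ℝ) ≤ 1 / (((0:ℕ):ℝ) + l) ^ (n + 2) := by
    rw [le_div_iff₀ (by positivity), one_mul]
    simpa using pow_le_one₀ hl0.le hl1.le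
  rw [← h3] at h4
  have h5 := norm_sub_le_norm_add (cexp (2 * Real.pi * I * l * (0:ℕ)) / (((0:ℕ) : ℂ) + l) ^ s) (∑' m : ℕ, cexp (2 * Real.pi * I * l * (m + 1 : ℕ)) / (((m + 1 : ℕ) : ℂ) + l) ^ s)
  linarith

lemma UH_order {F : ℂ → ℂ} (hF : DifferentiableOn ℂ F UH) {w : ℂ} (hw : w ∈ UH) (hw0 : F w ≠ 0) :
    ∀ z ∈ UH, analyticOrderAt F z ≠ ⊤ := by
  intro z hz h
  rw [analyticOrderAt_eq_top] at h
  exact hw0 ((hF.analyticOnNhd UH_open).eqOn_zero_of_preconnected_of_eventuallyEq_zero UH_preconn hz h hw)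

lemma eventual (R0 C D A C1 : ℝ) (hA : 0 < A) (p : ℕ) : ∃ g0 : ℝ, 0 < g0 ∧ ∀ g : ℝ, g0 ≤ g →
    R0 ≤ g ∧ C ≤ g ∧ 1 ≤ Real.log g ∧ 1 + C1 * Real.log g ≤ Real.log g ^ 2 ∧
    Real.log g ^ 3 ≤ A * g ∧ D * g ^ p < Real.exp g := by
  have h1 : ∀ᶠ g : ℝ in atTop, R0 ≤ g := eventually_ge_atTop _
  have h2 : ∀ᶠ g : ℝ in atTop, C ≤ g := eventually_ge_atTop _
  have h3 : ∀ᶠ g : ℝ in atTop, 1 ≤ Real.log g := Real.tendsto_log_atTop.eventually_ge_atTop _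
  have h4 : ∀ᶠ g : ℝ in atTop, |C1| + 1 ≤ Real.log g := Real.tendsto_log_atTop.eventually_ge_atTop _
  have h5 := ((Real.isLittleO_pow_log_id_atTop (n := 3)).bound hA)
  have h6 := ((Real.isLittleO_pow_exp_atTop (n := p)).bound (show 0 < 1 / (|D| + 1) by positivity))
  obtain ⟨g0, hg0⟩ := eventually_atTop.mp (h1.and (h2.and (h3.and (h4.and (h5.and h6)))))
  refine ⟨max g0 1, by positivity, fun g hg => ?_⟩
  have hg1 : 1 ≤ g := le_trans (le_max_right _ _) hg
  obtain ⟨a1, a2, a3, a4, a5, a6⟩ := hg0 g (le_trans (le_max_left _ _) hg)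
  refine ⟨a1, a2, a3, ?_, ?_, ?_⟩
  · have := le_abs_self C1
    nlinarith
  · simp only [id, Real.norm_eq_abs] at a5
    rw [abs_of_pos (show (0:ℝ) < g by linarith)] at a5
    exact (le_abs_self _).trans a5
  · simp only [Real.norm_eq_abs, Real.abs_exp, abs_pow] at a6
    rw [abs_of_pos (show (0:ℝ) < g by linarith), one_div, ← div_eq_inv_mul, le_div_iff₀ (by positivity)] at a6
    have hp : 0 < g ^ p := by positivity
    have := le_abs_self D
    nlinarith
end LerchAux

namespace LerchAux
open Complex Filter Topology Metric Asymptotics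
open scoped ComplexConjugate

lemma num_count {g : ℝ} (hg : 0 < g) (hL : 1 ≤ Real.log g) (k N : ℕ)
    (h : (2:ℝ) ^ N ≤ g ^ (k + 1) / (1 / 2)) : (N:ℝ) ≤ (2 * k + 3) * Real.log g := by
  have h1 : Real.log ((2:ℝ) ^ N) ≤ Real.log (g ^ (k + 1) / (1 / 2)) :=
    Real.log_le_log (by positivity) h
  rw [Real.log_pow, show g ^ (k + 1) / (1 / 2) = 2 * g ^ (k + 1) by ring,
    Real.log_mul (by norm_num) (by positivity), Real.log_pow] at h1
  push_cast at h1
  have h2 := Real.log_two_gt_d9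
  have h3 : (0:ℝ) ≤ k := by positivity
  by_contra hc
  push Not at hc
  have h4 : (2 * (k:ℝ) + 3) * Real.log g - 1 ≤ N - 1 := by linarith
  have h5 : 0 ≤ (k:ℝ) * Real.log g := by positivity
  have h6 : ((2 * (k:ℝ) + 3) * Real.log g - 1) * Real.log 2 ≤ (N - 1) * Real.log 2 := by
    gcongr
  have h7 : ((2 * (k:ℝ) + 3) * Real.log g - 1) * (1 / 2) < ((2 * (k:ℝ) + 3) * Real.log g - 1) * Real.log 2 := by
    apply mul_lt_mul_of_pos_left
    · linarith
    · nlinarith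
  nlinarith

lemma num_x {g C1 : ℝ} (hg : 0 < g) (hL : 1 ≤ Real.log g) (hC1 : 0 < C1) (N : ℕ)
    (h : (N:ℝ) ≤ C1 * Real.log g) :
    Real.exp (-g) ≤ Real.exp (-(1 / C1) * g / Real.log g) ^ N := by
  rw [← Real.exp_nat_mul]
  apply Real.exp_le_exp.mpr
  have hL0 : 0 < Real.log g := by linarith
  have : (N:ℝ) * (-(1 / C1) * g / Real.log g) = -(N / (C1 * Real.log g) * g) := by
    field_simp
  rw [this]
  have h1 : (N:ℝ) / (C1 * Real.log g) ≤ 1 := by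
    rw [div_le_one (by positivity)]; exact h
  nlinarith

lemma num_R {g C1 R : ℝ} (hg : 0 < g) (hL : 1 ≤ Real.log g) (hC1 : 0 < C1) (hR : 1 ≤ R) (N : ℕ)
    (h : (N:ℝ) ≤ C1 * Real.log g) :
    R ^ N ≤ g ^ ⌈C1 * Real.log R⌉₊ := by
  have hR0 : 0 < R := by linarith
  have hlR : 0 ≤ Real.log R := Real.log_nonneg hR
  rw [← Real.exp_log (show 0 < R ^ N by positivity),
    ← Real.exp_log (show 0 < g ^ ⌈C1 * Real.log R⌉₊ by positivity)]
  apply Real.exp_le_exp.mpr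
  rw [Real.log_pow, Real.log_pow]
  calc (N:ℝ) * Real.log R ≤ C1 * Real.log g * Real.log R := by gcongr
    _ = C1 * Real.log R * Real.log g := by ring
    _ ≤ _ := by gcongr; exact Nat.le_ceil _

lemma num_final {g C' x R : ℝ} {N K k k' : ℕ} (hg : 1 ≤ g) (hC' : 0 < C') (hx0 : 0 < x)
    (hR0 : 0 < R)
    (hx : Real.exp (-g) ≤ x ^ N) (hR : R ^ N ≤ g ^ K)
    (hD : 8 * Real.exp 3 * C' * 2 ^ k' * g ^ (k' + K + 2 * k + 2) < Real.exp g) :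
    Real.exp (-3 * (g - 1)) * (C' * (2 * g) ^ k') <
      x ^ N * ((1 / 2) / R ^ N * ((1 / 2) / g ^ (k + 1)) ^ 2) := by
  have hg0 : 0 < g := by linarith
  have h1 : Real.exp (-g) * ((1 / 2) / g ^ K * ((1 / 2) / g ^ (k + 1)) ^ 2) ≤
      x ^ N * ((1 / 2) / R ^ N * ((1 / 2) / g ^ (k + 1)) ^ 2) := by
    gcongr
  refine lt_of_lt_of_le ?_ h1
  have e1 : Real.exp (-g) * ((1 / 2) / g ^ K * ((1 / 2) / g ^ (k + 1)) ^ 2) =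
      Real.exp (-g) / (8 * g ^ (K + 2 * k + 2)) := by
    rw [show K + 2 * k + 2 = K + (k + 1) * 2 by ring, pow_add g K, pow_mul]
    field_simp
    norm_num
  rw [e1, lt_div_iff₀ (by positivity)]
  have e2 : Real.exp (-3 * (g - 1)) * (C' * (2 * g) ^ k') * (8 * g ^ (K + 2 * k + 2)) =
      Real.exp (-3 * g) * (8 * Real.exp 3 * C' * 2 ^ k' * g ^ (k' + K + 2 * k + 2)) := by
    rw [show -3 * (g - 1) = -3 * g + 3 by ring, Real.exp_add, mul_pow,
      show k' + K + 2 * k + 2 = k' + (K + 2 * k + 2) by ring, pow_add g k']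
    ring
  rw [e2]
  calc _ < Real.exp (-3 * g) * Real.exp g := by gcongr
    _ = Real.exp (-2 * g) := by rw [← Real.exp_add]; congr 1; ring
    _ ≤ _ := Real.exp_le_exp.mpr (by linarith)

lemma num_r {g A : ℝ} (hg : 0 < g) (hA : 0 < A) (hL : 1 ≤ Real.log g)
    (h : Real.log g ^ 3 ≤ A * g) :
    Real.exp (-A * g / Real.log g) * Real.log g ^ 2 ≤ 1 := by
  have hL0 : 0 < Real.log g := by linarith
  have hy : Real.log g ^ 2 ≤ A * g / Real.log g := by
    rw [le_div_iff₀ hL0]; nlinarith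
  have h1 := Real.add_one_le_exp (A * g / Real.log g)
  have h2 : Real.exp (-A * g / Real.log g) * Real.exp (A * g / Real.log g) = 1 := by
    rw [← Real.exp_add, show -A * g / Real.log g + A * g / Real.log g = 0 by ring, Real.exp_zero]
  rw [← h2]
  gcongr
  linarith

lemma num_pi {g y : ℝ} (hg : 1 ≤ g) (h : g - 1 ≤ y) : -Real.pi * y ≤ -3 * (g - 1) := by
  have := Real.pi_gt_three
  nlinarith

set_option maxHeartbeats 1000000 in
lemma case_lt {l : ℝ} (hl0 : 0 < l) (hl1 : l < 1) {F : ℂ → ℂ} (hF : IsLerch l l F) :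
    ∃ A : ℝ, 0 < A ∧ ∃ gamma0 : ℝ, 0 < gamma0 ∧
      ∀ ρ : ℂ, F ρ = 0 → -1 ≤ ρ.re → ρ.re < 1 + l → gamma0 ≤ ρ.im →
        ∃ r : ℝ,
          Real.exp (-A * ρ.im / Real.log ρ.im) ≤ r ∧
          r ≤ Real.exp (-A * ρ.im / Real.log ρ.im) * (Real.log ρ.im) ^ 2 ∧
          ∑ᶠ z ∈ {z : ℂ | F z = 0 ∧ dist z ρ < r}, zeroOrder F z =
            ∑ᶠ z ∈ {z : ℂ | F z = 0 ∧ dist z (1 - (starRingEnd ℂ) ρ) < r}, zeroOrder F z := by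
  obtain ⟨n, hn⟩ := lower_bound hl0 hl1 hF
  set σ : ℝ := ((n + 2 : ℕ) : ℝ) with hσ
  have hσ2 : 2 ≤ σ := by rw [hσ]; push_cast; have : (0:ℝ) ≤ n := by positivity
                         linarith
  set R : ℝ := 2 * (σ + 2) with hR
  have hR0 : 0 < R := by linarith
  obtain ⟨C, k, hC, hFb⟩ := F_bound hl0 hl1 hF (σ + 3 * R)
  obtain ⟨M, E, C', k', hM, hM0, hE, hFM, hC', hEb⟩ := lerch_package hl0 hl1 hF (σ + 3 * R)
  have hFd := lerch_diffOn hF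
  set C1 : ℝ := 2 * k + 3 with hC1
  have hC10 : 0 < C1 := by positivity
  set K := ⌈C1 * Real.log R⌉₊ with hK
  obtain ⟨g0, hg0, hev⟩ := eventual (3 * R + 1) (C * 2 ^ k) (8 * Real.exp 3 * C' * 2 ^ k') (1 / C1) (2 * C1)
    (by positivity) (k' + K + 2 * k + 2)
  refine ⟨1 / C1, by positivity, g0, hg0, fun ρ _ hre1 hre2 him => ?_⟩
  obtain ⟨hgR, hgC, hL, hL2, hL3, hD⟩ := hev ρ.im him
  set g := ρ.im with hg
  have hg1 : 1 ≤ g := by linarith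
  have hgpos : 0 < g := by linarith
  have hrho : (1 - conj ρ).re = 1 - ρ.re := by simp
  have hrhoi : (1 - conj ρ).im = ρ.im := by simp
  set c : ℂ := ⟨σ, g⟩ with hc
  have hcre : c.re = σ := rfl
  have hcim : c.im = g := rfl
  have hre_ball : ∀ z ∈ closedBall c (3 * R), |z.re - σ| ≤ 3 * R := fun z hz => by
    have := (abs_re_le_norm (z - c)).trans (mem_closedBall_iff_norm.mp hz)
    simpa [hcre] using this
  have him_ball : ∀ z ∈ closedBall c (3 * R), |z.im - g| ≤ 3 * R := fun z hz => by
    have := (abs_im_le_norm (z - c)).trans (mem_closedBall_iff_norm.mp hz)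
    simpa [hcim] using this
  have hKU : closedBall c (3 * R) ⊆ UH := fun z hz => by
    have := (abs_le.mp (him_ball z hz)).1
    show 0 < z.im
    linarith
  have hMb : ∀ z ∈ closedBall c (3 * R), ‖F z‖ ≤ g ^ (k + 1) := fun z hz => by
    have h1 := abs_le.mp (him_ball z hz)
    have h2 := abs_le.mp (hre_ball z hz)
    have h3 : |z.re| ≤ σ + 3 * R := abs_le.mpr ⟨by linarith, by linarith⟩
    calc ‖F z‖ ≤ C * z.im ^ k := hFb z h3 (by linarith)
      _ ≤ C * (2 * g) ^ k := by
        gcongr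
        · linarith
        · linarith
      _ = C * 2 ^ k * g ^ k := by rw [mul_pow]; ring
      _ ≤ g * g ^ k := by gcongr
      _ = _ := by ring
  have hFc : 1 / 2 ≤ ‖F c‖ := hn c hcre
  have hcU : c ∈ UH := hgpos
  have hFc0 : F c ≠ 0 := by
    intro h; rw [h, norm_zero] at hFc; norm_num at hFc
  have hord := UH_order hFd hcU hFc0
  have hbM : (1:ℝ) / 2 < g ^ (k + 1) := lt_of_lt_of_le (by norm_num) (one_le_pow₀ hg1)
  obtain ⟨S, m, hS1, hS2, hS3⟩ := min_modulus hR0 UH_open hFd hKU hMb (by norm_num) hFc hbM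
    (fun z hz => hord z (hKU (closedBall_subset_closedBall (by linarith) hz)))
  set N := ∑ w ∈ S, m w with hN
  have hNb : (N:ℝ) ≤ C1 * Real.log g := num_count hgpos hL k N hS1
  set x := Real.exp (-(1 / C1) * g / Real.log g) with hx
  have hx0 : 0 < x := Real.exp_pos _
  obtain ⟨j, hj, hjS⟩ := choose_radius S (fun w => ‖w - (1 - conj ρ)‖) hx0
  set r := x * (1 + 2 * (j:ℝ)) with hr
  have hjN : (j:ℝ) ≤ N := by exact_mod_cast hj.trans hS2
  have hj0 : (0:ℝ) ≤ j := by positivity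
  have hxr : x ≤ r := by nlinarith
  have hrx : r ≤ x * Real.log g ^ 2 := by
    rw [hr]; gcongr; linarith
  have hr1 : r ≤ 1 := hrx.trans (num_r hgpos (by positivity) hL hL3)
  have hr0 : 0 < r := by linarith
  have hrg : r ≤ ρ.im := by linarith
  refine ⟨r, hxr, hrx, ?_⟩
  have hRd : DifferentiableOn ℂ (refl F) UH := fun z hz => by
    apply DifferentiableAt.differentiableWithinAt
    apply refl_diff
    apply hFd.differentiableAt
    apply UH_open.mem_nhds
    show 0 < (1 - conj z).im
    simpa using (show 0 < z.im from hz)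
  have hfd : DifferentiableOn ℂ (fun z => refl F z + E z) UH := hRd.add hE
  rw [transfer_sum hM hfd hM0 hFM hrg, ← reflect_sum hFd hrg]
  have hballU : closedBall ρ r ⊆ UH := fun z hz => by
    have h1 := (abs_im_le_norm (z - ρ)).trans (mem_closedBall_iff_norm.mp hz)
    rw [sub_im] at h1
    have := (abs_le.mp h1).1
    show 0 < z.im
    linarith
  refine rouche hr0 UH_open hfd hRd hballU ?_ ?_ ?_
  · intro z hz htop
    have hzU := hballU hz
    apply hord z hzU
    rw [analyticOrderAt_eq_top] at htop ⊢
    filter_upwards [htop, UH_open.mem_nhds hzU] with w hw hwU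
    rw [hFM w hwU, hw, mul_zero]
  · intro z hz
    have hz' : 0 < (1 - conj z).im := by simpa using (show 0 < z.im from hballU hz)
    rw [refl_order (UH_an hFd hz')]
    exact hord _ hz'
  · intro z hz
    rw [add_sub_cancel_left]
    have hzd : dist z ρ = r := hz
    have hzn : ‖z - ρ‖ = r := by rw [← dist_eq_norm]; exact hzd
    have hzre : |z.re - ρ.re| ≤ r := by
      have := abs_re_le_norm (z - ρ); rw [hzn] at this; simpa using this
    have hzim : |z.im - ρ.im| ≤ r := by
      have := abs_im_le_norm (z - ρ); rw [hzn] at this; simpa using this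
    have a1 := abs_le.mp hzre
    have a2 := abs_le.mp hzim
    set w := 1 - conj z with hw
    have hwr : ‖w - (1 - conj ρ)‖ = r := by rw [← dist_eq_norm, hw, dist_refl]; exact hzd
    have hcr : ‖(1 - conj ρ) - c‖ ≤ σ + 1 := by
      have : (1 - conj ρ) - c = ((1 - ρ.re - σ : ℝ) : ℂ) := by
        apply Complex.ext
        · simp [hcre]
        · simp [hcim, hg]
      rw [this, Complex.norm_real, Real.norm_eq_abs, abs_le]
      constructor <;> linarith
    have hwc : w ∈ closedBall c (R / 2) := by
      rw [mem_closedBall_iff_norm]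
      have := norm_sub_le_norm_sub_add_norm_sub w (1 - conj ρ) c
      rw [hR]; linarith
    have hlow := hS3 w hwc
    have hprod : x ^ N ≤ ∏ p ∈ S, ‖w - p‖ ^ m p := by
      rw [hN, ← Finset.prod_pow_eq_pow_sum]
      apply Finset.prod_le_prod
      · intro i _; positivity
      · intro p hp
        apply pow_le_pow_left₀ hx0.le
        refine (hjS p hp).trans ?_
        have h1 := abs_norm_sub_norm_le (w - (1 - conj ρ)) (p - (1 - conj ρ))
        rw [hwr] at h1
        simpa using h1
    have hrefl : ‖refl F z‖ = ‖F w‖ := by simp [refl, hw]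
    rw [hrefl]
    have hEz : ‖E z‖ ≤ Real.exp (-3 * (g - 1)) * (C' * (2 * g) ^ k') := by
      have hzp : 1 ≤ z.im := by linarith
      have hzb : |z.re| ≤ σ + 3 * R := abs_le.mpr ⟨by linarith, by linarith⟩
      refine (hEb z hzb hzp).trans ?_
      have h3 : -Real.pi * z.im ≤ -3 * (g - 1) := by
        exact num_pi hg1 (by linarith)
      gcongr
      linarith
    have hfin := num_final (x := x) (R := R) (N := N) (K := K) (k := k) hg1 hC' hx0 hR0
      (num_x hgpos hL hC10 N hNb) (num_R hgpos hL hC10 (by linarith) N hNb) hD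
    refine lt_of_le_of_lt hEz (lt_of_lt_of_le hfin (le_trans ?_ hlow))
    gcongr

lemma case_one {F : ℂ → ℂ} (hF : IsLerch 1 1 F) :
    ∃ A : ℝ, 0 < A ∧ ∃ gamma0 : ℝ, 0 < gamma0 ∧
      ∀ ρ : ℂ, F ρ = 0 → -1 ≤ ρ.re → ρ.re < 1 + (1:ℝ) → gamma0 ≤ ρ.im →
        ∃ r : ℝ,
          Real.exp (-A * ρ.im / Real.log ρ.im) ≤ r ∧
          r ≤ Real.exp (-A * ρ.im / Real.log ρ.im) * (Real.log ρ.im) ^ 2 ∧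
          ∑ᶠ z ∈ {z : ℂ | F z = 0 ∧ dist z ρ < r}, zeroOrder F z =
            ∑ᶠ z ∈ {z : ℂ | F z = 0 ∧ dist z (1 - (starRingEnd ℂ) ρ) < r}, zeroOrder F z := by
  obtain ⟨M, hM, hM0, hFM⟩ := zeta_case hF
  have hFd := lerch_diffOn hF
  refine ⟨1, one_pos, Real.exp 1, Real.exp_pos 1, fun ρ _ _ _ him => ⟨_, le_refl _, ?_, ?_⟩⟩
  · have h1 : 1 ≤ Real.log ρ.im := by
      rw [Real.le_log_iff_exp_le (lt_of_lt_of_le (Real.exp_pos 1) him)]; exact him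
    exact le_mul_of_one_le_right (Real.exp_pos _).le (one_le_pow₀ h1)
  · have h1 : 1 ≤ Real.log ρ.im := by
      rw [Real.le_log_iff_exp_le (lt_of_lt_of_le (Real.exp_pos 1) him)]; exact him
    have h2 : 1 ≤ ρ.im := by
      have := Real.add_one_le_exp (1:ℝ)
      linarith
    have hrg : Real.exp (-1 * ρ.im / Real.log ρ.im) ≤ ρ.im := by
      refine le_trans (Real.exp_le_one_iff.mpr ?_) h2
      apply div_nonpos_of_nonpos_of_nonneg <;> linarith
    have hRd : DifferentiableOn ℂ (refl F) UH := fun z hz => by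
      apply DifferentiableAt.differentiableWithinAt
      apply refl_diff
      apply hFd.differentiableAt
      apply UH_open.mem_nhds
      show 0 < (1 - conj z).im
      simpa using (show 0 < z.im from hz)
    rw [transfer_sum hM hRd hM0 hFM hrg, ← reflect_sum hFd hrg]
end LerchAux

/-- almost symmetric local distribution of the nontrivial zeros of
`L(lam, lam, ·)` with respect to the critical line. -/
theorem lerch_local_almost_symmetry (lam : ℝ) (hlam0 : 0 < lam) (hlam1 : lam ≤ 1)
    (F : ℂ → ℂ) (hF : IsLerch lam lam F) :
    ∃ A : ℝ, 0 < A ∧ ∃ gamma0 : ℝ, 0 < gamma0 ∧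
      ∀ ρ : ℂ, F ρ = 0 → -1 ≤ ρ.re → ρ.re < 1 + lam → gamma0 ≤ ρ.im →
        ∃ r : ℝ,
          Real.exp (-A * ρ.im / Real.log ρ.im) ≤ r ∧
          r ≤ Real.exp (-A * ρ.im / Real.log ρ.im) * (Real.log ρ.im) ^ 2 ∧
          ∑ᶠ z ∈ {z : ℂ | F z = 0 ∧ dist z ρ < r}, zeroOrder F z =
            ∑ᶠ z ∈ {z : ℂ | F z = 0 ∧ dist z (1 - (starRingEnd ℂ) ρ) < r}, zeroOrder F z := by
  rcases lt_or_eq_of_le hlam1 with h | h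
  · exact LerchAux.case_lt hlam0 h hF
  · subst h
    exact LerchAux.case_one hF
end

section
/- There exists an absolute constant C > 0 with the following property. Let s₀ ∈ ℂ, r > 0, M > 1, and let f be a function analytic on the closed disc {s : |s − s₀| ≤ r} with f(s₀) ≠ 0 and |f(s)/f(s₀)| < e^M for all s in this disc. Then for every s with |s − s₀| ≤ (3/8)r at which f(s) ≠ 0, one has |(f(s₀)/f(s)) · ∏_ρ (s − ρ)/(s₀ − ρ)| < e^{CM}, where the product runs over the zeros ρ of f with |ρ − s₀| ≤ r/2, counted with multiplicity. -/
open scoped Classical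

open Complex Metric Topology in
/-- Holomorphic logarithm on a disc about the origin. -/
lemma exists_log_ball {R : ℝ} (hR : 0 < R) {F : ℂ → ℂ}
    (hF : DifferentiableOn ℂ F (ball 0 R)) (hne : ∀ z ∈ ball (0 : ℂ) R, F z ≠ 0) (h0 : F 0 = 1) :
    ∃ h : ℂ → ℂ, DifferentiableOn ℂ h (ball 0 R) ∧ h 0 = 0 ∧
      ∀ z ∈ ball (0 : ℂ) R, F z = exp (h z) := by
  have hd : DifferentiableOn ℂ (fun z => deriv F z / F z) (ball 0 R) :=
    (hF.deriv isOpen_ball).div hF hne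
  obtain ⟨k, hk⟩ := hd.isExactOn_ball
  have h0m : (0 : ℂ) ∈ ball (0 : ℂ) R := mem_ball_self hR
  have hder : ∀ z ∈ ball (0 : ℂ) R,
      HasDerivAt (fun z => F z * exp (-(k z - k 0))) 0 z := by
    intro z hz
    have h1 : HasDerivAt F (deriv F z) z :=
      (hF.differentiableAt (isOpen_ball.mem_nhds hz)).hasDerivAt
    have h2 := h1.mul ((((hk z hz).sub_const (k 0)).neg).cexp)
    have hz0 := hne z hz
    have h3 : deriv F z * exp (-(k z - k 0)) +
        F z * (exp (-(k z - k 0)) * -(deriv F z / F z)) = 0 := by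
      field_simp
      ring
    exact HasDerivAt.congr_deriv h2 h3
  refine ⟨fun z => k z - k 0, fun z hz =>
    ((hk z hz).sub_const (k 0)).differentiableAt.differentiableWithinAt, by simp, ?_⟩
  intro z hz
  have hc := isOpen_ball.is_const_of_fderiv_eq_zero (𝕜 := ℂ) (convex_ball (0 : ℂ) R).isPreconnected
    (f := fun z => F z * exp (-(k z - k 0)))
    (fun z hz => (hder z hz).differentiableAt.differentiableWithinAt)
    (fun z hz => by
      have := (hder z hz).hasFDerivAt.fderiv
      rw [this]; ext; simp) hz h0m
  simp only [sub_self, neg_zero, exp_zero, h0, mul_one, exp_neg] at hc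
  have := exp_ne_zero (k z - k 0)
  field_simp at hc
  exact hc

open Topology in
/-- Pull out one zero. -/
lemma peel_zero {U : Set ℂ} {f : ℂ → ℂ} (hf : AnalyticOnNhd ℂ f U) {ρ : ℂ} (hρ : ρ ∈ U)
    (ht : analyticOrderAt f ρ ≠ ⊤) :
    ∃ g : ℂ → ℂ, AnalyticOnNhd ℂ g U ∧ g ρ ≠ 0 ∧
      (∀ z, f z = (z - ρ) ^ analyticOrderNatAt f ρ * g z) := by
  obtain ⟨g, hg, hg0, hfg⟩ := (hf ρ hρ).analyticOrderAt_ne_top.1 ht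
  set n := analyticOrderNatAt f ρ
  let G : ℂ → ℂ := fun z => if z = ρ then g ρ else f z / (z - ρ) ^ n
  have hGg : G =ᶠ[𝓝 ρ] g := by
    filter_upwards [hfg] with z hz
    by_cases h : z = ρ
    · simp [G, h]
    · have : z - ρ ≠ 0 := sub_ne_zero.2 h
      simp only [G, h, if_false, hz, smul_eq_mul]
      field_simp
  refine ⟨G, ?_, by simpa [G] using hg0, ?_⟩
  · intro z hz
    by_cases h : z = ρ
    · subst h; exact hg.congr hGg.symm
    · have h1 : AnalyticAt ℂ (fun z => f z / (z - ρ) ^ n) z :=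
        (hf z hz).div (by fun_prop) (pow_ne_zero _ (sub_ne_zero.2 h))
      refine h1.congr ?_
      filter_upwards [isOpen_ne.mem_nhds h] with w hw
      have hw' : w ≠ ρ := hw
      simp [G, hw']
  · intro z
    by_cases h : z = ρ
    · subst h
      have := hfg.self_of_nhds
      simpa [G] using this
    · have : z - ρ ≠ 0 := sub_ne_zero.2 h
      simp only [G, h, if_false]
      field_simp

lemma peel_zeros {U : Set ℂ} {f : ℂ → ℂ} (hf : AnalyticOnNhd ℂ f U) (T : Finset ℂ)
    (hT : ∀ ρ ∈ T, ρ ∈ U ∧ analyticOrderAt f ρ ≠ ⊤) :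
    ∃ g : ℂ → ℂ, AnalyticOnNhd ℂ g U ∧ (∀ ρ ∈ T, g ρ ≠ 0) ∧
      (∀ z, f z = (∏ ρ ∈ T, (z - ρ) ^ analyticOrderNatAt f ρ) * g z) := by
  induction T using Finset.induction_on with
  | empty => exact ⟨f, hf, by simp, by simp⟩
  | insert a T ha ih =>
    obtain ⟨g, hg, hgT, hfg⟩ := ih fun ρ h => hT ρ (Finset.mem_insert_of_mem h)
    obtain ⟨haU, hat⟩ := hT a (Finset.mem_insert_self _ _)
    have hP : AnalyticAt ℂ (fun z => ∏ ρ ∈ T, (z - ρ) ^ analyticOrderNatAt f ρ) a := by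
      fun_prop
    have hP0 : (∏ ρ ∈ T, (a - ρ) ^ analyticOrderNatAt f ρ) ≠ 0 :=
      Finset.prod_ne_zero_iff.2 fun ρ h => pow_ne_zero _ (sub_ne_zero.2 (by rintro rfl; exact ha h))
    have hord : analyticOrderAt f a = analyticOrderAt g a := by
      have h1 : f = (fun z => ∏ ρ ∈ T, (z - ρ) ^ analyticOrderNatAt f ρ) * g := funext hfg
      have h2 := analyticOrderAt_mul hP (hg a haU)
      rw [← h1, hP.analyticOrderAt_eq_zero.2 hP0, zero_add] at h2
      exact h2
    obtain ⟨G, hG, hGa, hgG⟩ := peel_zero hg haU (hord ▸ hat)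
    refine ⟨G, hG, ?_, ?_⟩
    · intro ρ hρ
      rcases Finset.mem_insert.1 hρ with rfl | h
      · exact hGa
      · intro h0
        exact hgT ρ h (by rw [hgG, h0, mul_zero])
    · intro z
      rw [Finset.prod_insert ha, hfg z, hgG z]
      simp only [analyticOrderNatAt, hord]
      ring

/-- Titchmarsh's Lemma α, bounding `f s₀ / f s` times the Blaschke-type
product over the zeros of `f` near `s₀`. -/
theorem titchmarsh_lemma_alpha :
    ∃ C : ℝ, 0 < C ∧ ∀ (s₀ : ℂ) (r M : ℝ) (f : ℂ → ℂ), 0 < r → 1 < M →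
      AnalyticOnNhd ℂ f (Metric.closedBall s₀ r) → f s₀ ≠ 0 →
      (∀ s ∈ Metric.closedBall s₀ r, norm (f s / f s₀) < Real.exp M) →
      ∀ s : ℂ, dist s s₀ ≤ 3 / 8 * r → f s ≠ 0 →
        norm (f s₀ / f s *
            ∏ᶠ ρ ∈ {ρ : ℂ | f ρ = 0 ∧ dist ρ s₀ ≤ r / 2}, ((s - ρ) / (s₀ - ρ)) ^ zeroOrder f ρ)
          < Real.exp (C * M) := by
  refine ⟨7, by norm_num, ?_⟩
  intro s₀ r M f hr hM hf hf0 hbd s hs hfs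
  have hpre : IsPreconnected (Metric.closedBall s₀ r) := (convex_closedBall s₀ r).isPreconnected
  have hs0 : s₀ ∈ Metric.closedBall s₀ r := Metric.mem_closedBall_self hr.le
  have hnt : ∀ ρ ∈ Metric.closedBall s₀ r, analyticOrderAt f ρ ≠ ⊤ := by
    intro ρ hρ h
    exact hf0 (hf.eqOn_zero_of_preconnected_of_eventuallyEq_zero hpre hρ
      (analyticOrderAt_eq_top.1 h) hs0)
  have hfin : {ρ : ℂ | f ρ = 0 ∧ dist ρ s₀ ≤ r / 2}.Finite := by
    by_contra hinf
    obtain ⟨x, hx, hacc⟩ := Set.Infinite.exists_accPt_of_subset_isCompact hinf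
      (isCompact_closedBall s₀ r) (fun ρ h => by
        simp only [Metric.mem_closedBall]; linarith [h.2])
    refine hf0 (hf.eqOn_zero_of_preconnected_of_frequently_eq_zero hpre hx ?_ hs0)
    exact (accPt_iff_frequently_nhdsNE.1 hacc).mono fun z hz => hz.1
  set T := hfin.toFinset with hTdef
  have hTm : ∀ ρ, ρ ∈ T ↔ f ρ = 0 ∧ dist ρ s₀ ≤ r / 2 := by intro ρ; simp [hTdef]
  have hTU : ∀ ρ ∈ T, ρ ∈ Metric.closedBall s₀ r := fun ρ h => by
    simp only [Metric.mem_closedBall]; linarith [((hTm ρ).1 h).2]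
  obtain ⟨g, hg, hgT, hfg⟩ := peel_zeros hf T fun ρ h => ⟨hTU ρ h, hnt ρ (hTU ρ h)⟩
  have hprod : ∏ᶠ ρ ∈ {ρ : ℂ | f ρ = 0 ∧ dist ρ s₀ ≤ r / 2}, ((s - ρ) / (s₀ - ρ)) ^ zeroOrder f ρ
      = (∏ ρ ∈ T, (s - ρ) ^ analyticOrderNatAt f ρ) /
        ∏ ρ ∈ T, (s₀ - ρ) ^ analyticOrderNatAt f ρ := by
    rw [finprod_mem_eq_finite_toFinset_prod _ hfin, ← Finset.prod_div_distrib]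
    refine Finset.prod_congr rfl fun ρ h => ?_
    rw [div_pow]
    simp [zeroOrder, analyticOrderNatAt, hf ρ (hTU ρ h)]
  rw [hprod]
  set P : ℂ → ℂ := fun z => ∏ ρ ∈ T, (z - ρ) ^ analyticOrderNatAt f ρ with hP
  have hfg' : ∀ z, f z = P z * g z := hfg
  change ‖f s₀ / f s * (P s / P s₀)‖ < _
  have hPs : P s ≠ 0 := fun h => hfs (by rw [hfg', h, zero_mul])
  have hP0 : P s₀ ≠ 0 := fun h => hf0 (by rw [hfg', h, zero_mul])
  have hgs : g s ≠ 0 := fun h => hfs (by rw [hfg', h, mul_zero])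
  have hg0 : g s₀ ≠ 0 := fun h => hf0 (by rw [hfg', h, mul_zero])
  have hgoal : f s₀ / f s * (P s / P s₀) = (g s / g s₀)⁻¹ := by
    rw [hfg' s₀, hfg' s]; field_simp
  rw [hgoal]
  -- the bound for `g` from the maximum principle
  have hmax : ∀ z ∈ Metric.closedBall s₀ r, ‖g z / g s₀‖ ≤ Real.exp M := by
    intro z hz
    have hdc : DiffContOnCl ℂ (fun z => g z / g s₀) (Metric.ball s₀ r) := by
      refine DifferentiableOn.diffContOnCl ?_
      rw [closure_ball _ hr.ne']
      exact hg.differentiableOn.div_const _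
    refine Complex.norm_le_of_forall_mem_frontier_norm_le Metric.isBounded_ball hdc ?_
      (by rwa [closure_ball _ hr.ne'])
    intro w hw
    rw [frontier_ball _ hr.ne', mem_sphere_iff_norm] at hw
    have hle : ‖P s₀‖ ≤ ‖P w‖ := by
      simp only [hP, norm_prod, norm_pow]
      refine Finset.prod_le_prod (fun _ _ => by positivity) fun ρ h => ?_
      gcongr
      have h1 := ((hTm ρ).1 h).2
      rw [dist_eq_norm] at h1
      have h2 : ‖w - s₀‖ ≤ ‖w - ρ‖ + ‖ρ - s₀‖ := norm_sub_le_norm_sub_add_norm_sub _ _ _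
      rw [norm_sub_rev s₀ ρ]
      linarith
    have hb := (hbd w (by rw [mem_closedBall_iff_norm, hw])).le
    have hPw : 0 < ‖P w‖ := lt_of_lt_of_le (norm_pos_iff.2 hP0) hle
    have heq : g w / g s₀ = f w / f s₀ * (P s₀ / P w) := by
      have : P w ≠ 0 := norm_pos_iff.1 hPw
      rw [hfg' s₀, hfg' w]; field_simp
    rw [heq, norm_mul, norm_div (P s₀)]
    calc _ ≤ ‖f w / f s₀‖ * 1 := by
          gcongr; exact (div_le_one hPw).2 hle
      _ ≤ _ := by rw [mul_one]; exact hb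
  -- logarithm
  have hsub : ∀ w ∈ Metric.ball (0 : ℂ) (r / 2), s₀ + w ∈ Metric.closedBall s₀ r := by
    intro w hw
    rw [mem_ball_zero_iff] at hw
    rw [mem_closedBall_iff_norm, add_sub_cancel_left]; linarith
  obtain ⟨h, hhd, hh0, hhe⟩ := exists_log_ball (R := r / 2) (by positivity)
    (F := fun w => g (s₀ + w) / g s₀)
    (by
      refine DifferentiableOn.div_const ?_ _
      exact hg.differentiableOn.comp (by fun_prop) hsub)
    (by
      intro w hw
      refine div_ne_zero ?_ hg0
      by_cases hz : f (s₀ + w) = 0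
      · refine hgT _ ((hTm _).2 ⟨hz, ?_⟩)
        rw [mem_ball_zero_iff] at hw
        rw [dist_eq_norm, add_sub_cancel_left]; exact hw.le
      · intro h; exact hz (by rw [hfg', h, mul_zero]))
    (by simp [hg0])
  have hsn : ‖s - s₀‖ ≤ 3 / 8 * r := by rwa [← dist_eq_norm]
  have hsm : s - s₀ ∈ Metric.ball (0 : ℂ) (r / 2) := by
    rw [mem_ball_zero_iff]; linarith
  have hBC := Complex.borelCaratheodory_zero (M := M) (by linarith) hhd
    (by
      intro w hw
      have h1 := hmax _ (hsub w hw)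
      have h2 := hhe w hw
      rw [h2, Complex.norm_exp, Real.exp_le_exp] at h1
      exact h1) (by positivity) hsm hh0
  have hle6 : ‖h (s - s₀)‖ ≤ 6 * M := by
    refine hBC.trans ?_
    rw [div_le_iff₀ (by linarith)]
    nlinarith [norm_nonneg (s - s₀)]
  have h2 := hhe _ hsm
  simp only [add_sub_cancel] at h2
  rw [h2, ← Complex.exp_neg, Complex.norm_exp, Real.exp_lt_exp]
  have h3 := Complex.abs_re_le_norm (h (s - s₀))
  have h4 := neg_abs_le (h (s - s₀)).re
  rw [Complex.neg_re]
  linarith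
end
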